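/- Let 0 ≤ l < d ≤ n be integers. There is a constant τ_0(n) > 0 such that the following holds for every 0 < τ_l ≤ τ_0(n). Let T be a finite set of l-dimensional irreducible varieties in ℂ^n and let V ⊆ ℂ^n be a d-dimensional irreducible variety. Let 0 ≤ s ≤ n−d be an integer admissible with respect to V such that deg(T) ∈ ℛ^l_{s,τ_l}(V). Then there exists a polynomial P ∈ ℂ[x_1,…,x_n] of degree at most C(n,τ_l)·(deg(T)/Δ_s(V))^{1/(n−(s+l))}, for a constant C(n,τ_l) depending only on n and τ_l, vanishing at every point of every element of T but not vanishing identically on V. -/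

import Mathlib

open MvPolynomial Set

noncomputable section

namespace Paper

variable (n : ℕ)

/-- The zero locus in `ℂⁿ` of a set of polynomials. -/
def zeroLocus (I : Set (MvPolynomial (Fin n) ℂ)) : Set (Fin n → ℂ) :=
  {x | ∀ f ∈ I, eval x f = 0}

/-- A subset of `ℂⁿ` is algebraic if it is the zero locus of a set of polynomials. -/
def IsAlgebraicSet (V : Set (Fin n → ℂ)) : Prop :=
  ∃ I : Set (MvPolynomial (Fin n) ℂ), V = zeroLocus n I

/-- An irreducible (affine) variety in `ℂⁿ`: a nonempty algebraic set that is not covered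
by two algebraic sets unless it is contained in one of them. -/
def IsIrredVariety (V : Set (Fin n → ℂ)) : Prop :=
  IsAlgebraicSet n V ∧ V.Nonempty ∧
    ∀ V₁ V₂ : Set (Fin n → ℂ), IsAlgebraicSet n V₁ → IsAlgebraicSet n V₂ →
      V ⊆ V₁ ∪ V₂ → V ⊆ V₁ ∨ V ⊆ V₂

/-- There is a strictly increasing chain of `d + 1` irreducible varieties inside `V`. -/
def HasChain (V : Set (Fin n → ℂ)) (d : ℕ) : Prop :=
  ∃ W : Fin (d + 1) → Set (Fin n → ℂ),
    (∀ i, IsIrredVariety n (W i)) ∧ (∀ i j : Fin (d + 1), i < j → W i ⊂ W j) ∧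
      W (Fin.last d) ⊆ V

/-- The (Krull) dimension of a subset of `ℂⁿ`, as the length of the longest chain of
irreducible subvarieties. -/
def dim (V : Set (Fin n → ℂ)) : ℕ := sSup {d | HasChain n V d}

/-- `W` is an irreducible component of `X`: an irreducible subvariety that is maximal among
irreducible subvarieties of `X`. -/
def IsIrredComponent (W X : Set (Fin n → ℂ)) : Prop :=
  IsIrredVariety n W ∧ W ⊆ X ∧
    ∀ W', IsIrredVariety n W' → W ⊆ W' → W' ⊆ X → W' = W

/-- The degree of an irreducible variety `V ⊆ ℂⁿ` of dimension `d` (i.e. the degree of its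
projective closure): the largest finite number of points in which an affine-linear subspace of
dimension `n - d` meets `V`. -/
def degree (V : Set (Fin n → ℂ)) : ℕ :=
  sSup { m | ∃ L : AffineSubspace ℂ (Fin n → ℂ),
    Module.finrank ℂ L.direction = n - dim n V ∧ (V ∩ ↑L).Finite ∧ (V ∩ ↑L).ncard = m }

/-- The degree of an algebraic set: the sum of the degrees of its irreducible components. -/
def degreeSum (X : Set (Fin n → ℂ)) : ℕ :=
  ∑ᶠ W ∈ {W | IsIrredComponent n W X}, degree n W

/-- The maximal dimension of an irreducible component of `X` containing `V` equals `e`. -/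
def MaxCompDimEq (X V : Set (Fin n → ℂ)) (e : ℕ) : Prop :=
  (∃ W, IsIrredComponent n W X ∧ V ⊆ W ∧ dim n W = e) ∧
    ∀ W, IsIrredComponent n W X → V ⊆ W → dim n W ≤ e

/-- The partial degrees `δ_i(V)` of an irreducible variety `V`:  the minimal `δ` such that there
are polynomials of degree at most `δ` cutting out an algebraic set containing `V` whose
irreducible components containing `V` have maximal dimension `n - i`.  By convention
`δ_0(V) = 0`. -/
def partialDeg (V : Set (Fin n → ℂ)) (i : ℕ) : ℕ :=
  if i = 0 then 0
  else sInf { δ | ∃ I : Finset (MvPolynomial (Fin n) ℂ),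
    (∀ f ∈ I, f.totalDegree ≤ δ) ∧ V ⊆ zeroLocus n ↑I ∧
      MaxCompDimEq n (zeroLocus n ↑I) V (n - i) }

/-- The partial degrees as extended naturals, with the convention `δ_i(V) = ∞` for
`i > n - dim V`. -/
def partialDegE (V : Set (Fin n → ℂ)) (i : ℕ) : ℕ∞ :=
  if i ≤ n - dim n V then (partialDeg n V i : ℕ∞) else ⊤

/-- `δ(V)` for an irreducible variety `V`: the minimal `δ` such that `V` is an irreducible
component of the zero set of a finite family of polynomials of degree at most `δ`. -/
def deltaIrr (V : Set (Fin n → ℂ)) : ℕ :=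
  sInf { δ | ∃ I : Finset (MvPolynomial (Fin n) ℂ),
    (∀ f ∈ I, f.totalDegree ≤ δ) ∧ IsIrredComponent n V (zeroLocus n ↑I) }

/-- `δ(V)` for a general algebraic set `V`: the minimal `δ` such that every irreducible
component of `V` is an irreducible component of the zero set of a finite family of polynomials
of degree at most `δ`. -/
def deltaSet (V : Set (Fin n → ℂ)) : ℕ :=
  sInf { δ | ∃ I : Finset (MvPolynomial (Fin n) ℂ),
    (∀ f ∈ I, f.totalDegree ≤ δ) ∧
      ∀ W, IsIrredComponent n W V → IsIrredComponent n W (zeroLocus n ↑I) }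

/-- An algebraic set all of whose irreducible components have dimension `d`. -/
def IsAlgSetOfDim (V : Set (Fin n → ℂ)) (d : ℕ) : Prop :=
  IsAlgebraicSet n V ∧ V.Nonempty ∧ ∀ W, IsIrredComponent n W V → dim n W = d

/-- `Δ_i(V) = max (deg V / (δ_{i+1}(V) ⋯ δ_{n-d}(V))) 1`. -/
def Delta (V : Set (Fin n → ℂ)) (i : ℕ) : ℝ :=
  max ((degree n V : ℝ) / ∏ j ∈ Finset.Icc (i + 1) (n - dim n V), (partialDeg n V j : ℝ)) 1

/-- `i` is admissible with respect to `V` if `δ_{i+1}(V) > 2 i δ_i(V)` (with the convention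
`δ_i(V) = ∞` for `i > n - dim V`). -/
def Admissible (V : Set (Fin n → ℂ)) (i : ℕ) : Prop :=
  ((2 * i : ℕ) : ℕ∞) * partialDegE n V i < partialDegE n V (i + 1)

/-- The interval `ℛ_i(V) = [c₁ δ_i(V)^{n-i} Δ_i(V), (c₀/2) δ_{i+1}(V)^{n-i} Δ_i(V)]`,
where `δ_{n-d+1}(V) = ∞` makes the last interval a half-line. -/
def RSet (c0 c1 : ℝ) (V : Set (Fin n → ℂ)) (i : ℕ) : Set ℝ :=
  if i = n - dim n V then
    Set.Ici (c1 * (partialDeg n V i : ℝ) ^ (n - i) * Delta n V i)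
  else
    Set.Icc (c1 * (partialDeg n V i : ℝ) ^ (n - i) * Delta n V i)
      ((c0 / 2) * (partialDeg n V (i + 1) : ℝ) ^ (n - i) * Delta n V i)

/-- The interval `ℛ^l_{s,τ}(V) = [τ δ_s(V)^{n-(s+l)} Δ_s(V), τ δ_{s+1}(V)^{n-(s+l)} Δ_s(V)]`,
where `δ_{n-d+1}(V) = ∞` makes the last interval a half-line. -/
def RlSet (τ : ℝ) (l : ℕ) (V : Set (Fin n → ℂ)) (s : ℕ) : Set ℝ :=
  if s = n - dim n V then
    Set.Ici (τ * (partialDeg n V s : ℝ) ^ (n - (s + l)) * Delta n V s)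
  else
    Set.Icc (τ * (partialDeg n V s : ℝ) ^ (n - (s + l)) * Delta n V s)
      (τ * (partialDeg n V (s + 1) : ℝ) ^ (n - (s + l)) * Delta n V s)

/-- The ideal `I(V)` of polynomials vanishing on `V ⊆ ℂⁿ`. -/
def vanishingIdeal (V : Set (Fin n → ℂ)) : Ideal (MvPolynomial (Fin n) ℂ) where
  carrier := {f | ∀ x ∈ V, eval x f = 0}
  add_mem' := by
    intro a b ha hb x hx
    simp [ha x hx, hb x hx]
  zero_mem' := by
    intro x hx
    simp
  smul_mem' := by
    intro c f hf x hx
    simp [smul_eq_mul, hf x hx]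

/-- The ideal `I_ℝ(V)` of real polynomials vanishing on `V ⊆ ℂⁿ`. -/
def vanishingIdealR (V : Set (Fin n → ℂ)) : Ideal (MvPolynomial (Fin n) ℝ) :=
  (vanishingIdeal n V).comap (MvPolynomial.map (algebraMap ℝ ℂ))

/-- The affine Hilbert function `H_{I(V)}(m) = dim_ℂ ℂ[x]_{≤ m} / I(V)_{≤ m}`, realised as the
dimension of the image of the space of polynomials of total degree at most `m` in the quotient
ring `ℂ[x]/I(V)`. -/
def hilbert (V : Set (Fin n → ℂ)) (m : ℕ) : ℕ :=
  Module.finrank ℂ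
    (Submodule.map (Ideal.Quotient.mkₐ ℂ (vanishingIdeal n V)).toLinearMap
      (restrictTotalDegree (Fin n) ℂ m))

/-- The real affine Hilbert function `H_{I(V),ℝ}(m) = dim_ℝ ℝ[x]_{≤ m} / I_ℝ(V)_{≤ m}`. -/
def hilbertR (V : Set (Fin n → ℂ)) (m : ℕ) : ℕ :=
  Module.finrank ℝ
    (Submodule.map (Ideal.Quotient.mkₐ ℝ (vanishingIdealR n V)).toLinearMap
      (restrictTotalDegree (Fin n) ℝ m))

/-- The inclusion `ℝⁿ → ℂⁿ`. -/
def toC (x : Fin n → ℝ) : Fin n → ℂ := fun i => (x i : ℂ)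

/-- The set of real points of `V ⊆ ℂⁿ`. -/
def realPts (V : Set (Fin n → ℂ)) : Set (Fin n → ℝ) := {x | toC n x ∈ V}

/-- The real zero set of a real polynomial. -/
def zeroSetR (g : MvPolynomial (Fin n) ℝ) : Set (Fin n → ℝ) := {x | eval x g = 0}

/-- The zero locus of the polynomials `P 1, …, P i` (the first `i` members of a tuple of
polynomials indexed from `1`). -/
def zeroLocusUpTo (P : ℕ → MvPolynomial (Fin n) ℂ) (i : ℕ) : Set (Fin n → ℂ) :=
  zeroLocus n {f | ∃ j : ℕ, 1 ≤ j ∧ j ≤ i ∧ f = P j}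

/-- `V'` is an `(n-s)`-minimal variety of the irreducible variety `V`. -/
def IsMinimalVariety (V V' : Set (Fin n → ℂ)) (s : ℕ) : Prop :=
  IsIrredVariety n V' ∧ V ⊆ V' ∧ dim n V' = n - s ∧
    ∀ f ∈ vanishingIdeal n V, f ∉ vanishingIdeal n V' →
      partialDegE n V (s + 1) ≤ (f.totalDegree : ℕ∞)

/-- `S` is `(k,b)`-free with respect to `T`, for the incidence relation `R`. -/
def KBFree {α β : Type*} (R : α → β → Prop) (S : Finset α) (T : Finset β) (k b : ℕ) : Prop :=
  ¬ ∃ (P : Finset α) (B : Finset β), P ⊆ S ∧ B ⊆ T ∧ P.card = k ∧ B.card = b ∧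
      ∀ s ∈ P, ∀ t ∈ B, R s t

/-- The number of incidences between a finite set of points and a finite family of sets. -/
def incCountAbs {α : Type*} (S : Finset α) (T : Finset (Set α)) : ℕ :=
  ∑ t ∈ T, (↑S ∩ t).ncard

/-- The number of incidences between a finite set of real points and a finite family of
subsets of `ℂⁿ`. -/
def incCount (S : Finset (Fin n → ℝ)) (T : Finset (Set (Fin n → ℂ))) : ℕ :=
  ∑ t ∈ T, (↑S ∩ toC n ⁻¹' t).ncard

/-- The total degree `deg T = ∑_{t ∈ T} deg t` of a finite family of algebraic sets. -/
def degFamily (T : Finset (Set (Fin n → ℂ))) : ℕ := ∑ t ∈ T, degreeSum n t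

/-- The total degree of a finite family of irreducible varieties. -/
def degFamilyIrred (T : Finset (Set (Fin n → ℂ))) : ℕ := ∑ t ∈ T, degree n t

/-- `α_k(d)`. -/
def alpha (k d : ℕ) : ℝ :=
  if k = 1 ∧ d = 1 then 0 else (k : ℝ) * ((d : ℝ) - 1) / ((d : ℝ) * (k : ℝ) - 1)

/-- `β_k(d)`. -/
def beta (k d : ℕ) : ℝ :=
  if k = 1 ∧ d = 1 then 1 else (d : ℝ) * ((k : ℝ) - 1) / ((d : ℝ) * (k : ℝ) - 1)

/-- `τ_d(b,k) = b^{1-β_k(d)} k^{1-α_k(d)}`. -/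
def tauC (d b k : ℕ) : ℝ := (b : ℝ) ^ (1 - beta k d) * (k : ℝ) ^ (1 - alpha k d)

/-- The Chardin–Philippon property of the constant `c₀`: for every pure-dimensional algebraic
set `W ⊆ ℂⁿ` and every `m ≥ 2 (n - dim W) δ(W)` one has `H_{I(W)}(m) ≥ c₀ m^{dim W} deg W`. -/
def ChardinPhilippon (c0 : ℝ) : Prop :=
  ∀ (W : Set (Fin n → ℂ)) (e : ℕ), IsAlgSetOfDim n W e →
    ∀ m : ℕ, 2 * (n - e) * deltaSet n W ≤ m →
      c0 * (m : ℝ) ^ e * (degreeSum n W : ℝ) ≤ (hilbert n W m : ℝ)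

/-- The defining property of the constant `c₁`: for every irreducible variety `V`, every
positive integer lies in some interval `ℛ_i(V)` with `i` admissible with respect to `V`. -/
def CoversPositiveIntegers (c0 c1 : ℝ) : Prop :=
  ∀ V : Set (Fin n → ℂ), IsIrredVariety n V →
    ∀ m : ℕ, 0 < m → ∃ i, Admissible n V i ∧ (m : ℝ) ∈ RSet n c0 c1 V i

/-- `i_V(M)`: the smallest admissible `i` such that `M^{n-i} Δ_i(V) ∈ ℛ_i(V)`. -/
def iV (c0 c1 : ℝ) (V : Set (Fin n → ℂ)) (M : ℕ) : ℕ :=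
  sInf {i | Admissible n V i ∧ (M : ℝ) ^ (n - i) * Delta n V i ∈ RSet n c0 c1 V i}

/-- A real polynomial bisects a finite set `S ⊆ ℝⁿ` if it is positive on at most half of `S`
and negative on at most half of `S`. -/
def Bisects (g : MvPolynomial (Fin n) ℝ) (S : Finset (Fin n → ℝ)) : Prop :=
  ((↑S ∩ {x | 0 < eval x g}).ncard : ℝ) ≤ (S.card : ℝ) / 2 ∧
    ((↑S ∩ {x | eval x g < 0}).ncard : ℝ) ≤ (S.card : ℝ) / 2

/-- The set of `r`-rich points of a family `T`: points lying in at least `r` members of `T`. -/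
def richPts (T : Finset (Set (Fin n → ℂ))) (r : ℕ) : Set (Fin n → ℂ) :=
  {x | r ≤ ({t | t ∈ T ∧ x ∈ t} : Set (Set (Fin n → ℂ))).ncard}

/-- A real hypersurface of degree at most `D`: the real zero set of a nonzero real polynomial
of degree at most `D`. -/
def IsRealHypersurfaceDegLE (t : Set (Fin n → ℝ)) (D : ℕ) : Prop :=
  ∃ p : MvPolynomial (Fin n) ℝ, p ≠ 0 ∧ t = zeroSetR n p ∧ p.totalDegree ≤ D

/-- Lexicographic comparison of the tuples `(f 1, …, f m)` and `(g 1, …, g m)`. -/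
def LexLE (m : ℕ) (f g : ℕ → ℕ) : Prop :=
  (∀ j ∈ Finset.Icc 1 m, f j = g j) ∨
    ∃ i ∈ Finset.Icc 1 m, (∀ j, 1 ≤ j → j < i → f j = g j) ∧ f i < g i

/-!
Write `HF(I, m)` for the dimension of the space of polynomials of degree at most `m` modulo `I`.
A polynomial of degree at most `m` that vanishes on every `t ∈ T` but not on `V` exists as soon as
`∑ HF(I(t), m) < HF(I(V), m)`. The left-hand side is `≲ deg T * (m + 1) ^ l`. The right-hand side is
`≳ Δ_s(V) * (m + 1) ^ (n - s)` for `δ_s ≤ m < δ_{s+1}`: in this range the elements of `I(V)` of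
degree at most `m` all lie in one prime `Q ⊆ I(V)` of dimension `n - s` which is minimal over its
elements of degree at most `δ_s`; such a `Q` satisfies `deg Q * (m + 1) ^ (n - s) ≲ HF(Q, m)`, a
bound of Chardin and Philippon, and cutting `Q` down to `I(V)` by equations of degrees
`δ_{s+1}, …, δ_{n-d}` gives `Δ_s(V) ≲ deg Q` by Bezout. It remains to take `m` of the order of
`(deg T / Δ_s(V)) ^ (1 / (n - s - l))`, which the hypothesis on `deg T` places between `δ_s` and
`δ_{s+1}`.

In these estimates the degree of a prime is replaced by the supremum of the ratios
`HF(P, m) / (m + 1) ^ dim P`, for which Bezout's inequality up to a constant is a matter of counting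
dimensions. A linear Noether normalization together with a primitive element that is a linear form
in the coordinates compares it with the number of points of a generic linear section.
-/

section NoetherNormalization

variable {K A : Type*} [Field K] [CommRing A] [Algebra K A] {ι : Type*}

variable (K) in
/-- The `K`-space of polynomials of degree at most `1` in the elements `x i`; its `M`-th power is
the space of polynomials of degree at most `M` in them. -/
def affineForms (x : ι → A) : Submodule K A :=
  Submodule.span K (insert 1 (range x))

lemma one_mem_affineForms (x : ι → A) : (1 : A) ∈ affineForms K x :=
  Submodule.subset_span (mem_insert _ _)

lemma mem_affineForms (x : ι → A) (i : ι) : x i ∈ affineForms K x :=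
  Submodule.subset_span (mem_insert_of_mem _ (mem_range_self i))

lemma affineForms_le_iff {x : ι → A} {X : Submodule K A} (h1 : (1 : A) ∈ X) :
    affineForms K x ≤ X ↔ ∀ i, x i ∈ X := by
  simp [affineForms, Submodule.span_le, insert_subset_iff, h1, range_subset_iff]

lemma le_mul_of_one_mem {X Y : Submodule K A} (h : (1 : A) ∈ X) : Y ≤ X * Y := by
  simpa using mul_le_mul_left (Submodule.one_le.2 h) Y

lemma submodule_pow_le_pow {X : Submodule K A} (h : (1 : A) ∈ X) {a b : ℕ} (hab : a ≤ b) :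
    X ^ a ≤ X ^ b :=
  pow_le_pow_right' (Submodule.one_le.2 h) hab

lemma multiset_prod_mem_pow {Y : Submodule K A} {x : ι → A} (hx : ∀ i, x i ∈ Y)
    (s : Multiset ι) : (s.map x).prod ∈ Y ^ s.card := by
  induction s using Multiset.induction_on with
  | empty => simpa using ⟨1, map_one (algebraMap K A)⟩
  | cons i t ih =>
    rw [Multiset.map_cons, Multiset.prod_cons, Multiset.card_cons, pow_succ']
    exact Submodule.mul_mem_mul (hx i) ih

lemma multiset_prod_sub_mem_mul_pow {X Y : Submodule K A} {x : ι → A} {z : A} {v : ι → K}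
    (hxY : ∀ i, x i ∈ Y) (hzY : z ∈ Y) (hx : ∀ i, x i - v i • z ∈ X) {m : ℕ} {s : Multiset ι}
    (hs : s.card = m + 1) :
    (s.map x).prod - (s.map v).prod • z ^ (m + 1) ∈ X * Y ^ m := by
  induction m generalizing s with
  | zero =>
    obtain ⟨i, rfl⟩ := Multiset.card_eq_one.1 hs
    simpa using hx i
  | succ m ih =>
    obtain ⟨i, hi⟩ := Multiset.card_pos_iff_exists_mem.1 (by omega : 0 < s.card)
    obtain ⟨t, rfl⟩ := Multiset.exists_cons_of_mem hi
    have ht : t.card = m + 1 := by simpa using hs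
    have telescope : ((i ::ₘ t).map x).prod - ((i ::ₘ t).map v).prod • z ^ (m + 1 + 1) =
        (x i - v i • z) * (t.map x).prod +
          v i • (z * ((t.map x).prod - (t.map v).prod • z ^ (m + 1))) := by
      simp only [Multiset.map_cons, Multiset.prod_cons, Algebra.smul_def, map_mul]
      ring
    rw [telescope]
    refine add_mem (Submodule.mul_mem_mul (hx i) (ht ▸ multiset_prod_mem_pow hxY t))
      (Submodule.smul_mem _ _ ?_)
    rw [pow_succ', mul_left_comm X]
    exact Submodule.mul_mem_mul hzY (ih ht)

lemma aeval_eq_sum_multiset (f : MvPolynomial ι K) (x : ι → A) :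
    aeval x f = ∑ s ∈ f.support, coeff s f • (s.toMultiset.map x).prod := by
  classical
  rw [aeval_def, eval₂_eq]
  refine Finset.sum_congr rfl fun s _ => ?_
  rw [Algebra.smul_def, Finsupp.toMultiset_map, Finsupp.prod_toMultiset,
    Finsupp.prod_mapDomain_index (by simp) fun _ _ _ => pow_add _ _ _]
  rfl

lemma aeval_sub_mem_mul_pow {X Y : Submodule K A} {x : ι → A} {z : A} {v : ι → K}
    (hX : (1 : A) ∈ X) (hY : (1 : A) ∈ Y) (hxY : ∀ i, x i ∈ Y) (hzY : z ∈ Y)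
    (hx : ∀ i, x i - v i • z ∈ X) {f : MvPolynomial ι K} {m : ℕ} (hf : f.totalDegree ≤ m + 1) :
    aeval x f - eval v (homogeneousComponent (m + 1) f) • z ^ (m + 1) ∈ X * Y ^ m := by
  classical
  have hcomp : eval v (homogeneousComponent (m + 1) f) =
      ∑ s ∈ f.support, if s.degree = m + 1 then coeff s f * (s.toMultiset.map v).prod else 0 := by
    rw [homogeneousComponent_apply, map_sum, Finset.sum_filter]
    refine Finset.sum_congr rfl fun s _ => ?_
    split_ifs with h
    · rw [eval_monomial, Finsupp.toMultiset_map, Finsupp.prod_toMultiset,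
        Finsupp.prod_mapDomain_index (by simp) fun _ _ _ => pow_add _ _ _]
    · rfl
  rw [aeval_eq_sum_multiset, hcomp, Finset.sum_smul, ← Finset.sum_sub_distrib]
  refine Submodule.sum_mem _ fun s hs => ?_
  have hcard : s.toMultiset.card = s.degree := by rw [Finsupp.card_toMultiset]; rfl
  have hdeg : s.degree ≤ m + 1 := (le_totalDegree hs).trans hf
  split_ifs with h
  · rw [mul_smul, ← smul_sub]
    exact Submodule.smul_mem _ _ (multiset_prod_sub_mem_mul_pow hxY hzY hx (hcard.trans h))
  · rw [zero_smul, sub_zero]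
    refine Submodule.smul_mem _ _ (le_mul_of_one_mem hX ?_)
    exact submodule_pow_le_pow hY (by omega) (multiset_prod_mem_pow hxY _)

lemma pow_add_le_mul_of_pow_succ_le {X Y : Submodule K A} {a : ℕ} (h : Y ^ (a + 1) ≤ X * Y ^ a)
    (M : ℕ) : Y ^ (a + M) ≤ Y ^ a * X ^ M := by
  induction M with
  | zero => simp
  | succ M ih =>
    calc Y ^ (a + (M + 1)) = Y * Y ^ (a + M) := by rw [← pow_succ']; rfl
      _ ≤ Y * (Y ^ a * X ^ M) := mul_le_mul_right ih Y
      _ = Y ^ (a + 1) * X ^ M := by rw [pow_succ']; ring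
      _ ≤ X * Y ^ a * X ^ M := mul_le_mul_left h _
      _ = Y ^ a * X ^ (M + 1) := by rw [pow_succ']; ring

lemma pow_succ_le_mul_pow_of_pow_mem {X Y : Submodule K A} {z : A}
    (hYX : Y ≤ X ⊔ Submodule.span K {z}) (hz : z ∈ Y) {a : ℕ} (h : z ^ (a + 1) ∈ X * Y ^ a) :
    Y ^ (a + 1) ≤ X * Y ^ a := by
  have key (m : ℕ) : Y ^ (m + 1) ≤ X * Y ^ m ⊔ Submodule.span K {z ^ (m + 1)} := by
    induction m with
    | zero => simpa using hYX
    | succ m ih =>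
      calc Y ^ (m + 1 + 1) ≤ (X ⊔ Submodule.span K {z}) * Y ^ (m + 1) := by
            rw [pow_succ']; exact mul_le_mul_left hYX _
        _ = X * Y ^ (m + 1) ⊔ Submodule.span K {z} * Y ^ (m + 1) := Submodule.sup_mul _ _ _
        _ ≤ _ := ?_
      refine sup_le le_sup_left ((mul_le_mul_right ih _).trans ?_)
      rw [Submodule.mul_sup, Submodule.span_mul_span, singleton_mul_singleton, ← pow_succ']
      refine sup_le_sup ?_ le_rfl
      rw [mul_left_comm, pow_succ' Y]
      exact mul_le_mul_right (mul_le_mul_left ((Submodule.span_singleton_le_iff_mem _ _).2 hz) _) _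
  exact (key a).trans (sup_le le_rfl ((Submodule.span_singleton_le_iff_mem _ _).2 h))

lemma homogeneousComponent_totalDegree_ne_zero {f : MvPolynomial ι K} (hf : f ≠ 0) :
    homogeneousComponent f.totalDegree f ≠ 0 := by
  obtain ⟨s, hs, hsd⟩ := Finset.exists_mem_eq_sup f.support (support_nonempty.2 hf)
    (fun s => s.degree)
  intro h
  have hd : s.degree = f.totalDegree := hsd.symm
  have := congrArg (coeff s) h
  rw [coeff_homogeneousComponent, if_pos hd] at this
  exact mem_support_iff.1 hs this

lemma totalDegree_ne_zero_of_aeval_eq_zero [Nontrivial A] {x : ι → A} {f : MvPolynomial ι K}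
    (hf : f ≠ 0) (hx : aeval x f = 0) : f.totalDegree ≠ 0 := by
  intro h
  rw [totalDegree_eq_zero_iff_eq_C] at h
  rw [h, aeval_C, map_eq_zero_iff _ (algebraMap K A).injective] at hx
  exact hf (by rw [h, hx, map_zero])

lemma exists_affineForms_pow_le_of_not_algebraicIndependent [Infinite K] [Nontrivial A] {k : ℕ}
    {x : Fin (k + 1) → A} (hx : ¬ AlgebraicIndependent K x) :
    ∃ y : Fin k → A, (∀ i, y i ∈ affineForms K x) ∧ ∃ Z : Submodule K A, Z.FG ∧
      ∀ M, affineForms K x ^ M ≤ Z * affineForms K y ^ M := by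
  obtain ⟨f, hfx, hf⟩ : ∃ f, aeval x f = 0 ∧ f ≠ 0 := by
    simpa [algebraicIndependent_iff] using hx
  obtain ⟨a, ha⟩ := Nat.exists_eq_succ_of_ne_zero (totalDegree_ne_zero_of_aeval_eq_zero hf hfx)
  obtain ⟨v, hv⟩ : ∃ v, eval v (homogeneousComponent (a + 1) f) ≠ 0 := by
    by_contra! h
    exact homogeneousComponent_totalDegree_ne_zero hf
      (MvPolynomial.funext (by simpa [ha] using h))
  obtain ⟨j, hj⟩ : ∃ j, v j ≠ 0 := by
    by_contra! h
    have hv0 : v = 0 := _root_.funext h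
    simp [hv0, MvPolynomial.eval_zero, constantCoeff_eq, coeff_homogeneousComponent] at hv
  let z := (v j)⁻¹ • x j
  let y : Fin k → A := fun i => x (j.succAbove i) - v (j.succAbove i) • z
  have hz : z ∈ affineForms K x := Submodule.smul_mem _ _ (mem_affineForms x j)
  have hxy (i : Fin (k + 1)) : x i - v i • z ∈ affineForms K y := by
    rcases Fin.eq_self_or_eq_succAbove j i with rfl | ⟨i, rfl⟩
    · simp [z, smul_smul, hj]
    · exact mem_affineForms y i
  have hle : affineForms K x ≤ affineForms K y ⊔ Submodule.span K {z} := by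
    refine (affineForms_le_iff (Submodule.mem_sup_left (one_mem_affineForms y))).2 fun i => ?_
    rw [← sub_add_cancel (x i) (v i • z)]
    exact Submodule.add_mem_sup (hxy i)
      (Submodule.smul_mem _ _ (Submodule.mem_span_singleton_self z))
  have hpow : z ^ (a + 1) ∈ affineForms K y * affineForms K x ^ a := by
    have := aeval_sub_mem_mul_pow (one_mem_affineForms y) (one_mem_affineForms x)
      (mem_affineForms x) hz hxy ha.le
    rwa [hfx, zero_sub, neg_mem_iff, Submodule.smul_mem_iff _ hv] at this
  refine ⟨y, fun i => sub_mem (mem_affineForms x _) (Submodule.smul_mem _ _ hz),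
    affineForms K x ^ a, (Submodule.fg_span ((finite_range x).insert 1)).pow a, fun M => ?_⟩
  exact (submodule_pow_le_pow (one_mem_affineForms x) (Nat.le_add_left M a)).trans
    (pow_add_le_mul_of_pow_succ_le
      (pow_succ_le_mul_pow_of_pow_mem hle hz hpow) M)

theorem exists_linear_noetherNormalization [Infinite K] [Nontrivial A] {k : ℕ} (x : Fin k → A) :
    ∃ r, ∃ y : Fin r → A, (∀ i, y i ∈ affineForms K x) ∧ AlgebraicIndependent K y ∧
      ∃ Z : Submodule K A, Z.FG ∧ ∀ M, affineForms K x ^ M ≤ Z * affineForms K y ^ M := by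
  have hone : (1 : Submodule K A).FG := ⟨{1}, by simp [Submodule.one_eq_span]⟩
  induction k with
  | zero =>
    exact ⟨0, x, fun i => i.elim0,
      algebraicIndependent_empty_type_iff.2 (algebraMap K A).injective, 1, hone, fun M => by simp⟩
  | succ k ih =>
    by_cases hx : AlgebraicIndependent K x
    · exact ⟨k + 1, x, mem_affineForms x, hx, 1, hone, fun M => by simp⟩
    · obtain ⟨x', hx', Z, hZ, hle⟩ := exists_affineForms_pow_le_of_not_algebraicIndependent hx
      obtain ⟨r, y, hy, hyi, Z', hZ', hle'⟩ := ih x'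
      refine ⟨r, y, fun i => (affineForms_le_iff (one_mem_affineForms x)).2 hx' (hy i), hyi,
        Z * Z', hZ.mul hZ', fun M => (hle M).trans ?_⟩
      rw [mul_assoc]
      exact mul_le_mul_right (hle' M) Z

end NoetherNormalization

section PrimitiveElement

open Polynomial in
lemma resultant_derivative_ne_zero_of_separable {B K : Type*} [CommRing B] [Field K]
    {φ : B →+* K} (hφ : Function.Injective φ) {f : Polynomial B} (hf : (f.map φ).Separable) :
    f.resultant f.derivative ≠ 0 := by
  have h : (f.map φ).resultant (f.derivative.map φ) ≠ 0 :=
    resultant_ne_zero _ _ (by rwa [← derivative_map])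
  rw [natDegree_map_eq_of_injective hφ, natDegree_map_eq_of_injective hφ,
    resultant_map_map] at h
  exact ne_of_apply_ne φ (by simpa using h)

open Polynomial in
lemma separable_map_of_resultant_derivative_ne_zero {B F : Type*} [CommRing B] [Field F]
    {φ : B →+* F} {f : Polynomial B} (hf : f.Monic) (h : φ (f.resultant f.derivative) ≠ 0) :
    (f.map φ).Separable := by
  by_cases hdeg : f.natDegree = 0
  · rw [hf.natDegree_eq_zero.1 hdeg, Polynomial.map_one]
    exact separable_one
  obtain ⟨s, t, -, -, hst⟩ :=
    exists_mul_add_mul_eq_C_resultant f f.derivative le_rfl le_rfl (Or.inl hdeg)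
  refine ⟨Polynomial.C (φ (f.resultant f.derivative))⁻¹ * s.map φ,
    Polynomial.C (φ (f.resultant f.derivative))⁻¹ * t.map φ, ?_⟩
  calc _ = Polynomial.C (φ (f.resultant f.derivative))⁻¹ *
        (f * s + f.derivative * t).map φ := by
        simp only [Polynomial.map_add, Polynomial.map_mul, derivative_map]; ring
    _ = 1 := by rw [hst, Polynomial.map_C, ← map_mul, inv_mul_cancel₀ h, map_one]

variable {B A : Type*} [CommRing B] [CommRing A] [IsDomain B] [IsDomain A] [Algebra B A]
  [FaithfulSMul B A]

section FractionField

open scoped IntermediateField nonZeroDivisors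

variable (K L : Type*) [Field K] [Field L] [Algebra B K] [IsFractionRing B K] [Algebra A L]
  [IsFractionRing A L] [Algebra K L] [Algebra B L] [IsScalarTower B K L] [IsScalarTower B A L]

omit [Algebra B L] [IsScalarTower B A L] in
variable (B A) in
lemma isLocalization_algebraMapSubmonoid_nonZeroDivisors [Algebra.IsIntegral B A] :
    IsLocalization (Algebra.algebraMapSubmonoid A B⁰) L := by
  have hinj := FaithfulSMul.algebraMap_injective B A
  refine (IsLocalization.iff_of_le_of_exists_dvd _ A⁰ ?_ fun a ha => ?_).2 inferInstance
  · exact map_le_nonZeroDivisors_of_injective _ hinj le_rfl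
  · obtain ⟨b, hb, hab⟩ :=
      (Algebra.IsIntegral.isIntegral (R := B) a).isAlgebraic.exists_nonzero_dvd ha
    exact ⟨_, ⟨b, mem_nonZeroDivisors_of_ne_zero hb, rfl⟩, hab⟩

variable (B A) in
lemma exists_adjoin_algebraMap_eq_top [Module.Finite B A] [CharZero B] :
    ∃ u : A, K⟮algebraMap A L u⟯ = ⊤ := by
  have := isLocalization_algebraMapSubmonoid_nonZeroDivisors B A L
  have : FiniteDimensional K L := .of_isLocalization B A B⁰
  have : CharZero K := charZero_of_injective_algebraMap (IsFractionRing.injective B K)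
  obtain ⟨w, hw⟩ := Field.exists_primitive_element K L
  obtain ⟨⟨u, _, b, hb, rfl⟩, hwu⟩ :=
    IsLocalization.surj (Algebra.algebraMapSubmonoid A B⁰) w
  refine ⟨u, ?_⟩
  have hb0 : algebraMap B K b ≠ 0 := IsFractionRing.to_map_ne_zero_of_mem_nonZeroDivisors hb
  have hwb : w = algebraMap A L u / algebraMap K L (algebraMap B K b) := by
    rw [eq_div_iff ((map_ne_zero _).2 hb0), ← hwu, ← IsScalarTower.algebraMap_apply,
      ← IsScalarTower.algebraMap_apply]
  rw [eq_top_iff, ← hw, IntermediateField.adjoin_simple_le_iff, hwb]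
  exact div_mem (IntermediateField.mem_adjoin_simple_self K _) (algebraMap_mem _ _)

lemma exists_smul_mem_adjoin [Algebra.IsIntegral B A] {u : A} (hu : K⟮algebraMap A L u⟯ = ⊤)
    (a : A) : ∃ q : B, q ≠ 0 ∧ q • a ∈ Algebra.adjoin B {u} := by
  have := isLocalization_algebraMapSubmonoid_nonZeroDivisors B A L
  have : Algebra.IsAlgebraic K L := isAlgebraic_of_isFractionRing B A K L
  have ha : algebraMap A L a ∈ K⟮algebraMap A L u⟯.toSubalgebra := by rw [hu]; trivial
  rw [IntermediateField.adjoin_simple_toSubalgebra_of_isAlgebraic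
    (Algebra.IsAlgebraic.isAlgebraic _), Algebra.adjoin_singleton_eq_range_aeval] at ha
  obtain ⟨p, hp⟩ := ha
  obtain ⟨q, hq, hqp⟩ := IsLocalization.integerNormalization_spec B⁰ p
  refine ⟨q, nonZeroDivisors.ne_zero hq, ?_⟩
  rw [Algebra.adjoin_singleton_eq_range_aeval]
  refine ⟨IsLocalization.integerNormalization B⁰ p, IsFractionRing.injective A L ?_⟩
  have hp' : Polynomial.aeval (algebraMap A L u) p = algebraMap A L a := hp
  change algebraMap A L (Polynomial.aeval u _) = _
  rw [← Polynomial.aeval_algebraMap_apply, ← Polynomial.aeval_map_algebraMap K, hqp,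
    ← algebraMap_smul K q p, map_smul, hp', algebraMap_smul]
  exact (map_smul (IsScalarTower.toAlgHom B A L) q a).symm

end FractionField

variable (B A) in
theorem exists_conductor_of_primitive_element [CharZero B] [IsIntegrallyClosed B]
    [Module.Finite B A] : ∃ u : A, (minpoly B u).resultant (minpoly B u).derivative ≠ 0 ∧
      ∃ q : B, q ≠ 0 ∧ ∀ a : A, q • a ∈ Algebra.adjoin B {u} := by
  let K := FractionRing B
  let L := FractionRing A
  let _ : Algebra K L := FractionRing.liftAlgebra B L
  have : IsScalarTower B K L := FractionRing.isScalarTower_liftAlgebra B L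
  obtain ⟨u, hu⟩ := exists_adjoin_algebraMap_eq_top B A K L
  have := isLocalization_algebraMapSubmonoid_nonZeroDivisors B A L
  have : FiniteDimensional K L := .of_isLocalization B A (nonZeroDivisors B)
  have : CharZero K := charZero_of_injective_algebraMap (IsFractionRing.injective B K)
  have hint : IsIntegral B u := Algebra.IsIntegral.isIntegral u
  refine ⟨u, ?_, ?_⟩
  · refine resultant_derivative_ne_zero_of_separable (IsFractionRing.injective B K) ?_
    rw [← minpoly.isIntegrallyClosed_eq_field_fractions K L hint]
    exact Algebra.IsSeparable.isSeparable K _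
  · have htors : Module.IsTorsion B (A ⧸ Subalgebra.toSubmodule (Algebra.adjoin B {u})) := by
      intro x
      obtain ⟨a, rfl⟩ := Submodule.Quotient.mk_surjective _ x
      obtain ⟨q, hq, hqa⟩ := exists_smul_mem_adjoin (B := B) K L hu a
      exact ⟨⟨q, mem_nonZeroDivisors_of_ne_zero hq⟩, (Submodule.Quotient.mk_eq_zero _).2 hqa⟩
    obtain ⟨q, hqann, hq⟩ := Submodule.annihilator_top_inter_nonZeroDivisors htors
    exact ⟨q, nonZeroDivisors.ne_zero hq, fun a => (Submodule.Quotient.mk_eq_zero _).1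
      (Submodule.mem_annihilator.1 hqann (Submodule.Quotient.mk a) trivial)⟩

section Lift

variable {R : Type*} [CommRing R] {φ : B →+* R}

theorem exists_ringHom_of_eval₂_minpoly_eq_zero [IsIntegrallyClosed B] {u : A}
    (hu : IsIntegral B u) {q : B} (hq : ∀ a : A, q • a ∈ Algebra.adjoin B {u})
    (hunit : IsUnit (φ q)) {ξ : R} (hξ : (minpoly B u).eval₂ φ ξ = 0) :
    ∃ ψ : A →+* R, ψ.comp (algebraMap B A) = φ ∧ ψ u = ξ := by
  let _ := φ.toAlgebra
  have hroot : (minpoly B u).eval₂ (Algebra.ofId B R) ξ = 0 := hξ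
  let θ : Algebra.adjoin B {u} →ₐ[B] R :=
    (AdjoinRoot.liftAlgHom _ (Algebra.ofId B R) ξ hroot).comp (minpoly.equivAdjoin hu).symm
  let ι : A →ₗ[B] Algebra.adjoin B {u} :=
    (LinearMap.lsmul B A q).codRestrict (Subalgebra.toSubmodule (Algebra.adjoin B {u})) hq
  have hθu : θ ⟨u, Algebra.self_mem_adjoin_singleton B u⟩ = ξ := by
    have : minpoly.equivAdjoin hu (AdjoinRoot.root _) =
        ⟨u, Algebra.self_mem_adjoin_singleton B u⟩ := by simp
    rw [← this]
    change AdjoinRoot.liftAlgHom _ _ ξ hroot ((minpoly.equivAdjoin hu).symm _) = ξ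
    rw [AlgEquiv.symm_apply_apply, AdjoinRoot.liftAlgHom_root]
  obtain ⟨v, hv : ↑v = algebraMap B R q⟩ := hunit
  have hψ (x : Algebra.adjoin B {u}) : (↑v⁻¹ : R) * θ (ι x) = θ x := by
    change ↑v⁻¹ * θ (q • x) = θ x
    rw [map_smul, Algebra.smul_def, ← hv, v.inv_mul_cancel_left]
  have hmul (a b : A) : q • ι (a * b) = ι a * ι b := by
    refine Subtype.ext ?_
    change q • (q • (a * b)) = (q • a) * (q • b)
    rw [smul_mul_smul_comm, mul_smul]
  let ψ : A →ₐ[B] R := AlgHom.ofLinearMap ((↑v⁻¹ : R) • θ.toLinearMap ∘ₗ ι)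
    ((hψ 1).trans (map_one θ)) fun a b => by
      change (↑v⁻¹ : R) * θ (ι (a * b)) = ↑v⁻¹ * θ (ι a) * (↑v⁻¹ * θ (ι b))
      rw [mul_mul_mul_comm, ← map_mul θ, ← hmul, map_smul, Algebra.smul_def, ← hv, mul_assoc,
        v.inv_mul_cancel_left]
  exact ⟨ψ, ψ.comp_algebraMap, (hψ ⟨u, _⟩).trans hθu⟩

omit [FaithfulSMul B A] in
lemma ringHom_injective_of_isIntegral [Algebra.IsIntegral B A] (hφ : Function.Injective φ)
    {ψ : A →+* R} (hψ : ψ.comp (algebraMap B A) = φ) : Function.Injective ψ := by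
  have : Nontrivial R := hφ.nontrivial
  rw [RingHom.injective_iff_ker_eq_bot]
  refine Ideal.eq_bot_of_comap_eq_bot (R := B) ?_
  rw [RingHom.comap_ker, hψ]
  exact (RingHom.injective_iff_ker_eq_bot _).1 hφ

end Lift
end PrimitiveElement

section PowerSeries

variable {σ R : Type*} [Finite σ] [CommRing R]

lemma mem_span_range_X_of_constantCoeff_eq_zero {f : MvPowerSeries σ R}
    (hf : MvPowerSeries.constantCoeff f = 0) :
    f ∈ Ideal.span (range (MvPowerSeries.X : σ → MvPowerSeries σ R)) := by
  classical
  cases nonempty_fintype σ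
  cases isEmpty_or_nonempty σ
  · have : f = 0 := MvPowerSeries.ext fun d => by simpa [Subsingleton.elim d 0] using hf
    exact this ▸ zero_mem _
  have hsupp (d : σ →₀ ℕ) (hd : d ≠ 0) : ∃ i, d i ≠ 0 := by simpa using DFunLike.ne_iff.1 hd
  choose! i hi using hsupp
  let g (j : σ) : MvPowerSeries σ R := fun d =>
    if i (d + Finsupp.single j 1) = j then MvPowerSeries.coeff (d + Finsupp.single j 1) f else 0
  have hfg : f = ∑ j, MvPowerSeries.X j * g j := by
    ext d
    rcases eq_or_ne d 0 with rfl | hd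
    · simpa using hf
    have hle : Finsupp.single (i d) 1 ≤ d :=
      Finsupp.single_le_iff.2 (Nat.one_le_iff_ne_zero.2 (hi d hd))
    have hg (j : σ) (hj : Finsupp.single j 1 ≤ d) :
        MvPowerSeries.coeff (d - Finsupp.single j 1) (g j) =
          if i d = j then MvPowerSeries.coeff d f else 0 := by
      change (if i (d - Finsupp.single j 1 + Finsupp.single j 1) = j then _ else _) = _
      rw [tsub_add_cancel_of_le hj]
    simp only [map_sum, MvPowerSeries.X, MvPowerSeries.coeff_monomial_mul, one_mul]
    rw [Finset.sum_eq_single (i d), if_pos hle, hg _ hle, if_pos rfl]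
    · intro j _ hj
      split_ifs with hle'
      · rw [hg j hle', if_neg hj.symm]
      · rfl
    · simp
  rw [hfg]
  exact Ideal.sum_mem _ fun j _ => Ideal.mul_mem_right _ _ (Ideal.subset_span ⟨j, rfl⟩)

theorem exists_isRoot_of_constantCoeff {f : Polynomial (MvPowerSeries σ R)} (hf : f.Monic) (a : R)
    (h₀ : MvPowerSeries.constantCoeff (f.eval (MvPowerSeries.C a)) = 0)
    (h₁ : IsUnit (MvPowerSeries.constantCoeff (f.derivative.eval (MvPowerSeries.C a)))) :
    ∃ ξ, f.IsRoot ξ := by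
  obtain ⟨ξ, hξ, -⟩ := HenselianRing.is_henselian
    (I := .span (range (MvPowerSeries.X : σ → MvPowerSeries σ R))) f hf (MvPowerSeries.C a)
    (mem_span_range_X_of_constantCoeff_eq_zero h₀)
    ((MvPowerSeries.isUnit_iff_constantCoeff.2 h₁).map _)
  exact ⟨ξ, hξ⟩

end PowerSeries

section LexExponents

variable {σ K : Type*} [LinearOrder σ] [WellFoundedGT σ] [Field K]

/-- The set of lexicographically leading exponents of the elements of a space of power series. -/
def lexExponents (W : Submodule K (MvPowerSeries σ K)) : Set (σ →₀ ℕ) :=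
  {s | ∃ w ∈ W, w.lexOrder = toLex s}

lemma linearIndependent_of_lexOrder {ι : Type*} {w : ι → MvPowerSeries σ K} {e : ι → σ →₀ ℕ}
    (he : Function.Injective e) (hw : ∀ i, (w i).lexOrder = toLex (e i)) :
    LinearIndependent K w := by
  classical
  rw [linearIndependent_iff']
  intro S g hg
  by_contra! hne
  obtain ⟨i, hiS, hi⟩ := hne
  obtain ⟨m, hmT, hm⟩ := (S.filter (g · ≠ 0)).exists_min_image (fun i => toLex (e i))
    ⟨i, Finset.mem_filter.2 ⟨hiS, hi⟩⟩
  obtain ⟨hmS, hgm⟩ := Finset.mem_filter.1 hmT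
  have hcoeff := congrArg (MvPowerSeries.coeff (e m)) hg
  simp only [map_sum, map_smul, map_zero, smul_eq_mul] at hcoeff
  rw [Finset.sum_eq_single_of_mem m hmS] at hcoeff
  · exact mul_ne_zero hgm (MvPowerSeries.coeff_ne_zero_of_lexOrder (hw m).symm) hcoeff
  · intro j hj hjm
    by_cases hgj : g j = 0
    · rw [hgj, zero_mul]
    have hlt : toLex (e m) < toLex (e j) :=
      (hm j (Finset.mem_filter.2 ⟨hj, hgj⟩)).lt_of_ne fun h => hjm (he h).symm
    rw [MvPowerSeries.coeff_eq_zero_of_lt_lexOrder (by rw [hw j]; exact_mod_cast hlt), mul_zero]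

lemma finite_lexExponents (W : Submodule K (MvPowerSeries σ K)) [FiniteDimensional K W] :
    (lexExponents W).Finite := by
  choose w hwW hw using fun s : lexExponents W => s.2
  have : LinearIndependent K (fun s => (⟨w s, hwW s⟩ : W)) :=
    .of_comp W.subtype (linearIndependent_of_lexOrder Subtype.val_injective hw)
  exact this.finite

theorem ncard_lexExponents (W : Submodule K (MvPowerSeries σ K)) [FiniteDimensional K W] :
    (lexExponents W).ncard = Module.finrank K W := by
  have := (finite_lexExponents W).fintype
  rw [← Nat.card_coe_set_eq, Nat.card_eq_fintype_card]
  apply le_antisymm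
  · choose w hwW hw using fun s : lexExponents W => s.2
    have : LinearIndependent K (fun s => (⟨w s, hwW s⟩ : W)) :=
      .of_comp W.subtype (linearIndependent_of_lexOrder Subtype.val_injective hw)
    exact this.fintype_card_le_finrank
  · let leadingCoeffs : W →ₗ[K] lexExponents W → K :=
      LinearMap.pi fun s => MvPowerSeries.coeff (s : σ →₀ ℕ) ∘ₗ W.subtype
    have hinj : Function.Injective leadingCoeffs := by
      refine (injective_iff_map_eq_zero _).2 fun w hw => by_contra fun hne => ?_
      obtain ⟨d, hd⟩ := MvPowerSeries.exists_finsupp_eq_lexOrder_of_ne_zero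
        (φ := (w : MvPowerSeries σ K)) (by simpa using hne)
      exact MvPowerSeries.coeff_ne_zero_of_lexOrder hd.symm
        (congrFun hw ⟨d, w, w.2, hd⟩)
    simpa using LinearMap.finrank_le_finrank_of_injective hinj

lemma lexExponents_mono {U W : Submodule K (MvPowerSeries σ K)} (h : U ≤ W) :
    lexExponents U ⊆ lexExponents W :=
  fun _ ⟨w, hw, hs⟩ => ⟨w, h hw, hs⟩

lemma add_mem_lexExponents_mul {U W : Submodule K (MvPowerSeries σ K)} {s t : σ →₀ ℕ}
    (hs : s ∈ lexExponents U) (ht : t ∈ lexExponents W) : s + t ∈ lexExponents (U * W) := by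
  obtain ⟨u, hu, hus⟩ := hs
  obtain ⟨w, hw, hwt⟩ := ht
  exact ⟨u * w, Submodule.mul_mem_mul hu hw, by rw [MvPowerSeries.lexOrder_mul, hus, hwt]; rfl⟩

lemma mem_lexExponents_of_monomial_mem {W : Submodule K (MvPowerSeries σ K)} {b : σ →₀ ℕ}
    (hb : MvPowerSeries.monomial b 1 ∈ W) : b ∈ lexExponents W := by
  classical
  refine ⟨_, hb, le_antisymm (MvPowerSeries.lexOrder_le_of_coeff_ne_zero (by simp)) ?_⟩
  refine MvPowerSeries.le_lexOrder_iff.2 fun d hd => ?_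
  rw [MvPowerSeries.coeff_monomial, if_neg]
  rintro rfl
  exact lt_irrefl _ hd

lemma nsmul_mem_lexExponents_pow {U : Submodule K (MvPowerSeries σ K)} {s : σ →₀ ℕ}
    (hs : s ∈ lexExponents U) (k : ℕ) : k • s ∈ lexExponents (U ^ k) := by
  induction k with
  | zero =>
    rw [zero_smul, pow_zero]
    exact mem_lexExponents_of_monomial_mem (Submodule.one_le.1 le_rfl)
  | succ k ih => simpa only [succ_nsmul, pow_succ] using add_mem_lexExponents_mul ih hs

lemma mem_lexExponents_affineForms_X_pow {b : σ →₀ ℕ} {M : ℕ} (hb : b.degree ≤ M) :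
    b ∈ lexExponents (affineForms K (MvPowerSeries.X : σ → MvPowerSeries σ K) ^ M) := by
  apply mem_lexExponents_of_monomial_mem
  have hprod : (MvPowerSeries.monomial b 1 : MvPowerSeries σ K) =
      (b.toMultiset.map MvPowerSeries.X).prod := by
    rw [MvPowerSeries.monomial_one_eq, Finsupp.toMultiset_map, Finsupp.prod_toMultiset,
      Finsupp.prod_mapDomain_index (by simp) fun _ _ _ => pow_add _ _ _]
  rw [hprod]
  exact submodule_pow_le_pow (one_mem_affineForms _) (by rwa [Finsupp.card_toMultiset])
    (multiset_prod_mem_pow (mem_affineForms _) _)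

end LexExponents

section Embedding

variable {K : Type*} [Field K]

/-- The Taylor expansion of a polynomial at the point `c`. -/
def taylorExpansion {σ : Type*} (c : σ → K) : MvPolynomial σ K →ₐ[K] MvPowerSeries σ K :=
  aeval fun i => MvPowerSeries.C (c i) + MvPowerSeries.X i

lemma constantCoeff_taylorExpansion {σ : Type*} (c : σ → K) :
    MvPowerSeries.constantCoeff.comp (taylorExpansion c).toRingHom = eval c := by
  refine MvPolynomial.ringHom_ext (fun z => ?_) fun i => ?_
  · simp [taylorExpansion, MvPowerSeries.algebraMap_apply]
  · simp [taylorExpansion]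

lemma taylorExpansion_injective {σ : Type*} (c : σ → K) :
    Function.Injective (taylorExpansion c) := by
  have hcoe : taylorExpansion c = (MvPolynomial.coeToMvPowerSeries.algHom K).comp
      (aeval fun i => C (c i) + X i) := by
    ext i : 1
    simp [taylorExpansion, MvPolynomial.coeToMvPowerSeries.algHom_apply]
  have hinv : (aeval fun i => X i - C (c i) : MvPolynomial σ K →ₐ[K] MvPolynomial σ K).comp
      (aeval fun i => C (c i) + X i) = AlgHom.id K _ := by
    ext i : 1
    simp [algebraMap_eq]
  have hleft : Function.LeftInverse (aeval fun i => X i - C (c i) : MvPolynomial σ K →ₐ[K] _)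
      (aeval fun i => C (c i) + X i) := DFunLike.congr_fun hinv
  rw [hcoe]
  refine Function.Injective.comp (g := MvPolynomial.coeToMvPowerSeries.algHom K) (fun p q h => ?_)
    hleft.injective
  simpa [MvPolynomial.coeToMvPowerSeries.algHom_apply] using h

lemma exists_eval_ne_zero [Infinite K] {σ : Type*} {p : MvPolynomial σ K} (hp : p ≠ 0) :
    ∃ c, eval c p ≠ 0 := by
  by_contra! h
  exact hp (MvPolynomial.funext (by simpa using h))

variable [IsAlgClosed K] [CharZero K] {r : ℕ} {A : Type*} [CommRing A] [IsDomain A] [Algebra K A]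
  [Algebra (MvPolynomial (Fin r) K) A] [IsScalarTower K (MvPolynomial (Fin r) K) A]
  [FaithfulSMul (MvPolynomial (Fin r) K) A] [Module.Finite (MvPolynomial (Fin r) K) A]

variable (K r A) in
theorem exists_injective_algHom_mvPowerSeries :
    ∃ c : Fin r → K, ∃ ψ : A →ₐ[K] MvPowerSeries (Fin r) K, Function.Injective ψ ∧
      ∀ p, ψ (algebraMap (MvPolynomial (Fin r) K) A p) = taylorExpansion c p := by
  obtain ⟨u, hres, q, hq, hqa⟩ := exists_conductor_of_primitive_element (MvPolynomial (Fin r) K) A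
  have hu : IsIntegral (MvPolynomial (Fin r) K) u := Algebra.IsIntegral.isIntegral u
  obtain ⟨c, hc⟩ := exists_eval_ne_zero (mul_ne_zero hq hres)
  rw [map_mul] at hc
  set f := minpoly (MvPolynomial (Fin r) K) u
  have hmon : f.Monic := minpoly.monic hu
  have hsep : (f.map (eval c)).Separable :=
    separable_map_of_resultant_derivative_ne_zero hmon (right_ne_zero_of_mul hc)
  obtain ⟨a, ha⟩ : ∃ a, (f.map (eval c)).eval a = 0 :=
    IsAlgClosed.exists_root _ (by rw [hmon.degree_map]; exact (minpoly.degree_pos hu).ne')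
  let φ := (taylorExpansion c).toRingHom
  have hconst (g : Polynomial (MvPolynomial (Fin r) K)) :
      MvPowerSeries.constantCoeff ((g.map φ).eval (MvPowerSeries.C a)) =
        (g.map (eval c)).eval a := by
    rw [Polynomial.eval_map, Polynomial.hom_eval₂, constantCoeff_taylorExpansion,
      MvPowerSeries.constantCoeff_C, Polynomial.eval_map]
  obtain ⟨ξ, hξ⟩ := exists_isRoot_of_constantCoeff (hmon.map φ) a (by rw [hconst, ha]) <| by
    rw [Polynomial.derivative_map, hconst, ← Polynomial.derivative_map]
    exact (hsep.eval₂_derivative_ne_zero (RingHom.id K) ha).isUnit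
  have hunit : IsUnit (φ q) := by
    rw [MvPowerSeries.isUnit_iff_constantCoeff, ← RingHom.comp_apply, constantCoeff_taylorExpansion]
    exact (left_ne_zero_of_mul hc).isUnit
  obtain ⟨ψ, hψ, -⟩ := exists_ringHom_of_eval₂_minpoly_eq_zero hu hqa hunit
    (by rwa [Polynomial.IsRoot, Polynomial.eval_map] at hξ)
  have hψ' (p) : ψ (algebraMap _ A p) = taylorExpansion c p := RingHom.congr_fun hψ p
  refine ⟨c, { ψ with commutes' := fun z => ?_ },
    ringHom_injective_of_isIntegral (taylorExpansion_injective c) hψ, hψ'⟩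
  change ψ (algebraMap K A z) = _
  rw [IsScalarTower.algebraMap_apply K (MvPolynomial (Fin r) K), hψ', AlgHom.commutes]

end Embedding

section Growth

variable {K : Type*} [Field K] {r : ℕ}

lemma pow_mul_ncard_le_ncard {S T : Set (Fin r →₀ ℕ)} (hT : T.Finite) {k : ℕ} (hk : 0 < k)
    (hST : ∀ s ∈ S, ∀ b : Fin r →₀ ℕ, (∀ i, b i < k) → k • s + b ∈ T) :
    k ^ r * S.ncard ≤ T.ncard := by
  let digits (b : Fin r → Fin k) : Fin r →₀ ℕ := Finsupp.equivFunOnFinite.symm fun i => b i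
  let ι (p : S × (Fin r → Fin k)) : T :=
    ⟨k • p.1 + digits p.2, hST p.1 p.1.2 _ fun i => (p.2 i).2⟩
  have hι : Function.Injective ι := by
    rintro ⟨s, b⟩ ⟨s', b'⟩ h
    have hcoord (i) : k * s.1 i + b i = k * s'.1 i + b' i :=
      DFunLike.congr_fun (congrArg Subtype.val h) i
    have hb (i) : (b i : ℕ) = b' i := by
      simpa [Nat.add_mod, Nat.mod_eq_of_lt] using congrArg (· % k) (hcoord i)
    have hs (i) : s.1 i = s'.1 i :=
      Nat.eq_of_mul_eq_mul_left hk (by have := hcoord i; have := hb i; omega)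
    exact Prod.ext (Subtype.ext (Finsupp.ext hs)) (funext fun i => Fin.ext (hb i))
  have := hT.to_subtype
  simpa [Nat.card_prod, mul_comm] using Nat.card_le_card_of_injective ι hι

variable [IsAlgClosed K] [CharZero K] {A : Type*} [CommRing A] [IsDomain A] [Algebra K A]
  [Algebra (MvPolynomial (Fin r) K) A] [IsScalarTower K (MvPolynomial (Fin r) K) A]
  [FaithfulSMul (MvPolynomial (Fin r) K) A] [Module.Finite (MvPolynomial (Fin r) K) A]

theorem pow_mul_finrank_le_finrank_pow_mul {U : Submodule K A} (hU : U.FG) {k : ℕ} (hk : 0 < k) :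
    k ^ r * Module.finrank K U ≤ Module.finrank K ↥(U ^ k *
      affineForms K (fun i => algebraMap (MvPolynomial (Fin r) K) A (X i)) ^ (r * k)) := by
  obtain ⟨c, ψ, hψ, hψX⟩ := exists_injective_algHom_mvPowerSeries K r A
  set Y := affineForms K fun i => algebraMap (MvPolynomial (Fin r) K) A (X i)
  have hfinrank (W : Submodule K A) : Module.finrank K (W.map ψ.toLinearMap) =
      Module.finrank K W :=
    (Submodule.equivMapOfInjective ψ.toLinearMap hψ W).finrank_eq.symm
  have hY : Y.FG := Submodule.fg_span ((finite_range _).insert _)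
  have : FiniteDimensional K (U.map ψ.toLinearMap) := Module.Finite.iff_fg.2 (hU.map _)
  have : FiniteDimensional K ((U ^ k * Y ^ (r * k)).map ψ.toLinearMap) :=
    Module.Finite.iff_fg.2 (((hU.pow k).mul (hY.pow _)).map _)
  have hone : 1 ∈ Y.map ψ.toLinearMap := ⟨1, one_mem_affineForms _, map_one ψ⟩
  have hXY : affineForms K MvPowerSeries.X ≤ Y.map ψ.toLinearMap := by
    refine (affineForms_le_iff hone).2 fun i =>
      ⟨_ - algebraMap K A (c i), sub_mem (mem_affineForms _ i) ?_, ?_⟩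
    · exact Algebra.algebraMap_eq_smul_one (A := A) (c i) ▸
        Submodule.smul_mem _ _ (one_mem_affineForms _)
    · rw [AlgHom.toLinearMap_apply, map_sub, hψX, AlgHom.commutes,
        MvPowerSeries.algebraMap_apply, taylorExpansion, aeval_X]
      simp
  rw [← hfinrank U, ← hfinrank, ← ncard_lexExponents, ← ncard_lexExponents]
  refine pow_mul_ncard_le_ncard (finite_lexExponents _) hk fun s hs b hb => ?_
  have hbdeg : b.degree ≤ r * k := by
    rw [Finsupp.degree_eq_sum]
    simpa using Finset.sum_le_sum fun i (_ : i ∈ Finset.univ) => (hb i).le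
  rw [Submodule.map_mul, Submodule.map_pow, Submodule.map_pow]
  exact add_mem_lexExponents_mul (nsmul_mem_lexExponents_pow hs k)
    (lexExponents_mono (pow_le_pow_left' hXY _) (mem_lexExponents_affineForms_X_pow hbdeg))

end Growth

section AffineForms

variable {K A B : Type*} [Field K] [CommRing A] [Algebra K A] [CommRing B] [Algebra K B]
  {ι : Type*}

lemma affineForms_fg [Finite ι] (x : ι → A) : (affineForms K x).FG :=
  Submodule.fg_span ((finite_range _).insert _)

lemma map_affineForms (φ : A →ₐ[K] B) (x : ι → A) :
    (affineForms K x).map φ.toLinearMap = affineForms K (φ ∘ x) := by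
  rw [affineForms, Submodule.map_span, image_insert_eq, ← range_comp, affineForms]
  simp [Function.comp_def]

lemma affineForms_X_pow (m : ℕ) :
    affineForms K (X : ι → MvPolynomial ι K) ^ m = restrictTotalDegree ι K m := by
  have hX : affineForms K (X : ι → MvPolynomial ι K) ≤ restrictTotalDegree ι K 1 :=
    (affineForms_le_iff (by simp [mem_restrictTotalDegree])).2
      fun i => by simp [mem_restrictTotalDegree]
  refine le_antisymm ?_ fun f hf => ?_
  · induction m with
    | zero => simp [Submodule.one_le, mem_restrictTotalDegree]
    | succ m ih =>
      rw [pow_succ, Submodule.mul_le]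
      intro f hf g hg
      have hf' := (mem_restrictTotalDegree _ _ _).1 (ih hf)
      have hg' := (mem_restrictTotalDegree _ _ _).1 (hX hg)
      exact (mem_restrictTotalDegree _ _ _).2 ((totalDegree_mul f g).trans (add_le_add hf' hg'))
  · rw [mem_restrictTotalDegree] at hf
    rw [← aeval_X_left_apply f, aeval_eq_sum_multiset]
    refine sum_mem fun s hs => Submodule.smul_mem _ _ ?_
    exact submodule_pow_le_pow (one_mem_affineForms _)
      ((Finsupp.card_toMultiset s).trans_le ((le_totalDegree hs).trans hf))
      (multiset_prod_mem_pow (mem_affineForms _) _)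

lemma affineForms_pow_eq_map_aeval (x : ι → A) (m : ℕ) :
    affineForms K x ^ m =
      (restrictTotalDegree ι K m).map (aeval x : MvPolynomial ι K →ₐ[K] A).toLinearMap := by
  rw [← affineForms_X_pow, Submodule.map_pow, map_affineForms]
  congr
  ext i
  simp

lemma finrank_restrictTotalDegree_le (ι K : Type*) [Field K] [Fintype ι] (m : ℕ) :
    Module.finrank K (restrictTotalDegree ι K m) ≤ (m + 1) ^ Fintype.card ι := by
  classical
  let b := basisRestrictSupport K { s : ι →₀ ℕ | (s.sum fun _ e => e) ≤ m }
  let exponent (s : { s : ι →₀ ℕ | (s.sum fun _ e => e) ≤ m }) (i : ι) : Fin (m + 1) :=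
    ⟨s.1 i, Nat.lt_succ_of_le ((Finsupp.le_degree i s.1).trans s.2)⟩
  have hexponent : Function.Injective exponent := fun s t h =>
    Subtype.ext (Finsupp.ext fun i => congrArg Fin.val (congrFun h i))
  calc Module.finrank K (restrictTotalDegree ι K m)
      = Nat.card { s : ι →₀ ℕ | (s.sum fun _ e => e) ≤ m } := Module.finrank_eq_nat_card_basis b
    _ ≤ Nat.card (ι → Fin (m + 1)) := Nat.card_le_card_of_injective exponent hexponent
    _ = (m + 1) ^ Fintype.card ι := by simp

lemma finrank_affineForms_pow_le [Fintype ι] (x : ι → A) (m : ℕ) :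
    Module.finrank K ↥(affineForms K x ^ m) ≤ (m + 1) ^ Fintype.card ι := by
  rw [affineForms_pow_eq_map_aeval]
  exact (Submodule.finrank_map_le _ _).trans (finrank_restrictTotalDegree_le ι K m)

lemma finrank_mul_le {U W : Submodule K A} (hU : U.FG) (hW : W.FG) :
    Module.finrank K ↥(U * W) ≤ Module.finrank K U * Module.finrank K W := by
  have : Module.Finite K U := Module.Finite.iff_fg.2 hU
  have : Module.Finite K W := Module.Finite.iff_fg.2 hW
  rw [← Submodule.mulMap_range, ← Module.finrank_tensorProduct]
  exact LinearMap.finrank_range_le _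

lemma finrank_le_finrank_of_le_of_fg {U W : Submodule K A} (h : U ≤ W) (hW : W.FG) :
    Module.finrank K U ≤ Module.finrank K W :=
  have : Module.Finite K W := Module.Finite.iff_fg.2 hW
  Submodule.finrank_mono h

lemma finite_aeval_of_forall_mem_mul {y : ι → A} {Z : Submodule K A} (hZ : Z.FG)
    (hy : ∀ a, ∃ M, a ∈ Z * affineForms K y ^ M) :
    (aeval y : MvPolynomial ι K →ₐ[K] A).Finite := by
  let _ : Algebra (MvPolynomial ι K) A := (aeval y).toAlgebra
  have : IsScalarTower K (MvPolynomial ι K) A :=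
    IsScalarTower.of_algebraMap_eq fun c => (AlgHom.commutes (aeval y) c).symm
  obtain ⟨S, rfl⟩ := hZ
  refine ⟨⟨S, eq_top_iff.2 fun a _ => ?_⟩⟩
  obtain ⟨M, hM⟩ := hy a
  refine Submodule.mul_induction_on hM (fun z hz w hw => ?_) fun _ _ => add_mem
  rw [affineForms_pow_eq_map_aeval] at hw
  obtain ⟨p, -, rfl⟩ := hw
  have hz' := Submodule.span_le_restrictScalars K (MvPolynomial ι K) (S : Set A) hz
  rw [mul_comm]
  exact Submodule.smul_mem _ p hz'

lemma isTranscendenceBasis_of_finite_aeval [Nontrivial A] {y : ι → A}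
    (hy : AlgebraicIndependent K y)
    (hfin : (aeval y : MvPolynomial ι K →ₐ[K] A).Finite) : IsTranscendenceBasis K y := by
  let _ : Algebra (MvPolynomial ι K) A := (aeval y).toAlgebra
  have : IsScalarTower K (MvPolynomial ι K) A :=
    IsScalarTower.of_algebraMap_eq fun c => (AlgHom.commutes (aeval y) c).symm
  have : Module.Finite (MvPolynomial ι K) A := hfin
  have : FaithfulSMul (MvPolynomial ι K) A := (faithfulSMul_iff_algebraMap_injective _ _).2 hy
  convert (IsTranscendenceBasis.mvPolynomial ι K).algebraMap_comp (A := A) using 1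
  ext i
  exact (aeval_X y i).symm

theorem pow_mul_finrank_le_of_algebraicIndependent [IsAlgClosed K] [CharZero K] [IsDomain A]
    {r : ℕ} {y : Fin r → A} (hy : AlgebraicIndependent K y)
    (hfin : (aeval y : MvPolynomial (Fin r) K →ₐ[K] A).Finite)
    {U : Submodule K A} (hU : U.FG) {k : ℕ} (hk : 0 < k) :
    k ^ r * Module.finrank K U ≤ Module.finrank K ↥(U ^ k * affineForms K y ^ (r * k)) := by
  let _ : Algebra (MvPolynomial (Fin r) K) A := (aeval y).toAlgebra
  have : Module.Finite (MvPolynomial (Fin r) K) A := hfin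
  have : IsScalarTower K (MvPolynomial (Fin r) K) A :=
    IsScalarTower.of_algebraMap_eq fun c => (AlgHom.commutes (aeval y) c).symm
  have : FaithfulSMul (MvPolynomial (Fin r) K) A :=
    (faithfulSMul_iff_algebraMap_injective _ _).2 hy
  have hX : (fun i => algebraMap (MvPolynomial (Fin r) K) A (X i)) = y :=
    funext fun i => aeval_X y i
  rw [← hX]
  exact pow_mul_finrank_le_finrank_pow_mul hU hk

end AffineForms

section TranscendenceDegree

variable {K A : Type*} [Field K] [CommRing A] [IsDomain A] [Algebra K A] {q : Ideal A} [q.IsPrime]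

theorem trdeg_quotient_lt (hA : Algebra.trdeg K A < Cardinal.aleph0) (hq : q ≠ ⊥) :
    Algebra.trdeg K (A ⧸ q) < Algebra.trdeg K A := by
  by_contra! hle
  have : FaithfulSMul K (A ⧸ q) :=
    (faithfulSMul_iff_algebraMap_injective _ _).2 (algebraMap K (A ⧸ q)).injective
  obtain ⟨ι, x, hx⟩ := exists_isTranscendenceBasis' K (A ⧸ q)
  let y (i : ι) : A := Function.surjInv Ideal.Quotient.mk_surjective (x i)
  have hyx : Ideal.Quotient.mkₐ K q ∘ y = x := funext fun i => Function.surjInv_eq _ _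
  have hy : AlgebraicIndependent K y :=
    AlgebraicIndependent.of_comp (Ideal.Quotient.mkₐ K q) (hyx ▸ hx.1)
  have hbasis := (hy.isTranscendenceBasis_of_trdeg_le hA
    (hle.trans_eq hx.cardinalMk_eq_trdeg.symm)).isAlgebraic
  obtain ⟨g, hgq, hg⟩ := (Submodule.ne_bot_iff q).1 hq
  obtain ⟨⟨s, hs⟩, hsq, hs0⟩ := (Submodule.ne_bot_iff _).1
    (Ideal.comap_ne_bot_of_algebraic_mem hg hgq (hbasis.isAlgebraic g))
  rw [Algebra.adjoin_range_eq_range_aeval] at hs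
  obtain ⟨p, rfl⟩ := hs
  have hxp : aeval x p = 0 := by
    rw [← hyx]
    refine (comp_aeval_apply (f := y) (Ideal.Quotient.mkₐ K q) p).symm.trans ?_
    exact Ideal.Quotient.eq_zero_iff_mem.2 hsq
  obtain rfl : p = 0 := (injective_iff_map_eq_zero _).1 hx.1 p hxp
  exact hs0 (Subtype.ext (map_zero _))

lemma exists_prime_under_eq_span_of_mem_minimalPrimes {B : Type*} [CommRing B] [IsDomain B]
    [UniqueFactorizationMonoid B] [IsNoetherianRing A] [Algebra B A] [FaithfulSMul B A]
    [Algebra.IsIntegral B A] {g : A} (hg : g ≠ 0) (hq : q ∈ (Ideal.span {g}).minimalPrimes) :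
    ∃ b, Prime b ∧ q.under B = Ideal.span {b} := by
  have hq0 : q.under B ≠ ⊥ := fun h => hg <| by
    simpa [Ideal.eq_bot_of_comap_eq_bot h] using hq.1.2 (Ideal.subset_span rfl)
  obtain ⟨b, hbq, hb⟩ :=
    Ideal.IsPrime.exists_mem_prime_of_ne_bot (I := q.under B) inferInstance hq0
  refine ⟨b, hb, ((Ideal.span_singleton_le_iff_mem _).2 hbq).eq_or_lt.elim Eq.symm fun hlt => ?_⟩
  exfalso
  have : (Ideal.span {b}).IsPrime := (Ideal.span_singleton_prime hb.ne_zero).2 hb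
  have : q.LiesOver (q.under B) := ⟨rfl⟩
  obtain ⟨P, hPq, hP, hPb⟩ := Ideal.exists_ideal_lt_liesOver_of_lt q hlt
  have hP0 : ⊥ < P := bot_lt_iff_ne_bot.2 <| by
    rintro rfl
    have : b ∈ (⊥ : Ideal A).under B := hPb.over ▸ Ideal.mem_span_singleton_self b
    exact hb.ne_zero (FaithfulSMul.algebraMap_injective B A (by simpa using this))
  have hqheight := Ideal.height_le_one_of_isPrincipal_of_mem_minimalPrimes _ _ hq
  have : (⊥ : Ideal A).IsPrime := Ideal.isPrime_bot
  have hPheight := Ideal.height_add_one_le_of_lt_of_isPrime hP0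
  have hqheight' := (add_le_add_left hPheight 1).trans
    ((Ideal.height_add_one_le_of_lt_of_isPrime hPq).trans hqheight)
  exact absurd (by simpa using hqheight' : (1 : ℕ∞) + 1 ≤ 1) (by decide)

lemma exists_forall_rename_mem_span_singleton {σ : Type*} {b : MvPolynomial σ K} (hb0 : b ≠ 0)
    (hb : ¬ IsUnit b) :
    ∃ i, ∀ p : MvPolynomial {j // j ≠ i} K, rename Subtype.val p ∈ Ideal.span {b} → p = 0 := by
  classical
  obtain ⟨i, hi⟩ : b.vars.Nonempty := Finset.nonempty_iff_ne_empty.2 fun h => by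
    rw [vars_eq_empty_iff_eq_C] at h
    have hc : coeff 0 b ≠ 0 := fun hc => hb0 (by rw [h, hc, C_0])
    exact hb (h ▸ hc.isUnit.map C)
  refine ⟨i, fun p hp => by_contra fun hp0 => ?_⟩
  obtain ⟨c, hc⟩ := Ideal.mem_span_singleton.1 hp
  have hp0' : rename Subtype.val p ≠ (0 : MvPolynomial σ K) :=
    (map_ne_zero_iff _ (rename_injective _ Subtype.val_injective)).2 hp0
  have hdegree := degreeOf_mul_eq (n := i) hb0 (right_ne_zero_of_mul (hc ▸ hp0'))
  have hvars : i ∉ (rename Subtype.val p : MvPolynomial σ K).vars := fun h => by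
    simpa using vars_rename _ p h
  rw [mem_vars_iff_degreeOf_ne_zero, not_not] at hvars
  rw [← hc, hvars] at hdegree
  have := mem_vars_iff_degreeOf_ne_zero.1 hi
  omega

theorem trdeg_eq_trdeg_quotient_add_one [Algebra.FiniteType K A] {g : A} (hg : g ≠ 0)
    (hq : q ∈ (Ideal.span {g}).minimalPrimes) :
    Algebra.trdeg K A = Algebra.trdeg K (A ⧸ q) + 1 := by
  have : IsNoetherianRing A := Algebra.FiniteType.isNoetherianRing K A
  obtain ⟨r, φ, hφ, hφint⟩ := exists_integral_inj_algHom_of_fg K A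
  let _ : Algebra (MvPolynomial (Fin r) K) A := φ.toAlgebra
  have : IsScalarTower K (MvPolynomial (Fin r) K) A :=
    IsScalarTower.of_algebraMap_eq fun c => (AlgHom.commutes φ c).symm
  have : FaithfulSMul (MvPolynomial (Fin r) K) A := (faithfulSMul_iff_algebraMap_injective _ _).2 hφ
  have : Algebra.IsIntegral (MvPolynomial (Fin r) K) A := ⟨hφint⟩
  have hr : Algebra.trdeg K A = r := by
    have hX := (IsTranscendenceBasis.mvPolynomial (Fin r) K).algebraMap_comp (A := A)
    simpa using hX.lift_cardinalMk_eq_trdeg.symm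
  obtain ⟨b, hb, hbq⟩ :=
    exists_prime_under_eq_span_of_mem_minimalPrimes (B := MvPolynomial (Fin r) K) hg hq
  obtain ⟨i, hi⟩ := exists_forall_rename_mem_span_singleton hb.ne_zero hb.not_isUnit
  let ψ : MvPolynomial (Fin r) K →ₐ[K] A ⧸ q := (Ideal.Quotient.mkₐ K q).comp φ
  let z (j : {j // j ≠ i}) : A ⧸ q := ψ (X j)
  have hψz : ψ.comp (rename Subtype.val) = aeval z := algHom_ext fun j => by simp [z]
  have hz : AlgebraicIndependent K z := by
    refine (injective_iff_map_eq_zero _).2 fun p hp => hi p ?_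
    rw [← hψz] at hp
    rw [← hbq, Ideal.mem_comap]
    exact Ideal.Quotient.eq_zero_iff_mem.1 hp
  have hle : ((r - 1 : ℕ) : Cardinal) ≤ Algebra.trdeg K (A ⧸ q) := by
    simpa using hz.lift_cardinalMk_le_trdeg
  have hlt : Algebra.trdeg K (A ⧸ q) < r := hr ▸ trdeg_quotient_lt
    trdeg_lt_aleph0_of_finiteType fun h => hg (by
      simpa [h] using hq.1.2 (Ideal.mem_span_singleton_self g))
  obtain ⟨t, ht⟩ := Cardinal.lt_aleph0.1 (hlt.trans (Cardinal.natCast_lt_aleph0))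
  rw [ht] at hle hlt ⊢
  rw [hr]
  norm_cast at hle hlt ⊢
  omega

end TranscendenceDegree

section PrimeDim

variable {K : Type*} [Field K] {n : ℕ} {P Q : Ideal (MvPolynomial (Fin n) K)}

/-- The dimension of the zero set of a prime ideal `P`, as the transcendence degree of its
coordinate ring. -/
def primeDim (P : Ideal (MvPolynomial (Fin n) K)) : ℕ :=
  Cardinal.toNat (Algebra.trdeg K (MvPolynomial (Fin n) K ⧸ P))

lemma natCast_primeDim (P : Ideal (MvPolynomial (Fin n) K)) :
    (primeDim P : Cardinal) = Algebra.trdeg K (MvPolynomial (Fin n) K ⧸ P) :=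
  Cardinal.cast_toNat_of_lt_aleph0 trdeg_lt_aleph0_of_finiteType

lemma primeDim_bot : primeDim (⊥ : Ideal (MvPolynomial (Fin n) K)) = n := by
  have e := (AlgEquiv.quotientBot K (MvPolynomial (Fin n) K)).trdeg_eq
  simp [primeDim, e]

lemma trdeg_quotient_eq_of_le (h : P ≤ Q) :
    Algebra.trdeg K (MvPolynomial (Fin n) K ⧸ Q) =
      Algebra.trdeg K ((MvPolynomial (Fin n) K ⧸ P) ⧸ Q.map (Ideal.Quotient.mk P)) :=
  (DoubleQuot.quotQuotEquivQuotOfLEₐ K h).symm.trdeg_eq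

lemma isPrime_map_quotientMk [Q.IsPrime] (h : P ≤ Q) : (Q.map (Ideal.Quotient.mk P)).IsPrime :=
  Ideal.map_isPrime_of_surjective Ideal.Quotient.mk_surjective (by simpa using h)

variable [P.IsPrime] [Q.IsPrime]

lemma primeDim_lt_of_lt (h : P < Q) : primeDim Q < primeDim P := by
  have := isPrime_map_quotientMk h.le
  have hne : Q.map (Ideal.Quotient.mk P) ≠ ⊥ := by
    simpa [Ideal.map_eq_bot_iff_le_ker] using h.not_ge
  have hlt := trdeg_quotient_lt (K := K) trdeg_lt_aleph0_of_finiteType hne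
  rwa [← trdeg_quotient_eq_of_le h.le, ← natCast_primeDim, ← natCast_primeDim,
    Nat.cast_lt] at hlt

lemma primeDim_le_of_le (h : P ≤ Q) : primeDim Q ≤ primeDim P :=
  h.eq_or_lt.elim (fun e => e ▸ le_rfl) fun hlt => (primeDim_lt_of_lt hlt).le

lemma eq_of_le_of_primeDim_le (h : P ≤ Q) (hdim : primeDim P ≤ primeDim Q) : P = Q :=
  h.eq_or_lt.resolve_right fun hlt => (primeDim_lt_of_lt hlt).not_ge hdim

lemma primeDim_le (P : Ideal (MvPolynomial (Fin n) K)) [P.IsPrime] : primeDim P ≤ n :=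
  (primeDim_le_of_le (bot_le (a := P))).trans_eq primeDim_bot

theorem primeDim_eq_add_one {g : MvPolynomial (Fin n) K} (hg : g ∉ P)
    (hPQ : Q ∈ (P ⊔ Ideal.span {g}).minimalPrimes) : primeDim P = primeDim Q + 1 := by
  have h : P ≤ Q := le_sup_left.trans hPQ.1.2
  have := isPrime_map_quotientMk h
  have hmin : Q.map (Ideal.Quotient.mk P) ∈ (Ideal.span {Ideal.Quotient.mk P g}).minimalPrimes := by
    rw [← image_singleton, ← Ideal.map_span,
      Ideal.minimalPrimes_map_of_surjective Ideal.Quotient.mk_surjective, Ideal.mk_ker, sup_comm]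
    exact mem_image_of_mem _ hPQ
  have hg0 : Ideal.Quotient.mk P g ≠ 0 := fun h0 => hg (Ideal.Quotient.eq_zero_iff_mem.1 h0)
  have hadd := trdeg_eq_trdeg_quotient_add_one (K := K) hg0 hmin
  rw [← trdeg_quotient_eq_of_le h, ← natCast_primeDim, ← natCast_primeDim] at hadd
  exact_mod_cast hadd

end PrimeDim

section HilbertFunction

variable {K : Type*} [Field K] {n : ℕ} {I J P Q : Ideal (MvPolynomial (Fin n) K)} {m M : ℕ}

/-- The classes modulo `I` of the polynomials of total degree at most `m`. -/
def degreeLE (I : Ideal (MvPolynomial (Fin n) K)) (m : ℕ) :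
    Submodule K (MvPolynomial (Fin n) K ⧸ I) :=
  (restrictTotalDegree (Fin n) K m).map (Ideal.Quotient.mkₐ K I).toLinearMap

/-- The affine Hilbert function of `I`. -/
def hilbertFn (I : Ideal (MvPolynomial (Fin n) K)) (m : ℕ) : ℕ :=
  Module.finrank K (degreeLE I m)

lemma mk_mem_degreeLE (I : Ideal (MvPolynomial (Fin n) K)) {f : MvPolynomial (Fin n) K}
    (hf : f.totalDegree ≤ m) : Ideal.Quotient.mk I f ∈ degreeLE I m :=
  ⟨f, (mem_restrictTotalDegree _ _ _).2 hf, rfl⟩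

lemma exists_totalDegree_le_of_mem_degreeLE {a : MvPolynomial (Fin n) K ⧸ I}
    (ha : a ∈ degreeLE I m) :
    ∃ f : MvPolynomial (Fin n) K, f.totalDegree ≤ m ∧ Ideal.Quotient.mk I f = a := by
  obtain ⟨f, hf, rfl⟩ := ha
  exact ⟨f, (mem_restrictTotalDegree _ _ _).1 hf, rfl⟩

lemma degreeLE_eq_affineForms_pow (I : Ideal (MvPolynomial (Fin n) K)) (m : ℕ) :
    degreeLE I m = affineForms K (Ideal.Quotient.mkₐ K I ∘ X) ^ m := by
  rw [degreeLE, ← affineForms_X_pow, Submodule.map_pow, map_affineForms]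

lemma degreeLE_fg (I : Ideal (MvPolynomial (Fin n) K)) (m : ℕ) : (degreeLE I m).FG := by
  rw [degreeLE_eq_affineForms_pow]
  exact (affineForms_fg _).pow m

instance : Module.Finite K (degreeLE I m) := Module.Finite.iff_fg.2 (degreeLE_fg I m)

instance : Module.Finite K (restrictTotalDegree (Fin n) K m) := by
  rw [← affineForms_X_pow]
  exact Module.Finite.iff_fg.2 ((affineForms_fg _).pow m)

lemma degreeLE_mono (I : Ideal (MvPolynomial (Fin n) K)) : Monotone (degreeLE I) := by
  intro a b hab
  simp only [degreeLE_eq_affineForms_pow]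
  exact submodule_pow_le_pow (one_mem_affineForms _) hab

lemma hilbertFn_mono (I : Ideal (MvPolynomial (Fin n) K)) : Monotone (hilbertFn I) :=
  fun _ _ hab => Submodule.finrank_mono (degreeLE_mono I hab)

lemma one_le_hilbertFn (hI : I ≠ ⊤) (m : ℕ) : 1 ≤ hilbertFn I m := by
  have : Nontrivial (MvPolynomial (Fin n) K ⧸ I) := Ideal.Quotient.nontrivial_iff.2 hI
  have h1 : (1 : MvPolynomial (Fin n) K ⧸ I) ∈ degreeLE I m := mk_mem_degreeLE I (by simp)
  refine Submodule.one_le_finrank_iff.2 fun h0 =>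
    one_ne_zero (α := MvPolynomial (Fin n) K ⧸ I) ?_
  rwa [h0, Submodule.mem_bot] at h1

lemma hilbertFn_add_finrank_inf (I : Ideal (MvPolynomial (Fin n) K)) (m : ℕ) :
    hilbertFn I m +
        Module.finrank K ↥(I.restrictScalars K ⊓ restrictTotalDegree (Fin n) K m) =
      Module.finrank K (restrictTotalDegree (Fin n) K m) := by
  set V := restrictTotalDegree (Fin n) K m
  set f := (Ideal.Quotient.mkₐ K I).toLinearMap.domRestrict V
  have hker : (LinearMap.ker f).map V.subtype = I.restrictScalars K ⊓ V := by
    ext p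
    simp [f, Ideal.Quotient.eq_zero_iff_mem, and_comm]
  rw [← hker, Submodule.finrank_map_subtype_eq, hilbertFn, degreeLE, ← LinearMap.range_domRestrict]
  exact f.finrank_range_add_finrank_ker

lemma hilbertFn_inf_le (I J : Ideal (MvPolynomial (Fin n) K)) (m : ℕ) :
    hilbertFn (I ⊓ J) m ≤ hilbertFn I m + hilbertFn J m := by
  have hI := hilbertFn_add_finrank_inf I m
  have hJ := hilbertFn_add_finrank_inf J m
  have hIJ := hilbertFn_add_finrank_inf (I ⊓ J) m
  set V := restrictTotalDegree (Fin n) K m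
  set I' := I.restrictScalars K ⊓ V
  set J' := J.restrictScalars K ⊓ V
  have hinf : (I ⊓ J).restrictScalars K ⊓ V = I' ⊓ J' := by
    rw [Submodule.restrictScalars_inf, inf_inf_distrib_right]
  rw [hinf] at hIJ
  have : Module.Finite K I' := Submodule.finiteDimensional_of_le inf_le_right
  have : Module.Finite K J' := Submodule.finiteDimensional_of_le inf_le_right
  have hdim := Submodule.finrank_sup_add_finrank_inf_eq I' J'
  have hle : Module.finrank K ↥(I' ⊔ J') ≤ Module.finrank K V :=
    Submodule.finrank_mono (sup_le inf_le_right inf_le_right)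
  omega

/-- Multiplication by `g` embeds the polynomials modulo `Q` into the classes of `J` modulo
`Q ⊓ J`. -/
lemma hilbertFn_add_hilbertFn_le_hilbertFn_inf [Q.IsPrime] {g : MvPolynomial (Fin n) K}
    (hgQ : g ∉ Q) (hgJ : g ∈ J) {δ : ℕ} (hδ : g.totalDegree ≤ δ) (M : ℕ) :
    hilbertFn J (M + δ) + hilbertFn Q M ≤ hilbertFn (Q ⊓ J) (M + δ) := by
  have hJ := hilbertFn_add_finrank_inf J (M + δ)
  have hQ := hilbertFn_add_finrank_inf Q M
  have hQJ := hilbertFn_add_finrank_inf (Q ⊓ J) (M + δ)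
  set V := restrictTotalDegree (Fin n) K (M + δ)
  set U := restrictTotalDegree (Fin n) K M
  let mulG := LinearMap.mulLeft K g
  have hg0 : g ≠ 0 := fun h => hgQ (h ▸ Q.zero_mem)
  have hinj : Function.Injective mulG := mul_right_injective₀ hg0
  set Q' := (Q ⊓ J).restrictScalars K ⊓ V
  have : Module.Finite K Q' := Submodule.finiteDimensional_of_le inf_le_right
  have hsup : U.map mulG ⊔ Q' ≤ J.restrictScalars K ⊓ V := by
    refine sup_le ?_ (inf_le_inf_right V fun f hf => hf.2)
    rintro _ ⟨f, hf, rfl⟩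
    refine ⟨J.mul_mem_right f hgJ, (mem_restrictTotalDegree _ _ _).2 ?_⟩
    have hf' := (mem_restrictTotalDegree _ _ _).1 hf
    exact (totalDegree_mul g f).trans (by omega)
  have hinf : U.map mulG ⊓ Q' ≤ (Q.restrictScalars K ⊓ U).map mulG := by
    rintro _ ⟨⟨f, hf, rfl⟩, ⟨hfQ, -⟩, -⟩
    exact ⟨f, ⟨(Ideal.IsPrime.mem_or_mem ‹_› hfQ).resolve_left hgQ, hf⟩, rfl⟩
  have : Module.Finite K ↥(J.restrictScalars K ⊓ V) :=
    Submodule.finiteDimensional_of_le inf_le_right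
  have : Module.Finite K ↥(Q.restrictScalars K ⊓ U) :=
    Submodule.finiteDimensional_of_le inf_le_right
  have hdim := Submodule.finrank_sup_add_finrank_inf_eq (U.map mulG) Q'
  rw [← (Submodule.equivMapOfInjective mulG hinj U).finrank_eq] at hdim
  have hsup' := Submodule.finrank_mono hsup
  have hinf' := (Submodule.finrank_mono hinf).trans (Submodule.finrank_map_le _ _)
  omega

lemma mul_hilbertFn_le [P.IsPrime] (hPJ : P ≤ J) {g : MvPolynomial (Fin n) K} (hgP : g ∉ P)
    (hgJ : g ∈ J) {δ : ℕ} (hδ : g.totalDegree ≤ δ) (m k : ℕ) :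
    k * hilbertFn J m ≤ hilbertFn P (m + k * δ) := by
  induction k with
  | zero => simp
  | succ k ih =>
    have hstep := hilbertFn_add_hilbertFn_le_hilbertFn_inf hgP hgJ hδ (m + k * δ)
    rw [inf_eq_left.2 hPJ] at hstep
    have hmono := hilbertFn_mono J (show m ≤ m + k * δ + δ by omega)
    rw [show m + (k + 1) * δ = m + k * δ + δ by ring]
    linarith [add_mul k 1 (hilbertFn J m)]

lemma exists_sum_hilbertFn_le_hilbertFn_inf (S : Finset (Ideal (MvPolynomial (Fin n) K)))
    (hprime : ∀ Q ∈ S, Q.IsPrime) (hincomp : ∀ Q ∈ S, ∀ Q' ∈ S, Q ≤ Q' → Q = Q') :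
    ∃ c, ∀ M, ∑ Q ∈ S, hilbertFn Q M ≤ hilbertFn (S.inf id) (M + c) := by
  classical
  induction S using Finset.induction_on with
  | empty => exact ⟨0, by simp⟩
  | insert Q S hQ ih =>
    simp only [Finset.mem_insert, forall_eq_or_imp] at hprime hincomp
    obtain ⟨c, hc⟩ := ih hprime.2 fun Q' h' => (hincomp.2 Q' h').2
    have := hprime.1
    have hnot : ¬ S.inf id ≤ Q := fun h => by
      obtain ⟨Q', hQ'S, hQ'⟩ := (Ideal.IsPrime.inf_le' ‹_›).1 h
      exact hQ (((hincomp.2 Q' hQ'S).1 hQ') ▸ hQ'S)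
    obtain ⟨g, hgS, hgQ⟩ := SetLike.not_le_iff_exists.1 hnot
    refine ⟨c + g.totalDegree, fun M => ?_⟩
    rw [Finset.sum_insert hQ, Finset.inf_insert, id]
    calc hilbertFn Q M + ∑ Q ∈ S, hilbertFn Q M
        ≤ hilbertFn Q (M + c) + hilbertFn (S.inf id) (M + c + g.totalDegree) :=
          add_le_add (hilbertFn_mono Q (by omega)) ((hc M).trans (hilbertFn_mono _ (by omega)))
      _ = hilbertFn (S.inf id) (M + c + g.totalDegree) + hilbertFn Q (M + c) := add_comm _ _
      _ ≤ hilbertFn (Q ⊓ S.inf id) (M + c + g.totalDegree) :=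
          hilbertFn_add_hilbertFn_le_hilbertFn_inf hgQ hgS le_rfl _
      _ = _ := by rw [add_assoc]

end HilbertFunction

section HilbertDegree

variable {K : Type*} [Field K] {n : ℕ} {P Q : Ideal (MvPolynomial (Fin n) K)} {m M : ℕ}

lemma affineForms_pow_le_degreeLE {ι : Type*} {y : ι → MvPolynomial (Fin n) K ⧸ P}
    (hy : ∀ i, y i ∈ degreeLE P 1) (m : ℕ) : affineForms K y ^ m ≤ degreeLE P m := by
  rw [degreeLE_eq_affineForms_pow]
  simp only [degreeLE_eq_affineForms_pow, pow_one] at hy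
  exact pow_le_pow_left' ((affineForms_le_iff (one_mem_affineForms _)).2 hy) m

section InfiniteField

variable [Infinite K]

lemma exists_degreeLE_le_mul_affineForms_pow (P : Ideal (MvPolynomial (Fin n) K)) [P.IsPrime] :
    ∃ y : Fin (primeDim P) → MvPolynomial (Fin n) K ⧸ P,
      (∀ i, y i ∈ degreeLE P 1) ∧ AlgebraicIndependent K y ∧
      (aeval y : MvPolynomial (Fin (primeDim P)) K →ₐ[K] MvPolynomial (Fin n) K ⧸ P).Finite ∧
      ∃ Z : Submodule K (MvPolynomial (Fin n) K ⧸ P), Z.FG ∧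
        ∀ M, degreeLE P M ≤ Z * affineForms K y ^ M := by
  obtain ⟨r, y, hy, hind, Z, hZ, hle⟩ :=
    exists_linear_noetherNormalization (K := K) (Ideal.Quotient.mkₐ K P ∘ X)
  simp only [← degreeLE_eq_affineForms_pow] at hle
  have hfin := finite_aeval_of_forall_mem_mul hZ fun a => by
    obtain ⟨f, rfl⟩ := Ideal.Quotient.mk_surjective a
    exact ⟨_, hle _ (mk_mem_degreeLE P le_rfl)⟩
  obtain rfl : r = primeDim P := by
    have hcard := (isTranscendenceBasis_of_finite_aeval hind hfin).lift_cardinalMk_eq_trdeg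
    rw [← natCast_primeDim] at hcard
    simpa using hcard
  refine ⟨y, fun i => ?_, hind, hfin, Z, hZ, hle⟩
  rw [degreeLE_eq_affineForms_pow, pow_one]
  exact hy i

lemma exists_hilbertFn_le_mul_pow (P : Ideal (MvPolynomial (Fin n) K)) [P.IsPrime] :
    ∃ C : ℕ, ∀ M, hilbertFn P M ≤ C * (M + 1) ^ primeDim P := by
  obtain ⟨y, -, -, -, Z, hZ, hle⟩ := exists_degreeLE_le_mul_affineForms_pow P
  refine ⟨Module.finrank K Z, fun M => ?_⟩
  have hyM := (affineForms_fg (K := K) y).pow M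
  calc hilbertFn P M
      ≤ Module.finrank K Z * Module.finrank K ↥(affineForms K y ^ M) :=
        (finrank_le_finrank_of_le_of_fg (hle M) (hZ.mul hyM)).trans (finrank_mul_le hZ hyM)
    _ ≤ Module.finrank K Z * (M + 1) ^ primeDim P := by
        simpa using Nat.mul_le_mul_left _ (finrank_affineForms_pow_le y M)

end InfiniteField

/-- The supremum of `hilbertFn P m / (m + 1) ^ primeDim P`. Up to constants depending on `n` only
it is the degree of the zero set of a prime ideal `P`, but it needs no Hilbert polynomial. -/
def hilbertDegree (P : Ideal (MvPolynomial (Fin n) K)) : ℝ :=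
  ⨆ m : ℕ, (hilbertFn P m : ℝ) / (m + 1) ^ primeDim P

lemma hilbertDegree_le {D : ℝ} (h : ∀ m : ℕ, (hilbertFn P m : ℝ) ≤ D * (m + 1) ^ primeDim P) :
    hilbertDegree P ≤ D :=
  ciSup_le fun m => (div_le_iff₀ (by positivity)).2 (h m)

lemma hilbertFn_le_hilbertDegree_mul_pow [Infinite K] (P : Ideal (MvPolynomial (Fin n) K))
    [P.IsPrime] (m : ℕ) : (hilbertFn P m : ℝ) ≤ hilbertDegree P * (m + 1) ^ primeDim P := by
  obtain ⟨C, hC⟩ := exists_hilbertFn_le_mul_pow P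
  refine (div_le_iff₀ (by positivity)).1 (le_ciSup_of_le ⟨C, ?_⟩ m le_rfl)
  rintro _ ⟨M, rfl⟩
  exact (div_le_iff₀ (by positivity)).2 (by exact_mod_cast hC M)

lemma one_le_hilbertDegree [Infinite K] (P : Ideal (MvPolynomial (Fin n) K)) [P.IsPrime] :
    1 ≤ hilbertDegree P := by
  have h1 : (1 : ℝ) ≤ hilbertFn P 0 := by exact_mod_cast one_le_hilbertFn (Ideal.IsPrime.ne_top') 0
  simpa using h1.trans (hilbertFn_le_hilbertDegree_mul_pow P 0)

lemma hilbertDegree_pos [Infinite K] (P : Ideal (MvPolynomial (Fin n) K)) [P.IsPrime] :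
    0 < hilbertDegree P :=
  one_pos.trans_le (one_le_hilbertDegree P)

variable [IsAlgClosed K] [CharZero K]

lemma pow_primeDim_mul_hilbertFn_le (P : Ideal (MvPolynomial (Fin n) K)) [P.IsPrime] {k : ℕ}
    (hk : 0 < k) (m : ℕ) :
    k ^ primeDim P * hilbertFn P m ≤ hilbertFn P (k * (m + primeDim P)) := by
  obtain ⟨y, hy, hind, hfin, -⟩ := exists_degreeLE_le_mul_affineForms_pow P
  refine (pow_mul_finrank_le_of_algebraicIndependent hind hfin (degreeLE_fg P m) hk).trans
    (Submodule.finrank_mono ?_)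
  refine (mul_le_mul' le_rfl (affineForms_pow_le_degreeLE hy _)).trans_eq ?_
  rw [degreeLE_eq_affineForms_pow, degreeLE_eq_affineForms_pow, degreeLE_eq_affineForms_pow,
    ← pow_mul, ← pow_add]
  congr 1
  ring

lemma hilbertFn_mul_pow_le (P : Ideal (MvPolynomial (Fin n) K)) [P.IsPrime] (hm : m ≤ M) :
    hilbertFn P m * (M + 1) ^ primeDim P ≤
      hilbertFn P M * (2 * (primeDim P + 1) * (m + 1)) ^ primeDim P := by
  set e := primeDim P
  rcases lt_or_ge M (m + e) with hM | hM
  · exact Nat.mul_le_mul (hilbertFn_mono P hm) (Nat.pow_le_pow_left (by nlinarith) _)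
  rcases Nat.eq_zero_or_pos (m + e) with h0 | h0
  · have he0 : e = 0 := by omega
    simpa [he0] using hilbertFn_mono P hm
  set k := M / (m + e)
  have hk : 1 ≤ k := (Nat.one_le_div_iff h0).2 hM
  have hMk : M + 1 ≤ k * (2 * (e + 1) * (m + 1)) := by
    calc M + 1 ≤ (k + 1) * (m + e) := by
          rw [mul_comm]
          exact Nat.lt_mul_div_succ M h0
      _ ≤ 2 * k * ((e + 1) * (m + 1)) := Nat.mul_le_mul (by omega) (by nlinarith)
      _ = k * (2 * (e + 1) * (m + 1)) := by ring
  calc hilbertFn P m * (M + 1) ^ e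
      ≤ hilbertFn P m * (k * (2 * (e + 1) * (m + 1))) ^ e := by gcongr
    _ = k ^ e * hilbertFn P m * (2 * (e + 1) * (m + 1)) ^ e := by rw [mul_pow]; ring
    _ ≤ hilbertFn P M * (2 * (e + 1) * (m + 1)) ^ e := by
        gcongr
        exact (pow_primeDim_mul_hilbertFn_le P hk m).trans
          (hilbertFn_mono P (Nat.div_mul_le_self _ _))

lemma hilbertDegree_mul_pow_le_of_le [P.IsPrime] {D : ℝ} (hD : 0 ≤ D)
    (h : hilbertDegree P * (m + 1) ^ primeDim P ≤ D * hilbertFn P m) (hm : m ≤ M) :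
    hilbertDegree P * (M + 1) ^ primeDim P ≤
      D * (2 * (primeDim P + 1)) ^ primeDim P * hilbertFn P M := by
  set e := primeDim P
  have hgrowth : (hilbertFn P m : ℝ) * (M + 1) ^ e ≤
      hilbertFn P M * (2 * (e + 1) * (m + 1)) ^ e := by
    exact_mod_cast hilbertFn_mul_pow_le P hm
  refine le_of_mul_le_mul_right ?_ (show (0 : ℝ) < (m + 1) ^ e by positivity)
  calc hilbertDegree P * (M + 1) ^ e * (m + 1) ^ e
      = hilbertDegree P * (m + 1) ^ e * (M + 1) ^ e := by ring
    _ ≤ D * hilbertFn P m * (M + 1) ^ e := by gcongr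
    _ ≤ D * (hilbertFn P M * (2 * (e + 1) * (m + 1)) ^ e) := by
        rw [mul_assoc]
        gcongr
    _ = D * (2 * (e + 1)) ^ e * hilbertFn P M * (m + 1) ^ e := by rw [mul_pow]; ring

lemma exists_forall_hilbertDegree_mul_pow_le (P : Ideal (MvPolynomial (Fin n) K)) [P.IsPrime] :
    ∃ m : ℕ, ∀ M, m ≤ M → hilbertDegree P * (M + 1) ^ primeDim P ≤
      2 * (2 * (primeDim P + 1)) ^ primeDim P * hilbertFn P M := by
  obtain ⟨m, hm⟩ := exists_lt_of_lt_ciSup (half_lt_self (hilbertDegree_pos P))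
  rw [← hilbertDegree, lt_div_iff₀ (by positivity)] at hm
  exact ⟨m, fun M => hilbertDegree_mul_pow_le_of_le zero_le_two (by linarith)⟩

end HilbertDegree

section Bezout

variable {K : Type*} [Field K] {n : ℕ}

lemma totalDegree_pos_of_mem_of_notMem {I J : Ideal (MvPolynomial (Fin n) K)} (hJ : J ≠ ⊤)
    {g : MvPolynomial (Fin n) K} (hgJ : g ∈ J) (hgI : g ∉ I) : 0 < g.totalDegree := by
  refine Nat.pos_of_ne_zero fun h => ?_
  obtain ⟨c, rfl⟩ : ∃ c, g = C c := ⟨_, totalDegree_eq_zero_iff_eq_C.1 h⟩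
  rcases eq_or_ne c 0 with rfl | hc
  · simp at hgI
  · exact hJ (J.eq_top_of_isUnit_mem hgJ ((isUnit_iff_ne_zero.2 hc).map C))

variable [IsAlgClosed K] [CharZero K] {P : Ideal (MvPolynomial (Fin n) K)} [P.IsPrime]
  {g : MvPolynomial (Fin n) K} {δ : ℕ}

lemma exists_forall_sum_hilbertDegree_mul_pow_le {S : Finset (Ideal (MvPolynomial (Fin n) K))}
    {e : ℕ} (hprime : ∀ Q ∈ S, Q.IsPrime) (hdim : ∀ Q ∈ S, primeDim Q = e) :
    ∃ c, ∀ M, c ≤ M → (∑ Q ∈ S, hilbertDegree Q) * (M + 1) ^ e ≤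
      2 * (2 * (e + 1)) ^ e * hilbertFn (S.inf id) (M + c) := by
  obtain ⟨c, hc⟩ := exists_sum_hilbertFn_le_hilbertFn_inf S hprime fun Q hQ Q' hQ' hle => by
    have := hprime Q hQ
    have := hprime Q' hQ'
    exact eq_of_le_of_primeDim_le hle (by rw [hdim Q hQ, hdim Q' hQ'])
  have hlarge : ∀ Q ∈ S, ∃ m : ℕ, ∀ M, m ≤ M →
      hilbertDegree Q * (M + 1) ^ e ≤ 2 * (2 * (e + 1)) ^ e * hilbertFn Q M := by
    intro Q hQ
    have := hprime Q hQ
    have h := exists_forall_hilbertDegree_mul_pow_le Q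
    rwa [hdim Q hQ] at h
  choose! m hm using hlarge
  refine ⟨S.sup m + c, fun M hM => ?_⟩
  calc (∑ Q ∈ S, hilbertDegree Q) * (M + 1) ^ e
      ≤ ∑ Q ∈ S, 2 * (2 * (e + 1)) ^ e * (hilbertFn Q M : ℝ) := by
        rw [Finset.sum_mul]
        exact Finset.sum_le_sum fun Q hQ =>
          hm Q hQ M ((Finset.le_sup hQ).trans ((Nat.le_add_right _ c).trans hM))
    _ = 2 * (2 * (e + 1)) ^ e * ((∑ Q ∈ S, hilbertFn Q M : ℕ) : ℝ) := by
        rw [Nat.cast_sum, Finset.mul_sum]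
    _ ≤ 2 * (2 * (e + 1)) ^ e * hilbertFn (S.inf id) (M + (S.sup m + c)) := by
        gcongr
        exact (hc M).trans (hilbertFn_mono _ (by omega))

/-- Compare both sides at a degree `M` for which `M + 1` is a large multiple `h * δ` of `δ`:
multiplication by the powers of `g` fits `h` copies of `hilbertFn J` into `hilbertFn P`. -/
theorem sum_hilbertDegree_le_of_primeDim_eq {e : ℕ} (hP : primeDim P = e + 1) (hgP : g ∉ P)
    (hδ : g.totalDegree ≤ δ) (hδ0 : 0 < δ) {S : Finset (Ideal (MvPolynomial (Fin n) K))}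
    (hprime : ∀ Q ∈ S, Q.IsPrime) (hdim : ∀ Q ∈ S, primeDim Q = e) (hle : ∀ Q ∈ S, P ≤ Q)
    (hg : ∀ Q ∈ S, g ∈ Q) :
    ∑ Q ∈ S, hilbertDegree Q ≤ 2 * (2 * (e + 1)) ^ e * 3 ^ (e + 1) * δ * hilbertDegree P := by
  obtain ⟨c, hc⟩ := exists_forall_sum_hilbertDegree_mul_pow_le hprime hdim
  set J := S.inf id
  have hPJ : P ≤ J := Finset.le_inf hle
  have hgJ : g ∈ J := (Ideal.span_singleton_le_iff_mem _).1
    (Finset.le_inf fun Q hQ => (Ideal.span_singleton_le_iff_mem _).2 (hg Q hQ))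
  set h := c + 1
  have hhδ : h ≤ h * δ := Nat.le_mul_of_pos_right _ hδ0
  obtain ⟨M, hM⟩ : ∃ M, M + 1 = h * δ := ⟨h * δ - 1, by omega⟩
  have hsum := hc M (by omega)
  rw [show (M : ℝ) + 1 = h * δ by exact_mod_cast hM] at hsum
  have hcopies : (h : ℝ) * hilbertFn J (M + c) ≤ hilbertDegree P * (3 * (h * δ)) ^ (e + 1) := by
    calc (h : ℝ) * hilbertFn J (M + c) ≤ hilbertFn P (M + c + h * δ) := by
          exact_mod_cast mul_hilbertFn_le hPJ hgP hgJ hδ (M + c) h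
      _ ≤ hilbertDegree P * ((M + c + h * δ : ℕ) + 1) ^ (e + 1) :=
          hP ▸ hilbertFn_le_hilbertDegree_mul_pow P _
      _ ≤ hilbertDegree P * (3 * (h * δ)) ^ (e + 1) := by
          have := hilbertDegree_pos P
          gcongr
          exact_mod_cast show M + c + h * δ + 1 ≤ 3 * (h * δ) by omega
  refine le_of_mul_le_mul_right ?_ (show (0 : ℝ) < h * (h * δ) ^ e by positivity)
  calc (∑ Q ∈ S, hilbertDegree Q) * (h * (h * δ) ^ e)
      = h * ((∑ Q ∈ S, hilbertDegree Q) * (h * δ) ^ e) := by ring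
    _ ≤ h * (2 * (2 * (e + 1)) ^ e * hilbertFn J (M + c)) := by gcongr
    _ = 2 * (2 * (e + 1)) ^ e * (h * hilbertFn J (M + c)) := by ring
    _ ≤ 2 * (2 * (e + 1)) ^ e * (hilbertDegree P * (3 * (h * δ)) ^ (e + 1)) := by gcongr
    _ = 2 * (2 * (e + 1)) ^ e * 3 ^ (e + 1) * δ * hilbertDegree P * (h * (h * δ) ^ e) := by
        rw [mul_pow (3 : ℝ), pow_succ ((h : ℝ) * δ)]
        ring

/-- The constant by which Bezout's inequality fails for `hilbertDegree` in place of the degree. -/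
def bezoutConst (n : ℕ) : ℝ := 2 * (2 * (n + 1)) ^ n * 3 ^ n

lemma one_le_bezoutConst (n : ℕ) : 1 ≤ bezoutConst n := by
  have h2 : (1 : ℝ) ≤ (2 * (n + 1)) ^ n := one_le_pow₀ (by linarith [n.cast_nonneg (α := ℝ)])
  have h3 : (1 : ℝ) ≤ 3 ^ n := one_le_pow₀ (by norm_num)
  unfold bezoutConst
  nlinarith

lemma bezoutConst_pos (n : ℕ) : 0 < bezoutConst n :=
  one_pos.trans_le (one_le_bezoutConst n)

lemma le_bezoutConst {e n : ℕ} (h : e + 1 ≤ n) :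
    2 * (2 * ((e : ℝ) + 1)) ^ e * 3 ^ (e + 1) ≤ bezoutConst n := by
  have hbase : (2 * ((e : ℝ) + 1)) ^ e ≤ (2 * ((n : ℝ) + 1)) ^ n := by
    calc (2 * ((e : ℝ) + 1)) ^ e ≤ (2 * ((n : ℝ) + 1)) ^ e := by gcongr; omega
      _ ≤ _ := pow_le_pow_right₀ (by linarith [n.cast_nonneg (α := ℝ)]) (by omega)
  unfold bezoutConst
  gcongr
  norm_num

theorem sum_hilbertDegree_le (hgP : g ∉ P) (hδ : g.totalDegree ≤ δ) (hδ0 : 0 < δ)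
    {S : Finset (Ideal (MvPolynomial (Fin n) K))} (hprime : ∀ Q ∈ S, Q.IsPrime)
    (hdim : ∀ Q ∈ S, primeDim P = primeDim Q + 1) (hle : ∀ Q ∈ S, P ≤ Q) (hg : ∀ Q ∈ S, g ∈ Q) :
    ∑ Q ∈ S, hilbertDegree Q ≤ bezoutConst n * δ * hilbertDegree P := by
  have := hilbertDegree_pos P
  rcases S.eq_empty_or_nonempty with rfl | ⟨Q₀, hQ₀⟩
  · have := bezoutConst_pos n
    rw [Finset.sum_empty]
    positivity
  have hQ : ∀ Q ∈ S, primeDim Q = primeDim Q₀ := fun Q hQ => by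
    have := hdim Q hQ
    have := hdim Q₀ hQ₀
    omega
  refine (sum_hilbertDegree_le_of_primeDim_eq (hdim Q₀ hQ₀) hgP hδ hδ0 hprime hQ hle hg).trans ?_
  gcongr
  exact le_bezoutConst (hdim Q₀ hQ₀ ▸ primeDim_le P)

lemma exists_minimalPrime_hilbertDegree_le {W : Ideal (MvPolynomial (Fin n) K)} [W.IsPrime]
    (hWP : W ≤ P) (hgP : g ∈ P) (hgW : g ∉ W) (hδ : g.totalDegree ≤ δ) :
    ∃ W' : Ideal (MvPolynomial (Fin n) K), W'.IsPrime ∧ W < W' ∧ W' ≤ P ∧ g ∈ W' ∧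
      primeDim W = primeDim W' + 1 ∧ hilbertDegree W' ≤ bezoutConst n * δ * hilbertDegree W := by
  obtain ⟨W', hW', hW'P⟩ := Ideal.exists_minimalPrimes_le
    (sup_le hWP ((Ideal.span_singleton_le_iff_mem P).2 hgP))
  have hprime : W'.IsPrime := hW'.1.1
  have hgW' : g ∈ W' := hW'.1.2 (Ideal.mem_sup_right (Ideal.mem_span_singleton_self g))
  have hWW' : W ≤ W' := le_sup_left.trans hW'.1.2
  have hdim := primeDim_eq_add_one hgW hW'
  have hδ0 := (totalDegree_pos_of_mem_of_notMem (Ideal.IsPrime.ne_top') hgP hgW).trans_le hδ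
  refine ⟨W', hprime, hWW'.lt_of_ne (by rintro rfl; exact hgW hgW'), hW'P, hgW', hdim, ?_⟩
  simpa using sum_hilbertDegree_le hgW hδ hδ0 (S := {W'}) (by simpa) (by simpa) (by simpa)
    (by simpa)

end Bezout

section LowDegreeSpan

variable {K : Type*} [Field K] {n : ℕ} {I J : Ideal (MvPolynomial (Fin n) K)} {a b : ℕ}

/-- The ideal generated by the elements of `I` of total degree at most `δ`. A prime `P` is a minimal
prime of `lowDegreeSpan P δ` when its zero set is an irreducible component of an algebraic set cut
out by equations of degree at most `δ`. -/
def lowDegreeSpan (I : Ideal (MvPolynomial (Fin n) K)) (δ : ℕ) : Ideal (MvPolynomial (Fin n) K) :=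
  Ideal.span {f | f ∈ I ∧ f.totalDegree ≤ δ}

lemma lowDegreeSpan_le_iff {δ : ℕ} :
    lowDegreeSpan I δ ≤ J ↔ ∀ f ∈ I, f.totalDegree ≤ δ → f ∈ J :=
  Ideal.span_le.trans ⟨fun h _ hf hδ => h ⟨hf, hδ⟩, fun h f hf => h f hf.1 hf.2⟩

lemma not_lowDegreeSpan_le_iff {δ : ℕ} :
    ¬ lowDegreeSpan I δ ≤ J ↔ ∃ f ∈ I, f.totalDegree ≤ δ ∧ f ∉ J := by
  simp [lowDegreeSpan_le_iff]

lemma lowDegreeSpan_le (I : Ideal (MvPolynomial (Fin n) K)) (δ : ℕ) : lowDegreeSpan I δ ≤ I :=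
  lowDegreeSpan_le_iff.2 fun _ hf _ => hf

lemma lowDegreeSpan_mono (hab : a ≤ b) : lowDegreeSpan I a ≤ lowDegreeSpan I b :=
  Ideal.span_mono fun _ hf => ⟨hf.1, hf.2.trans hab⟩

lemma lowDegreeSpan_le_lowDegreeSpan {δ : ℕ} (h : lowDegreeSpan I δ ≤ J) :
    lowDegreeSpan I δ ≤ lowDegreeSpan J δ :=
  Ideal.span_mono fun f hf => ⟨lowDegreeSpan_le_iff.1 h f hf.1 hf.2, hf.2⟩

lemma mem_minimalPrimes_lowDegreeSpan {Q : Ideal (MvPolynomial (Fin n) K)} {δ : ℕ}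
    (hQ : Q ∈ (lowDegreeSpan I δ).minimalPrimes) : Q ∈ (lowDegreeSpan Q δ).minimalPrimes :=
  ⟨⟨hQ.1.1, lowDegreeSpan_le Q δ⟩, fun _ hQ' hle =>
    hQ.2 ⟨hQ'.1, (lowDegreeSpan_le_lowDegreeSpan hQ.1.2).trans hQ'.2⟩ hle⟩

lemma lowDegreeSpan_zero (hI : I ≠ ⊤) : lowDegreeSpan I 0 = ⊥ := by
  refine le_bot_iff.1 (lowDegreeSpan_le_iff.2 fun f hf hδ => ?_)
  by_contra hbot
  exact (totalDegree_pos_of_mem_of_notMem hI hf hbot).ne' (Nat.le_zero.1 hδ)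

lemma hilbertFn_le_of_lowDegreeSpan_le {m : ℕ} (h : lowDegreeSpan I m ≤ J) :
    hilbertFn J m ≤ hilbertFn I m := by
  have hI := hilbertFn_add_finrank_inf I m
  have hJ := hilbertFn_add_finrank_inf J m
  have hle : I.restrictScalars K ⊓ restrictTotalDegree (Fin n) K m ≤
      J.restrictScalars K ⊓ restrictTotalDegree (Fin n) K m := fun f hf =>
    ⟨lowDegreeSpan_le_iff.1 h f hf.1 ((mem_restrictTotalDegree _ _ _).1 hf.2), hf.2⟩
  have : Module.Finite K ↥(J.restrictScalars K ⊓ restrictTotalDegree (Fin n) K m) :=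
    Submodule.finiteDimensional_of_le inf_le_right
  have := Submodule.finrank_mono hle
  omega

lemma hilbertFn_finset_inf_le {ι : Type*} (T : Finset ι)
    (I : ι → Ideal (MvPolynomial (Fin n) K)) (m : ℕ) :
    hilbertFn (T.inf I) m ≤ ∑ t ∈ T, hilbertFn (I t) m := by
  classical
  induction T using Finset.induction_on with
  | empty =>
    have : Subsingleton (MvPolynomial (Fin n) K ⧸ (⊤ : Ideal (MvPolynomial (Fin n) K))) :=
      Ideal.Quotient.subsingleton_iff.2 rfl
    rw [Finset.inf_empty, Finset.sum_empty, hilbertFn, Module.finrank_zero_of_subsingleton]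
  | insert a T ha ih =>
    rw [Finset.inf_insert, Finset.sum_insert ha]
    exact (hilbertFn_inf_le _ _ m).trans (Nat.add_le_add_left ih _)

lemma exists_mem_forall_notMem_of_sum_hilbertFn_lt {ι : Type*} {T : Finset ι}
    {I : ι → Ideal (MvPolynomial (Fin n) K)} {m : ℕ}
    (h : ∑ t ∈ T, hilbertFn (I t) m < hilbertFn J m) :
    ∃ f : MvPolynomial (Fin n) K, f.totalDegree ≤ m ∧ (∀ t ∈ T, f ∈ I t) ∧ f ∉ J := by
  have hlt := (hilbertFn_finset_inf_le T I m).trans_lt h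
  obtain ⟨f, hfT, hfm, hfJ⟩ :=
    not_lowDegreeSpan_le_iff.1 (mt hilbertFn_le_of_lowDegreeSpan_le hlt.not_ge)
  exact ⟨f, hfm, fun t ht => (Finset.inf_le ht : T.inf I ≤ I t) hfT, hfJ⟩

end LowDegreeSpan

section ChardinPhilippon

variable {K : Type*} [Field K] [IsAlgClosed K] [CharZero K] {n : ℕ}
  {P : Ideal (MvPolynomial (Fin n) K)} [P.IsPrime]

/-- Cut `W` by one equation of `P` at a time; at codimension `i + 1` over `P` one of degree at most
`δ i` is available. -/
theorem hilbertDegree_le_prod {δ : ℕ → ℕ} {k : ℕ}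
    (hδ : ∀ i < k, ∀ W : Ideal (MvPolynomial (Fin n) K), W.IsPrime → W ≤ P →
      primeDim W = primeDim P + (i + 1) → ¬ lowDegreeSpan P (δ i) ≤ W)
    {W : Ideal (MvPolynomial (Fin n) K)} [W.IsPrime] (hWP : W ≤ P)
    (hdim : primeDim W = primeDim P + k) :
    hilbertDegree P ≤ bezoutConst n ^ k * (∏ i ∈ Finset.range k, (δ i : ℝ)) * hilbertDegree W := by
  induction k generalizing W with
  | zero =>
    obtain rfl := eq_of_le_of_primeDim_le hWP hdim.le
    simp
  | succ k ih =>
    obtain ⟨f, hfP, hfδ, hfW⟩ :=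
      not_lowDegreeSpan_le_iff.1 (hδ k (Nat.lt_succ_self k) W ‹_› hWP hdim)
    obtain ⟨W', hW', -, hW'P, -, hdim', hdeg⟩ :=
      exists_minimalPrime_hilbertDegree_le hWP hfP hfW hfδ
    have := bezoutConst_pos n
    calc hilbertDegree P
        ≤ bezoutConst n ^ k * (∏ i ∈ Finset.range k, (δ i : ℝ)) * hilbertDegree W' :=
          ih (fun i hi => hδ i (hi.trans (Nat.lt_succ_self k))) hW'P (by omega)
      _ ≤ bezoutConst n ^ k * (∏ i ∈ Finset.range k, (δ i : ℝ)) *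
            (bezoutConst n * δ k * hilbertDegree W) := by gcongr
      _ = _ := by rw [Finset.prod_range_succ, pow_succ]; ring

lemma hilbertDegree_le_of_mem_minimalPrimes {δ k : ℕ}
    (hP : P ∈ (lowDegreeSpan P δ).minimalPrimes) {W : Ideal (MvPolynomial (Fin n) K)} [W.IsPrime]
    (hWP : W ≤ P) (hdim : primeDim W = primeDim P + k) :
    hilbertDegree P ≤ (bezoutConst n * δ) ^ k * hilbertDegree W := by
  refine (hilbertDegree_le_prod (δ := fun _ => δ) (fun i _ W hW hWP hdim hle => ?_)
    hWP hdim).trans_eq (by simp [mul_pow])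
  have := primeDim_le_of_le (hP.2 ⟨hW, hle⟩ hWP)
  omega

lemma hilbertDegree_mul_pow_le_mul_bezoutConst {m M : ℕ} {D : ℝ} (hD : 0 ≤ D)
    (h : hilbertDegree P * (m + 1) ^ primeDim P ≤ D * hilbertFn P m) (hm : m ≤ M) :
    hilbertDegree P * (M + 1) ^ primeDim P ≤ D * bezoutConst n * hilbertFn P M := by
  refine (hilbertDegree_mul_pow_le_of_le hD h hm).trans ?_
  have hdim := primeDim_le P
  gcongr
  calc (2 * ((primeDim P : ℝ) + 1)) ^ primeDim P ≤ (2 * ((n : ℝ) + 1)) ^ primeDim P := by gcongr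
    _ ≤ (2 * ((n : ℝ) + 1)) ^ n := pow_le_pow_right₀ (by linarith [n.cast_nonneg (α := ℝ)]) hdim
    _ ≤ 2 * (2 * ((n : ℝ) + 1)) ^ n * 3 ^ n := by
        have h3 : (1 : ℝ) ≤ 3 ^ n := one_le_pow₀ (by norm_num)
        have : (0 : ℝ) < (2 * ((n : ℝ) + 1)) ^ n := by positivity
        nlinarith

omit [IsAlgClosed K] [CharZero K] in
lemma hilbertDegree_bot_le_one : hilbertDegree (⊥ : Ideal (MvPolynomial (Fin n) K)) ≤ 1 := by
  refine hilbertDegree_le fun m => ?_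
  rw [primeDim_bot, one_mul]
  exact_mod_cast (Submodule.finrank_map_le _ _).trans
    ((finrank_restrictTotalDegree_le (Fin n) K m).trans_eq (by simp))

lemma hilbertDegree_mul_pow_le_of_lt {d k : ℕ} {D : ℝ} (hD : 0 ≤ D)
    (hP : P ∈ (lowDegreeSpan P (d + 1)).minimalPrimes) {Q : Ideal (MvPolynomial (Fin n) K)}
    (hQ : Q ∈ (lowDegreeSpan P d).minimalPrimes) (hQP : Q ≤ P)
    (hdim : primeDim Q = primeDim P + k)
    (hQd : hilbertDegree Q * (d + 1) ^ primeDim Q ≤ D * hilbertFn Q d) :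
    hilbertDegree P * (d + 1) ^ primeDim P ≤ bezoutConst n ^ k * D * hilbertFn P d := by
  have := hQ.1.1
  have hB := bezoutConst_pos n
  calc hilbertDegree P * ((d : ℝ) + 1) ^ primeDim P
      ≤ (bezoutConst n * (d + 1 : ℕ)) ^ k * hilbertDegree Q * ((d : ℝ) + 1) ^ primeDim P := by
        gcongr
        exact hilbertDegree_le_of_mem_minimalPrimes hP hQP hdim
    _ = bezoutConst n ^ k * (hilbertDegree Q * (d + 1) ^ primeDim Q) := by
        rw [hdim, mul_pow, pow_add]; push_cast; ring
    _ ≤ bezoutConst n ^ k * (D * hilbertFn P d) := by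
        have hQP : (hilbertFn Q d : ℝ) ≤ hilbertFn P d :=
          mod_cast hilbertFn_le_of_lowDegreeSpan_le hQ.1.2
        exact mul_le_mul_of_nonneg_left (hQd.trans (by gcongr)) (by positivity)
    _ = _ := (mul_assoc _ _ _).symm

lemma hilbertDegree_bot_mul_pow_le (m : ℕ) :
    hilbertDegree (⊥ : Ideal (MvPolynomial (Fin n) K)) *
        (m + 1) ^ primeDim (⊥ : Ideal (MvPolynomial (Fin n) K)) ≤
      bezoutConst n * hilbertFn (⊥ : Ideal (MvPolynomial (Fin n) K)) m := by
  have h0 : hilbertDegree (⊥ : Ideal (MvPolynomial (Fin n) K)) *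
      ((0 : ℕ) + 1) ^ primeDim (⊥ : Ideal (MvPolynomial (Fin n) K)) ≤
        1 * hilbertFn (⊥ : Ideal (MvPolynomial (Fin n) K)) 0 := by
    rw [Nat.cast_zero, zero_add, one_pow, mul_one, one_mul]
    exact hilbertDegree_bot_le_one.trans (mod_cast one_le_hilbertFn bot_ne_top 0)
  have : (⊥ : Ideal (MvPolynomial (Fin n) K)).IsPrime := Ideal.isPrime_bot
  simpa only [one_mul] using hilbertDegree_mul_pow_le_mul_bezoutConst zero_le_one h0 m.zero_le

/-- A lower bound of Chardin and Philippon. If `P` is not yet a minimal prime at degree `d`, it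
inherits the bound at `d` from a larger component with ideal `Q ≤ P`, since `P` and `Q` have the
same elements of degree at most `d` and the degree of `P` is bounded by Bezout's inequality. -/
theorem hilbertDegree_mul_pow_le {δ m : ℕ} (hP : P ∈ (lowDegreeSpan P δ).minimalPrimes)
    (hm : δ ≤ m) : hilbertDegree P * (m + 1) ^ primeDim P ≤
      bezoutConst n ^ ((n + 1) * (n - primeDim P + 1)) * hilbertFn P m := by
  have hB := one_le_bezoutConst n
  induction δ generalizing P m with
  | zero =>
    have hbot := lowDegreeSpan_zero (Ideal.IsPrime.ne_top ‹P.IsPrime›)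
    obtain rfl : ⊥ = P :=
      le_antisymm bot_le (hP.2 ⟨Ideal.isPrime_bot, hbot.le⟩ bot_le)
    refine (hilbertDegree_bot_mul_pow_le m).trans ?_
    gcongr
    exact le_self_pow₀ hB (by positivity)
  | succ d ih =>
    by_cases hPd : P ∈ (lowDegreeSpan P d).minimalPrimes
    · exact ih hPd (by omega)
    obtain ⟨Q, hQ, hQP⟩ := Ideal.exists_minimalPrimes_le (lowDegreeSpan_le P d)
    have := hQ.1.1
    have hlt : primeDim P < primeDim Q :=
      primeDim_lt_of_lt (hQP.lt_of_ne fun h => hPd (h ▸ hQ))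
    obtain ⟨k, hk⟩ := Nat.exists_eq_add_of_le hlt.le
    have hd := hilbertDegree_mul_pow_le_of_lt (by positivity) hP hQ hQP hk
      (ih (mem_minimalPrimes_lowDegreeSpan hQ) le_rfl)
    refine (hilbertDegree_mul_pow_le_mul_bezoutConst (by positivity) hd (by omega)).trans ?_
    gcongr
    rw [← pow_add, ← pow_succ]
    refine pow_le_pow_right₀ hB ?_
    have hn := primeDim_le Q
    obtain ⟨c, hc⟩ := Nat.exists_eq_add_of_le hn
    obtain rfl | ⟨k, rfl⟩ : k = 0 ∨ ∃ j, k = j + 1 := by cases k <;> simp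
    · omega
    rw [show n - primeDim P = c + (k + 1) by omega, show n - primeDim Q = c by omega]
    nlinarith

end ChardinPhilippon

section DimAlong

variable {K : Type*} [Field K] {n : ℕ} {I J P : Ideal (MvPolynomial (Fin n) K)} {e : ℕ}

/-- The dimension of the zero set of `I` along the zero set of the prime `P`: the largest dimension
of a prime between `I` and `P`, provided that `I ≤ P`. -/
def dimAlong (I P : Ideal (MvPolynomial (Fin n) K)) : ℕ :=
  sSup (primeDim '' {Q | Q.IsPrime ∧ I ≤ Q ∧ Q ≤ P})

lemma bddAbove_primeDim_image (I P : Ideal (MvPolynomial (Fin n) K)) :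
    BddAbove (primeDim '' {Q | Q.IsPrime ∧ I ≤ Q ∧ Q ≤ P}) :=
  ⟨n, by rintro _ ⟨Q, ⟨hQ, -, -⟩, rfl⟩; exact primeDim_le Q⟩

lemma primeDim_le_dimAlong {Q : Ideal (MvPolynomial (Fin n) K)} [Q.IsPrime] (hIQ : I ≤ Q)
    (hQP : Q ≤ P) : primeDim Q ≤ dimAlong I P :=
  le_csSup (bddAbove_primeDim_image I P) ⟨Q, ⟨‹_›, hIQ, hQP⟩, rfl⟩

lemma dimAlong_le_iff :
    dimAlong I P ≤ e ↔ ∀ Q : Ideal (MvPolynomial (Fin n) K), Q.IsPrime → I ≤ Q → Q ≤ P →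
      primeDim Q ≤ e := by
  refine ⟨fun h Q _ hIQ hQP => (primeDim_le_dimAlong hIQ hQP).trans h, fun h => csSup_le' ?_⟩
  rintro _ ⟨Q, ⟨hQ, hIQ, hQP⟩, rfl⟩
  exact h Q hQ hIQ hQP

lemma dimAlong_anti (h : I ≤ J) : dimAlong J P ≤ dimAlong I P :=
  dimAlong_le_iff.2 fun _ _ hJQ hQP => primeDim_le_dimAlong (h.trans hJQ) hQP

lemma dimAlong_le (I P : Ideal (MvPolynomial (Fin n) K)) : dimAlong I P ≤ n :=
  dimAlong_le_iff.2 fun Q _ _ _ => primeDim_le Q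

lemma dimAlong_bot : dimAlong ⊥ P = n :=
  le_antisymm (dimAlong_le ⊥ P) (primeDim_bot.symm.le.trans (primeDim_le_dimAlong le_rfl bot_le))

variable [P.IsPrime]

lemma isGreatest_dimAlong (hIP : I ≤ P) :
    IsGreatest (primeDim '' {Q | Q.IsPrime ∧ I ≤ Q ∧ Q ≤ P}) (dimAlong I P) :=
  ⟨Nat.sSup_mem ⟨_, P, ⟨‹_›, hIP, le_rfl⟩, rfl⟩ (bddAbove_primeDim_image I P),
    fun _ => le_csSup (bddAbove_primeDim_image I P)⟩

lemma dimAlong_self : dimAlong P P = primeDim P :=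
  le_antisymm (dimAlong_le_iff.2 fun _ _ hPQ hQP => (le_antisymm hPQ hQP) ▸ le_rfl)
    (primeDim_le_dimAlong le_rfl le_rfl)

lemma dimAlong_le_dimAlong_sup_span_singleton_add_one {f : MvPolynomial (Fin n) K} (hf : f ∈ P) :
    dimAlong I P ≤ dimAlong (I ⊔ Ideal.span {f}) P + 1 := by
  refine dimAlong_le_iff.2 fun Q hQ hIQ hQP => ?_
  obtain ⟨W, hW, hWP⟩ := Ideal.exists_minimalPrimes_le
    (sup_le hQP ((Ideal.span_singleton_le_iff_mem P).2 hf))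
  have := hW.1.1
  have hdimW : primeDim W ≤ dimAlong (I ⊔ Ideal.span {f}) P :=
    primeDim_le_dimAlong ((sup_le_sup_right hIQ _).trans hW.1.2) hWP
  by_cases hfQ : f ∈ Q
  · exact (primeDim_le_dimAlong
      (sup_le hIQ ((Ideal.span_singleton_le_iff_mem Q).2 hfQ)) hQP).trans (Nat.le_succ _)
  · have := primeDim_eq_add_one hfQ hW
    omega

/-- Adding the elements of `S` one at a time lowers the dimension from `n` in steps of at most
one. -/
lemma exists_subset_dimAlong_span_eq {S : Finset (MvPolynomial (Fin n) K)}
    (hSP : ∀ f ∈ S, f ∈ P) (hS : dimAlong (Ideal.span (S : Set (MvPolynomial (Fin n) K))) P ≤ e)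
    (he : e ≤ n) :
    ∃ F ⊆ S, dimAlong (Ideal.span (F : Set (MvPolynomial (Fin n) K))) P = e := by
  classical
  induction S using Finset.induction_on with
  | empty =>
    refine ⟨∅, Finset.Subset.refl _, le_antisymm hS ?_⟩
    rwa [Finset.coe_empty, Ideal.span_empty, dimAlong_bot]
  | insert f S _ ih =>
    rcases le_or_gt (dimAlong (Ideal.span (S : Set (MvPolynomial (Fin n) K))) P) e with hle | hlt
    · obtain ⟨F, hF, hdim⟩ := ih (fun g hg => hSP g (Finset.mem_insert_of_mem hg)) hle
      exact ⟨F, hF.trans (Finset.subset_insert f S), hdim⟩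
    · refine ⟨insert f S, Finset.Subset.refl _, le_antisymm hS ?_⟩
      have := dimAlong_le_dimAlong_sup_span_singleton_add_one
        (I := Ideal.span (S : Set (MvPolynomial (Fin n) K))) (hSP f (Finset.mem_insert_self f S))
      rw [Finset.coe_insert, Ideal.span_insert, sup_comm]
      omega

lemma exists_finset_dimAlong_span_eq {δ : ℕ} (h : dimAlong (lowDegreeSpan P δ) P ≤ e)
    (he : e ≤ n) :
    ∃ F : Finset (MvPolynomial (Fin n) K), (∀ f ∈ F, f ∈ P ∧ f.totalDegree ≤ δ) ∧
      dimAlong (Ideal.span (F : Set (MvPolynomial (Fin n) K))) P = e := by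
  obtain ⟨S, hS, hspan⟩ := Submodule.fg_span_iff_fg_span_finset_subset
    {f | f ∈ P ∧ f.totalDegree ≤ δ} |>.1 (IsNoetherian.noetherian (lowDegreeSpan P δ))
  obtain ⟨F, hF, hdim⟩ := exists_subset_dimAlong_span_eq (fun f hf => (hS hf).1)
    ((congrArg (dimAlong · P) hspan).symm.trans_le h) he
  exact ⟨F, fun f hf => hS (hF hf), hdim⟩

lemma exists_mem_minimalPrimes_lowDegreeSpan {a b : ℕ} (hab : a ≤ b)
    (h : dimAlong (lowDegreeSpan P a) P ≤ dimAlong (lowDegreeSpan P b) P) :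
    ∃ Q : Ideal (MvPolynomial (Fin n) K), Q ∈ (lowDegreeSpan Q a).minimalPrimes ∧
      lowDegreeSpan P b ≤ Q ∧ Q ≤ P ∧ primeDim Q = dimAlong (lowDegreeSpan P a) P := by
  obtain ⟨⟨Q, ⟨hQ, hbQ, hQP⟩, hdim⟩, -⟩ := isGreatest_dimAlong (lowDegreeSpan_le P b)
  have haQ := (lowDegreeSpan_mono hab).trans hbQ
  refine ⟨Q, ⟨⟨hQ, lowDegreeSpan_le Q a⟩, ?_⟩, hbQ, hQP,
    le_antisymm (primeDim_le_dimAlong haQ hQP) (h.trans hdim.ge)⟩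
  rintro Q' ⟨hQ', haQ'⟩ hQ'Q
  have hdim' := primeDim_le_dimAlong ((lowDegreeSpan_le_lowDegreeSpan haQ).trans haQ')
    (hQ'Q.trans hQP)
  exact (eq_of_le_of_primeDim_le hQ'Q (hdim'.trans (h.trans hdim.ge))).ge

end DimAlong

section FieldPoints

variable {K : Type*} [Field K] {n : ℕ} {P : Ideal (MvPolynomial (Fin n) K)}

lemma primeDim_eq_zero_of_isMaximal (hP : P.IsMaximal) : primeDim P = 0 := by
  let _ := Ideal.Quotient.field P
  have : Module.Finite K (MvPolynomial (Fin n) K ⧸ P) :=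
    finite_of_finite_type_of_isJacobsonRing K (MvPolynomial (Fin n) K ⧸ P)
  rw [primeDim, trdeg_eq_zero, map_zero]

lemma exists_isPrime_gt (hP : P.IsPrime) (h : primeDim P ≠ 0) :
    ∃ Q : Ideal (MvPolynomial (Fin n) K), Q.IsPrime ∧ P < Q ∧ primeDim P = primeDim Q + 1 := by
  obtain ⟨M, hM, hPM⟩ := P.exists_le_maximal hP.ne_top
  have hlt : P < M := hPM.lt_of_ne (by rintro rfl; exact h (primeDim_eq_zero_of_isMaximal hM))
  obtain ⟨g, hgM, hgP⟩ := SetLike.exists_of_lt hlt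
  obtain ⟨Q, hQ, -⟩ := Ideal.exists_minimalPrimes_le
    (sup_le hPM ((Ideal.span_singleton_le_iff_mem M).2 hgM))
  have hgQ : g ∈ Q := hQ.1.2 (Ideal.mem_sup_right (Ideal.mem_span_singleton_self g))
  have hPQ : P ≤ Q := le_sup_left.trans hQ.1.2
  have := hQ.1.1
  exact ⟨Q, this, hPQ.lt_of_ne (by rintro rfl; exact hgP hgQ), primeDim_eq_add_one hgP hQ⟩

end FieldPoints

section HilbertDegreeSum

variable {K : Type*} [Field K] {n δ : ℕ} {I : Ideal (MvPolynomial (Fin n) K)}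

/-- The sum of the Hilbert degrees of the irreducible components of the zero set of `I`. -/
def hilbertDegreeSum (I : Ideal (MvPolynomial (Fin n) K)) : ℝ :=
  ∑ Q ∈ (Ideal.finite_minimalPrimes_of_isNoetherianRing _ I).toFinset, hilbertDegree Q

lemma hilbertDegreeSum_of_isPrime (P : Ideal (MvPolynomial (Fin n) K)) [P.IsPrime] :
    hilbertDegreeSum P = hilbertDegree P := by
  rw [hilbertDegreeSum, Finset.sum_congr (s₂ := {P})
    (by ext; simp [Ideal.minimalPrimes_eq_subsingleton_self]) fun _ _ => rfl, Finset.sum_singleton]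

variable [IsAlgClosed K] [CharZero K]

lemma hilbertDegreeSum_sup_span_singleton_le_of_isPrime (P : Ideal (MvPolynomial (Fin n) K))
    [P.IsPrime] {g : MvPolynomial (Fin n) K} (hg : g.totalDegree ≤ δ) (hδ : 0 < δ) :
    hilbertDegreeSum (P ⊔ Ideal.span {g}) ≤ bezoutConst n * δ * hilbertDegree P := by
  by_cases hgP : g ∈ P
  · have hδ' : (1 : ℝ) ≤ δ := mod_cast hδ
    rw [sup_eq_left.2 ((Ideal.span_singleton_le_iff_mem P).2 hgP), hilbertDegreeSum_of_isPrime]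
    exact le_mul_of_one_le_left (hilbertDegree_pos P).le
      (one_le_mul_of_one_le_of_one_le (one_le_bezoutConst n) hδ')
  · refine sum_hilbertDegree_le hgP hg hδ ?_ ?_ ?_ ?_ <;>
      intro Q hQ <;> rw [Set.Finite.mem_toFinset] at hQ <;> have := hQ.1.1
    · exact this
    · exact primeDim_eq_add_one hgP hQ
    · exact le_sup_left.trans hQ.1.2
    · exact hQ.1.2 (Ideal.mem_sup_right (Ideal.mem_span_singleton_self g))

lemma hilbertDegreeSum_sup_span_singleton_le (I : Ideal (MvPolynomial (Fin n) K))
    {g : MvPolynomial (Fin n) K} (hg : g.totalDegree ≤ δ) (hδ : 0 < δ) :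
    hilbertDegreeSum (I ⊔ Ideal.span {g}) ≤ bezoutConst n * δ * hilbertDegreeSum I := by
  classical
  let components := fun J : Ideal (MvPolynomial (Fin n) K) =>
    (Ideal.finite_minimalPrimes_of_isNoetherianRing _ J).toFinset
  have hexists : ∀ Q' ∈ components (I ⊔ Ideal.span {g}), ∃ Q ∈ components I,
      Q' ∈ components (Q ⊔ Ideal.span {g}) := fun Q' hQ' => by
    simp only [components, Set.Finite.mem_toFinset] at hQ' ⊢
    have := hQ'.1.1
    obtain ⟨Q, hQ, hQQ'⟩ := Ideal.exists_minimalPrimes_le (le_sup_left.trans hQ'.1.2)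
    exact ⟨Q, hQ, ⟨this, sup_le hQQ' (le_sup_right.trans hQ'.1.2)⟩, fun _ hJ =>
      hQ'.2 ⟨hJ.1, (sup_le_sup_right hQ.1.2 _).trans hJ.2⟩⟩
  choose! φ hφI hφ using hexists
  calc hilbertDegreeSum (I ⊔ Ideal.span {g})
      = ∑ Q ∈ components I, ∑ Q' ∈ components (I ⊔ Ideal.span {g}) with φ Q' = Q,
          hilbertDegree Q' := (Finset.sum_fiberwise_of_maps_to hφI _).symm
    _ ≤ ∑ Q ∈ components I, hilbertDegreeSum (Q ⊔ Ideal.span {g}) := by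
        refine Finset.sum_le_sum fun Q _ => Finset.sum_le_sum_of_subset_of_nonneg ?_ ?_
        · intro Q' hQ'
          obtain ⟨hmem, rfl⟩ := Finset.mem_filter.1 hQ'
          exact hφ Q' hmem
        · intro Q' hQ' _
          have := ((Set.Finite.mem_toFinset _).1 hQ').1.1
          exact (hilbertDegree_pos Q').le
    _ ≤ ∑ Q ∈ components I, bezoutConst n * δ * hilbertDegree Q :=
        Finset.sum_le_sum fun Q hQ => by
          have : Q.IsPrime := ((Set.Finite.mem_toFinset _).1 hQ).1.1
          exact hilbertDegreeSum_sup_span_singleton_le_of_isPrime Q hg hδ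
    _ = _ := (Finset.mul_sum _ _ _).symm

theorem hilbertDegreeSum_sup_span_le (I : Ideal (MvPolynomial (Fin n) K))
    {S : Finset (MvPolynomial (Fin n) K)} (hS : ∀ g ∈ S, g.totalDegree ≤ δ) (hδ : 0 < δ) :
    hilbertDegreeSum (I ⊔ Ideal.span S) ≤ (bezoutConst n * δ) ^ S.card * hilbertDegreeSum I := by
  classical
  have := bezoutConst_pos n
  induction S using Finset.induction_on with
  | empty => simp
  | insert g S hgS ih =>
    rw [Finset.coe_insert, Ideal.span_insert, sup_comm (Ideal.span {g}), ← sup_assoc,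
      Finset.card_insert_of_notMem hgS, pow_succ', mul_assoc]
    exact (hilbertDegreeSum_sup_span_singleton_le _ (hS g (Finset.mem_insert_self g S)) hδ).trans
      (mul_le_mul_of_nonneg_left (ih fun h hh => hS h (Finset.mem_insert_of_mem hh))
        (by positivity))

end HilbertDegreeSum

section ZeroSet

variable {n : ℕ} {I J P Q : Ideal (MvPolynomial (Fin n) ℂ)} {V W : Set (Fin n → ℂ)}

/-- The zero set of an ideal, with the dimension `n` implicit, unlike in `zeroLocus`. -/
abbrev zeroSet (I : Ideal (MvPolynomial (Fin n) ℂ)) : Set (Fin n → ℂ) :=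
  zeroLocus n I

lemma subset_zeroSet_iff : V ⊆ zeroSet I ↔ I ≤ vanishingIdeal n V :=
  ⟨fun h _ hf _ hx => h hx _ hf, fun h _ hx _ hf => h hf _ hx⟩

lemma zeroSet_anti (h : I ≤ J) : zeroSet J ⊆ zeroSet I := fun _ hx f hf => hx f (h hf)

lemma vanishingIdeal_anti (h : V ⊆ W) : vanishingIdeal n W ≤ vanishingIdeal n V :=
  fun _ hf x hx => hf x (h hx)

lemma zeroSet_span (S : Set (MvPolynomial (Fin n) ℂ)) :
    zeroSet (Ideal.span S) = zeroLocus n S :=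
  Subset.antisymm (fun _ hx f hf => hx f (Ideal.subset_span hf)) fun x hx =>
    (Ideal.span_le (I := RingHom.ker (eval x))).2 hx

lemma zeroSet_sup : zeroSet (I ⊔ J) = zeroSet I ∩ zeroSet J := by
  ext x
  exact sup_le_iff (a := I) (b := J) (c := RingHom.ker (eval x))

lemma vanishingIdeal_zeroSet (P : Ideal (MvPolynomial (Fin n) ℂ)) [P.IsPrime] :
    vanishingIdeal n (zeroSet P) = P := by
  conv_rhs => rw [← MvPolynomial.IsPrime.vanishingIdeal_zeroLocus (K := ℂ) P]
  rfl

lemma zeroSet_subset_zeroSet_iff [P.IsPrime] : zeroSet P ⊆ zeroSet J ↔ J ≤ P := by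
  rw [subset_zeroSet_iff, vanishingIdeal_zeroSet]

lemma zeroSet_nonempty (P : Ideal (MvPolynomial (Fin n) ℂ)) [hP : P.IsPrime] :
    (zeroSet P).Nonempty := by
  rw [Set.nonempty_iff_ne_empty]
  intro hempty
  refine hP.ne_top ((Ideal.eq_top_iff_one P).2 ?_)
  rw [← vanishingIdeal_zeroSet P, hempty]
  exact fun x hx => hx.elim

lemma isPrime_vanishingIdeal_singleton (x : Fin n → ℂ) : (vanishingIdeal n {x}).IsPrime := by
  have : vanishingIdeal n {x} = RingHom.ker (eval x) := by
    ext f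
    exact forall_eq
  exact this ▸ RingHom.ker_isPrime _

lemma zeroSet_vanishingIdeal_singleton (x : Fin n → ℂ) : zeroSet (vanishingIdeal n {x}) = {x} := by
  refine Subset.antisymm (fun z hz => funext fun i => ?_)
    (subset_zeroSet_iff.2 le_rfl)
  have := hz (X i - C (x i)) (by rintro _ rfl; simp)
  simpa [sub_eq_zero] using this

lemma isIrredVariety_zeroSet (P : Ideal (MvPolynomial (Fin n) ℂ)) [hP : P.IsPrime] :
    IsIrredVariety n (zeroSet P) := by
  refine ⟨⟨_, rfl⟩, zeroSet_nonempty P, ?_⟩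
  rintro _ _ ⟨S, rfl⟩ ⟨T, rfl⟩ h
  rw [← zeroSet_span S, ← zeroSet_span T] at h ⊢
  rw [zeroSet_subset_zeroSet_iff, zeroSet_subset_zeroSet_iff]
  refine hP.mul_le.1 (Ideal.mul_le.2 fun f hf g hg => ?_)
  rw [← vanishingIdeal_zeroSet P]
  rintro x hx
  rw [map_mul, mul_eq_zero]
  exact (h hx).imp (fun hxS => hxS f hf) fun hxT => hxT g hg

lemma IsIrredVariety.isPrime_vanishingIdeal (hV : IsIrredVariety n V) :
    (vanishingIdeal n V).IsPrime := by
  obtain ⟨-, ⟨x, hx⟩, hirr⟩ := hV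
  refine ⟨(Ideal.ne_top_iff_one _).2 fun h => by simpa using h x hx, fun {f g} hfg => ?_⟩
  have hcover : V ⊆ zeroLocus n {f} ∪ zeroLocus n {g} := fun z hz => by
    have := hfg z hz
    rw [map_mul, mul_eq_zero] at this
    simpa [zeroLocus] using this
  refine (hirr _ _ ⟨_, rfl⟩ ⟨_, rfl⟩ hcover).imp ?_ ?_ <;>
    exact fun h z hz => h hz _ rfl

lemma IsIrredVariety.zeroSet_vanishingIdeal (hV : IsIrredVariety n V) :
    zeroSet (vanishingIdeal n V) = V := by
  obtain ⟨⟨S, rfl⟩, -, -⟩ := hV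
  rw [← zeroSet_span]
  exact Subset.antisymm (zeroSet_anti (subset_zeroSet_iff.1 Subset.rfl))
    (subset_zeroSet_iff.2 le_rfl)

end ZeroSet

section Points

variable {n : ℕ} {I : Ideal (MvPolynomial (Fin n) ℂ)}

lemma exists_zeroSet_eq_singleton (P : Ideal (MvPolynomial (Fin n) ℂ)) [hP : P.IsPrime]
    (hfin : (zeroSet P).Finite) : ∃ x, zeroSet P = {x} := by
  have hinf : hfin.toFinset.inf (fun x => vanishingIdeal n {x}) ≤ P := fun f hf => by
    rw [← vanishingIdeal_zeroSet P]
    exact fun x hx => (Submodule.mem_finsetInf.1 hf) x (hfin.mem_toFinset.2 hx) x rfl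
  obtain ⟨x, -, hx⟩ := hP.inf_le'.1 hinf
  refine ⟨x, (zeroSet_nonempty P).subset_singleton_iff.1 ?_⟩
  exact (zeroSet_anti hx).trans (zeroSet_vanishingIdeal_singleton x).subset

lemma ncard_zeroSet_le_hilbertDegreeSum (hfin : (zeroSet I).Finite) :
    ((zeroSet I).ncard : ℝ) ≤ hilbertDegreeSum I := by
  have hcomponent : ∀ x ∈ zeroSet I, ∃ Q ∈ I.minimalPrimes, x ∈ zeroSet Q := fun x hx => by
    have := isPrime_vanishingIdeal_singleton x
    obtain ⟨Q, hQ, hQx⟩ := Ideal.exists_minimalPrimes_le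
      (subset_zeroSet_iff.1 (Set.singleton_subset_iff.2 hx))
    exact ⟨Q, hQ, fun f hf => hQx hf x rfl⟩
  choose! Q hQ hxQ using hcomponent
  have hinj : Set.InjOn Q (zeroSet I) := fun x hx y hy hxy => by
    have := (hQ x hx).1.1
    obtain ⟨z, hz⟩ := exists_zeroSet_eq_singleton (Q x)
      (hfin.subset (zeroSet_anti (hQ x hx).1.2))
    have hxz := hxQ x hx
    have hyz := hxy ▸ hxQ y hy
    rw [hz] at hxz hyz
    exact hxz.trans hyz.symm
  have hfinite := Ideal.finite_minimalPrimes_of_isNoetherianRing _ I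
  calc ((zeroSet I).ncard : ℝ) ≤ I.minimalPrimes.ncard :=
        mod_cast Set.ncard_le_ncard_of_injOn Q hQ hinj hfinite
    _ = ∑ _Q ∈ hfinite.toFinset, (1 : ℝ) := by
        simp [Set.ncard_eq_toFinset_card _ hfinite]
    _ ≤ hilbertDegreeSum I := Finset.sum_le_sum fun Q hQ => by
        have := ((Set.Finite.mem_toFinset _).1 hQ).1.1
        exact one_le_hilbertDegree Q

lemma exists_finset_zeroLocus_eq_affineSubspace {L : AffineSubspace ℂ (Fin n → ℂ)}
    (hL : (L : Set (Fin n → ℂ)).Nonempty) :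
    ∃ S : Finset (MvPolynomial (Fin n) ℂ), S.card ≤ n ∧ (∀ f ∈ S, f.totalDegree ≤ 1) ∧
      zeroLocus n S = L := by
  classical
  obtain ⟨p, hp⟩ := hL
  obtain ⟨q, hq⟩ := L.direction.exists_isCompl
  let M := LinearMap.toMatrix' (q.projection L.direction hq.symm)
  have hM : ∀ x, M.mulVec (x - p) = 0 ↔ x ∈ L := fun x => by
    rw [LinearMap.toMatrix'_mulVec, ← LinearMap.mem_ker, Submodule.ker_projection,
      ← AffineSubspace.vsub_right_mem_direction_iff_mem hp, vsub_eq_sub]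
  refine ⟨Finset.univ.image fun i => M.toMvPolynomial i - C (M.mulVec p i),
    Finset.card_image_le.trans (by simp), ?_, ?_⟩
  · simp only [Finset.mem_image, Finset.mem_univ, true_and, forall_exists_index,
      forall_apply_eq_imp_iff]
    exact fun i => (totalDegree_sub_C_le _ _).trans (M.toMvPolynomial_totalDegree_le i)
  · ext x
    simp [zeroLocus, Matrix.toMvPolynomial_eval_eq_apply, ← hM, Matrix.mulVec_sub, funext_iff]

lemma ncard_zeroSet_inter_affineSubspace_le (P : Ideal (MvPolynomial (Fin n) ℂ)) [P.IsPrime]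
    {L : AffineSubspace ℂ (Fin n → ℂ)} (hfin : (zeroSet P ∩ L).Finite) :
    ((zeroSet P ∩ L).ncard : ℝ) ≤ bezoutConst n ^ n * hilbertDegree P := by
  have hK := one_le_bezoutConst n
  have hP := hilbertDegree_pos P
  rcases (L : Set (Fin n → ℂ)).eq_empty_or_nonempty with hL | hL
  · rw [hL, inter_empty, ncard_empty, Nat.cast_zero]
    positivity
  obtain ⟨S, hcard, hdeg, hS⟩ := exists_finset_zeroLocus_eq_affineSubspace hL
  rw [← hS, ← zeroSet_span, ← zeroSet_sup] at hfin ⊢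
  calc _ ≤ hilbertDegreeSum (P ⊔ Ideal.span S) := ncard_zeroSet_le_hilbertDegreeSum hfin
    _ ≤ (bezoutConst n * (1 : ℕ)) ^ S.card * hilbertDegreeSum P :=
        hilbertDegreeSum_sup_span_le P hdeg one_pos
    _ ≤ bezoutConst n ^ n * hilbertDegree P := by
        rw [hilbertDegreeSum_of_isPrime, Nat.cast_one, mul_one]
        gcongr

end Points

section Dim

variable {n : ℕ}

lemma exists_LTSeries_irredVariety_last_eq {k : ℕ} {P : Ideal (MvPolynomial (Fin n) ℂ)}
    [P.IsPrime] (hk : primeDim P = k) :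
    ∃ c : LTSeries {W // IsIrredVariety n W}, c.length = k ∧ (c.last : Set _) = zeroSet P := by
  induction k generalizing P with
  | zero => exact ⟨RelSeries.singleton _ ⟨_, isIrredVariety_zeroSet P⟩, rfl, rfl⟩
  | succ k ih =>
    obtain ⟨Q, hQ, hPQ, hdim⟩ := exists_isPrime_gt ‹P.IsPrime› (by omega)
    obtain ⟨c, hlength, hlast⟩ := ih (P := Q) (by omega)
    have hlt : c.last < ⟨zeroSet P, isIrredVariety_zeroSet P⟩ := by
      rw [← Subtype.coe_lt_coe, hlast]
      refine ⟨zeroSet_anti hPQ.le, fun h => hPQ.not_ge ?_⟩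
      exact zeroSet_subset_zeroSet_iff.1 h
    exact ⟨c.snoc _ hlt, by simp [hlength], by simp⟩

lemma HasChain.le_primeDim {k : ℕ} {P : Ideal (MvPolynomial (Fin n) ℂ)} [P.IsPrime]
    (h : HasChain n (zeroSet P) k) : k ≤ primeDim P := by
  obtain ⟨W, hirred, hstrict, hlast⟩ := h
  have hprime := fun i => (hirred i).isPrime_vanishingIdeal
  have hmono : StrictMono fun i => primeDim (vanishingIdeal n (W i)) := fun i j hij => by
    refine primeDim_lt_of_lt ((vanishingIdeal_anti (hstrict i j hij).1).lt_of_not_ge fun hle => ?_)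
    refine (hstrict i j hij).2 ?_
    rw [← (hirred i).zeroSet_vanishingIdeal, ← (hirred j).zeroSet_vanishingIdeal]
    exact zeroSet_anti hle
  have := hprime (Fin.last k)
  calc k ≤ primeDim (vanishingIdeal n (W (Fin.last k))) :=
        (Nat.le_add_left _ _).trans (LTSeries.head_add_length_le_nat (LTSeries.mk k _ hmono))
    _ ≤ primeDim P := primeDim_le_of_le (vanishingIdeal_zeroSet P ▸ vanishingIdeal_anti hlast)

theorem dim_zeroSet (P : Ideal (MvPolynomial (Fin n) ℂ)) [P.IsPrime] :
    dim n (zeroSet P) = primeDim P := by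
  refine IsGreatest.csSup_eq ⟨?_, fun k hk => HasChain.le_primeDim hk⟩
  obtain ⟨c, hlength, hlast⟩ := exists_LTSeries_irredVariety_last_eq (P := P) rfl
  rw [← hlength, ← hlast]
  exact ⟨fun i => c i, fun i => (c i).2, fun i j hij => c.strictMono hij, subset_rfl⟩

lemma IsIrredVariety.dim_eq_primeDim {V : Set (Fin n → ℂ)} (hV : IsIrredVariety n V) :
    dim n V = primeDim (vanishingIdeal n V) := by
  have := hV.isPrime_vanishingIdeal
  rw [← dim_zeroSet, hV.zeroSet_vanishingIdeal]

end Dim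

section Conductor

variable {K A ι : Type*} [Field K] [CommRing A] [Algebra K A] {y : ι → A}

lemma affineForms_pow_mono (y : ι → A) : Monotone fun m => affineForms K y ^ m :=
  fun _ _ h => pow_le_pow_right₀ (Submodule.one_le.2 (one_mem_affineForms y)) h

lemma exists_aeval_mem_affineForms_pow (y : ι → A) (f : MvPolynomial ι K) :
    ∃ m, aeval y f ∈ affineForms K y ^ m :=
  ⟨f.totalDegree, affineForms_pow_eq_map_aeval (K := K) y _ ▸
    ⟨f, (mem_restrictTotalDegree _ _ _).2 le_rfl, rfl⟩⟩

lemma exists_forall_mul_mem_of_fg {W Z : Submodule K A} (hZ : Z.FG) {q : A}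
    (h : ∀ a, ∃ m, q * a ∈ W * affineForms K y ^ m) :
    ∃ m, ∀ z ∈ Z, q * z ∈ W * affineForms K y ^ m := by
  obtain ⟨S, rfl⟩ := hZ
  choose m hm using h
  refine ⟨S.sup m, fun z hz => ?_⟩
  suffices Submodule.span K S ≤
      (W * affineForms K y ^ S.sup m).comap (LinearMap.mulLeft K q) from this hz
  exact Submodule.span_le.2 fun s hs =>
    mul_le_mul' le_rfl (affineForms_pow_mono y (Finset.le_sup hs)) (hm s)

lemma exists_forall_finrank_le_mul_pow [IsDomain A] [Fintype ι] {W Z : Submodule K A}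
    (hW : W.FG) (hZ : Z.FG) {q : A} (hq : q ≠ 0)
    (h : ∀ a, ∃ m, q * a ∈ W * affineForms K y ^ m) :
    ∃ c, ∀ (M : ℕ) (E : Submodule K A), E ≤ Z * affineForms K y ^ M →
      Module.finrank K E ≤ Module.finrank K W * (c + M + 1) ^ Fintype.card ι := by
  obtain ⟨c, hc⟩ := exists_forall_mul_mem_of_fg hZ h
  refine ⟨c, fun M E hE => ?_⟩
  have hle : E.map (LinearMap.mulLeft K q) ≤ W * affineForms K y ^ (c + M) := by
    refine Submodule.map_le_iff_le_comap.2 (hE.trans (Submodule.mul_le.2 fun z hz a ha => ?_))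
    rw [Submodule.mem_comap, LinearMap.mulLeft_apply, ← mul_assoc, pow_add, ← mul_assoc]
    exact Submodule.mul_mem_mul (hc z hz) ha
  have hy := (affineForms_fg (K := K) y).pow (c + M)
  calc Module.finrank K E = Module.finrank K (E.map (LinearMap.mulLeft K q)) :=
        (Submodule.equivMapOfInjective _ (mul_right_injective₀ hq) E).finrank_eq
    _ ≤ Module.finrank K W * Module.finrank K ↥(affineForms K y ^ (c + M)) :=
        (finrank_le_finrank_of_le_of_fg hle (hW.mul hy)).trans (finrank_mul_le hW hy)
    _ ≤ _ := Nat.mul_le_mul_left _ (finrank_affineForms_pow_le y _)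

lemma exists_mem_span_mul_affineForms_pow [Algebra (MvPolynomial ι K) A]
    [IsScalarTower K (MvPolynomial ι K) A] {S : Set A} {a : A}
    (ha : a ∈ Submodule.span (MvPolynomial ι K) S) :
    ∃ m, a ∈ Submodule.span K S *
      affineForms K (fun i => algebraMap (MvPolynomial ι K) A (X i)) ^ m := by
  set y := fun i => algebraMap (MvPolynomial ι K) A (X i)
  induction ha using Submodule.span_induction with
  | mem a ha => exact ⟨0, by simpa using Submodule.subset_span ha⟩
  | zero => exact ⟨0, zero_mem _⟩
  | add a b _ _ iha ihb =>
    obtain ⟨k, hk⟩ := iha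
    obtain ⟨m, hm⟩ := ihb
    exact ⟨max k m, add_mem
      (mul_le_mul' le_rfl (affineForms_pow_mono y (le_max_left k m)) hk)
      (mul_le_mul' le_rfl (affineForms_pow_mono y (le_max_right k m)) hm)⟩
  | smul f a _ ih =>
    obtain ⟨k, hk⟩ := ih
    obtain ⟨m, hm⟩ := exists_aeval_mem_affineForms_pow y f
    have hf : algebraMap (MvPolynomial ι K) A f = aeval y f :=
      DFunLike.congr_fun (MvPolynomial.algHom_ext (f := IsScalarTower.toAlgHom K _ A)
        fun i => (aeval_X y i).symm) f
    refine ⟨k + m, ?_⟩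
    rw [Algebra.smul_def, hf, mul_comm (aeval y f), pow_add, ← mul_assoc]
    exact Submodule.mul_mem_mul hk hm

lemma exists_algebraMap_mul_mem_span_pow_mul [Algebra (MvPolynomial ι K) A]
    [IsScalarTower K (MvPolynomial ι K) A] {u : A} (hu : IsIntegral (MvPolynomial ι K) u)
    {q : MvPolynomial ι K} (hq : ∀ a : A, q • a ∈ Algebra.adjoin (MvPolynomial ι K) {u}) (a : A) :
    ∃ m, algebraMap _ A q * a ∈
      Submodule.span K (range fun i : Fin (minpoly (MvPolynomial ι K) u).natDegree => u ^ (i : ℕ)) *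
        affineForms K (fun i => algebraMap (MvPolynomial ι K) A (X i)) ^ m := by
  classical
  have hspan := Submodule.span_range_natDegree_eq_adjoin (minpoly.monic hu) (minpoly.aeval _ u)
  refine exists_mem_span_mul_affineForms_pow ?_
  rw [← Algebra.smul_def]
  have ha := (Subalgebra.mem_toSubmodule _).2 (hq a)
  have hpow : (range fun i : Fin (minpoly (MvPolynomial ι K) u).natDegree => u ^ (i : ℕ)) =
      Finset.image (u ^ ·) (Finset.range (minpoly (MvPolynomial ι K) u).natDegree) := by
    ext b
    simp [Fin.exists_iff]
  rwa [← hspan, ← hpow] at ha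

end Conductor

section LinearPrimitiveElement

variable {K : Type*} [Field K] {n : ℕ}

/-- The constant comparing the Hilbert degree with the number of points of a generic linear
section. -/
def sectionConst (n : ℕ) : ℝ := 2 * (4 * (n + 1)) ^ n

lemma sectionConst_pos (n : ℕ) : 0 < sectionConst n := by
  unfold sectionConst
  positivity

lemma exists_forall_hilbertFn_le_natDegree_minpoly_mul_pow {r : ℕ}
    {P : Ideal (MvPolynomial (Fin n) K)} [P.IsPrime]
    [Algebra (MvPolynomial (Fin r) K) (MvPolynomial (Fin n) K ⧸ P)]
    [IsScalarTower K (MvPolynomial (Fin r) K) (MvPolynomial (Fin n) K ⧸ P)]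
    [FaithfulSMul (MvPolynomial (Fin r) K) (MvPolynomial (Fin n) K ⧸ P)]
    {Z : Submodule K (MvPolynomial (Fin n) K ⧸ P)} (hZ : Z.FG)
    (hle : ∀ M, degreeLE P M ≤
      Z * affineForms K (fun i => algebraMap (MvPolynomial (Fin r) K) _ (X i)) ^ M)
    {u : MvPolynomial (Fin n) K ⧸ P} (hu : IsIntegral (MvPolynomial (Fin r) K) u)
    {q : MvPolynomial (Fin r) K} (hq0 : q ≠ 0)
    (hq : ∀ a : MvPolynomial (Fin n) K ⧸ P, q • a ∈ Algebra.adjoin (MvPolynomial (Fin r) K) {u}) :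
    ∃ c, ∀ M,
      hilbertFn P M ≤ (minpoly (MvPolynomial (Fin r) K) u).natDegree * (c + M + 1) ^ r := by
  have hq0' := (FaithfulSMul.algebraMap_eq_zero_iff _ (MvPolynomial (Fin n) K ⧸ P)).not.2 hq0
  obtain ⟨c, hc⟩ := exists_forall_finrank_le_mul_pow
    (Submodule.fg_span (finite_range fun i : Fin (minpoly _ u).natDegree => u ^ (i : ℕ))) hZ hq0'
    (exists_algebraMap_mul_mem_span_pow_mul hu hq)
  refine ⟨c, fun M => (hc M _ (hle M)).trans ?_⟩
  rw [Fintype.card_fin]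
  exact Nat.mul_le_mul_right _ ((finrank_range_le_card _).trans_eq (Fintype.card_fin _))

lemma hilbertDegree_le_of_hilbertFn_le [IsAlgClosed K] [CharZero K]
    {P : Ideal (MvPolynomial (Fin n) K)} [P.IsPrime] {c D : ℕ}
    (h : ∀ M, hilbertFn P M ≤ D * (c + M + 1) ^ primeDim P) :
    hilbertDegree P ≤ sectionConst n * D := by
  obtain ⟨m, hm⟩ := exists_forall_hilbertDegree_mul_pow_le P
  set M := max m c
  set r := primeDim P
  have hr : (r : ℝ) ≤ n := mod_cast primeDim_le P
  have hcM : (c + M + 1 : ℝ) ≤ 2 * (M + 1) := by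
    have : (c : ℝ) ≤ M := mod_cast le_max_right m c
    linarith
  have hconst : (2 * (2 * ((r : ℝ) + 1)) ^ r) * 2 ^ r ≤ sectionConst n := by
    rw [mul_assoc, ← mul_pow, sectionConst]
    gcongr
    calc (2 * ((r : ℝ) + 1) * 2) ^ r ≤ (4 * ((n : ℝ) + 1)) ^ r := by
          refine pow_le_pow_left₀ (by positivity) ?_ r
          linarith
      _ ≤ _ := pow_le_pow_right₀ (by linarith [n.cast_nonneg (α := ℝ)]) (primeDim_le P)
  refine le_of_mul_le_mul_right ?_ (by positivity : (0 : ℝ) < (M + 1) ^ r)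
  calc hilbertDegree P * ((M : ℝ) + 1) ^ r
      ≤ 2 * (2 * ((r : ℝ) + 1)) ^ r * hilbertFn P M := hm M (le_max_left _ _)
    _ ≤ 2 * (2 * ((r : ℝ) + 1)) ^ r * (D * (2 * (M + 1)) ^ r) := by
        gcongr
        refine (Nat.cast_le.2 (h M)).trans ?_
        push_cast
        gcongr
    _ = (2 * (2 * ((r : ℝ) + 1)) ^ r) * 2 ^ r * D * (M + 1) ^ r := by
        rw [mul_pow 2 ((M : ℝ) + 1)]
        ring
    _ ≤ _ := by gcongr

end LinearPrimitiveElement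

section Fibre

variable {n r : ℕ} {P : Ideal (MvPolynomial (Fin n) ℂ)}
  [Algebra (MvPolynomial (Fin r) ℂ) (MvPolynomial (Fin n) ℂ ⧸ P)]
  [IsScalarTower ℂ (MvPolynomial (Fin r) ℂ) (MvPolynomial (Fin n) ℂ ⧸ P)]
  {f : Fin r → MvPolynomial (Fin n) ℂ}

lemma exists_mem_zeroSet_eval_eq {c : Fin r → ℂ} {ψ : (MvPolynomial (Fin n) ℂ ⧸ P) →+* ℂ}
    (hψ : ψ.comp (algebraMap (MvPolynomial (Fin r) ℂ) _) = eval c) :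
    ∃ x ∈ zeroSet P, ∀ g, eval x g = ψ (Ideal.Quotient.mk P g) := by
  have hψC : ∀ a, ψ (Ideal.Quotient.mk P (C a)) = a := fun a => by
    have h := RingHom.congr_fun hψ (algebraMap ℂ _ a)
    rw [RingHom.comp_apply, ← IsScalarTower.algebraMap_apply, algebraMap_eq, eval_C] at h
    exact h
  have heval : ∀ g, eval (fun i => ψ (Ideal.Quotient.mk P (X i))) g =
      ψ (Ideal.Quotient.mk P g) :=
    RingHom.congr_fun (g := ψ.comp (Ideal.Quotient.mk P))
      (ringHom_ext (fun a => by simpa using (hψC a).symm) fun i => by simp)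
  exact ⟨_, fun g hg => by rw [heval, Ideal.Quotient.eq_zero_iff_mem.2 hg, map_zero], heval⟩

lemma lift_eval_comp_algebraMap (hf : ∀ i, Ideal.Quotient.mk P (f i) =
      algebraMap (MvPolynomial (Fin r) ℂ) _ (X i))
    {x : Fin n → ℂ} (hx : ∀ g ∈ P, eval x g = 0) :
    (Ideal.Quotient.lift P (eval x) hx).comp (algebraMap (MvPolynomial (Fin r) ℂ) _) =
      eval fun i => eval x (f i) := by
  refine ringHom_ext (fun a => ?_) fun i => ?_
  · rw [RingHom.comp_apply, ← algebraMap_eq, ← IsScalarTower.algebraMap_apply]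
    exact (eval_C a).trans (eval_C a).symm
  · rw [RingHom.comp_apply, ← hf, Ideal.Quotient.lift_mk, eval_X]

lemma finite_fibre [Algebra.IsIntegral (MvPolynomial (Fin r) ℂ) (MvPolynomial (Fin n) ℂ ⧸ P)]
    (hf : ∀ i, Ideal.Quotient.mk P (f i) =
      algebraMap (MvPolynomial (Fin r) ℂ) _ (X i)) (c : Fin r → ℂ) :
    {x ∈ zeroSet P | ∀ i, eval x (f i) = c i}.Finite := by
  let p := fun j => minpoly (MvPolynomial (Fin r) ℂ) (Ideal.Quotient.mk P (X j))
  have hp : ∀ j, (p j).Monic := fun j => minpoly.monic (Algebra.IsIntegral.isIntegral _)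
  refine (Set.Finite.pi' fun j =>
    (((p j).map (eval c)).roots.toFinset.finite_toSet)).subset ?_
  rintro x ⟨(hx : ∀ g ∈ P, eval x g = 0), hxc⟩ j
  have hroot := congrArg (Ideal.Quotient.lift P (eval x) hx)
    (minpoly.aeval (MvPolynomial (Fin r) ℂ) (Ideal.Quotient.mk P (X j)))
  rw [Polynomial.aeval_def, Polynomial.hom_eval₂, lift_eval_comp_algebraMap hf, funext hxc,
    map_zero, Ideal.Quotient.lift_mk, eval_X] at hroot
  rw [Finset.mem_coe, Multiset.mem_toFinset, Polynomial.mem_roots ((hp j).map _).ne_zero,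
    Polynomial.IsRoot, Polynomial.eval_map]
  exact hroot

lemma natDegree_minpoly_le_ncard_fibre [P.IsPrime]
    [FaithfulSMul (MvPolynomial (Fin r) ℂ) (MvPolynomial (Fin n) ℂ ⧸ P)]
    [Algebra.IsIntegral (MvPolynomial (Fin r) ℂ) (MvPolynomial (Fin n) ℂ ⧸ P)]
    (hf : ∀ i, Ideal.Quotient.mk P (f i) =
      algebraMap (MvPolynomial (Fin r) ℂ) _ (X i))
    {u : MvPolynomial (Fin n) ℂ ⧸ P} {q : MvPolynomial (Fin r) ℂ}
    (hq : ∀ a : MvPolynomial (Fin n) ℂ ⧸ P, q • a ∈ Algebra.adjoin (MvPolynomial (Fin r) ℂ) {u})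
    {c : Fin r → ℂ} (hqc : eval c q ≠ 0)
    (hres : eval c ((minpoly (MvPolynomial (Fin r) ℂ) u).resultant
      (minpoly (MvPolynomial (Fin r) ℂ) u).derivative) ≠ 0) :
    (minpoly (MvPolynomial (Fin r) ℂ) u).natDegree ≤
      {x ∈ zeroSet P | ∀ i, eval x (f i) = c i}.ncard := by
  classical
  have hu : IsIntegral (MvPolynomial (Fin r) ℂ) u := Algebra.IsIntegral.isIntegral u
  have hmonic := minpoly.monic hu
  set g := (minpoly (MvPolynomial (Fin r) ℂ) u).map (eval c) with hg
  have hcard : g.roots.toFinset.card = (minpoly (MvPolynomial (Fin r) ℂ) u).natDegree := by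
    rw [← hmonic.natDegree_map (eval c), (IsAlgClosed.splits g).natDegree_eq_card_roots]
    exact Multiset.toFinset_card_of_nodup
      (Polynomial.nodup_roots (separable_map_of_resultant_derivative_ne_zero hmonic hres))
  obtain ⟨U, rfl⟩ := Ideal.Quotient.mk_surjective u
  have hsub : (g.roots.toFinset : Set ℂ) ⊆
      (fun x => eval x U) '' {x ∈ zeroSet P | ∀ i, eval x (f i) = c i} := fun ξ hξ => by
    have hroot : g.IsRoot ξ := (Polynomial.mem_roots'.1 (Multiset.mem_toFinset.1 hξ)).2
    rw [Polynomial.IsRoot, hg, Polynomial.eval_map] at hroot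
    obtain ⟨ψ, hψ, hψu⟩ := exists_ringHom_of_eval₂_minpoly_eq_zero hu hq hqc.isUnit hroot
    obtain ⟨x, hx, hxψ⟩ := exists_mem_zeroSet_eval_eq hψ
    refine ⟨x, ⟨hx, fun i => ?_⟩, (hxψ U).trans hψu⟩
    rw [hxψ, hf, ← RingHom.comp_apply, hψ, eval_X]
  have hfinite := finite_fibre hf c
  rw [← hcard, ← Set.ncard_coe_finset]
  exact (Set.ncard_le_ncard hsub (hfinite.image _)).trans (Set.ncard_image_le hfinite)

end Fibre

section LinearSection

variable {n : ℕ}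

lemma exists_affineMap_of_totalDegree_le_one {f : MvPolynomial (Fin n) ℂ}
    (hf : f.totalDegree ≤ 1) : ∃ F : (Fin n → ℂ) →ᵃ[ℂ] ℂ, ∀ x, eval x f = F x := by
  have hspan : f ∈ affineForms ℂ (X : Fin n → MvPolynomial (Fin n) ℂ) := by
    rw [← pow_one (affineForms ℂ _), affineForms_X_pow]
    exact (mem_restrictTotalDegree _ _ _).2 hf
  clear hf
  induction hspan using Submodule.span_induction with
  | mem g hg =>
    rcases hg with rfl | ⟨i, rfl⟩
    · exact ⟨AffineMap.const ℂ _ 1, by simp⟩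
    · exact ⟨(LinearMap.proj i).toAffineMap, by simp⟩
  | zero => exact ⟨0, by simp⟩
  | add g h _ _ hg hh =>
    obtain ⟨G, hG⟩ := hg
    obtain ⟨H, hH⟩ := hh
    exact ⟨G + H, by simp [hG, hH]⟩
  | smul a g _ hg =>
    obtain ⟨G, hG⟩ := hg
    exact ⟨a • G, by simp [hG, smul_eval]⟩

lemma surjective_eval_of_algebraicIndependent {r : ℕ} {f : Fin r → MvPolynomial (Fin n) ℂ}
    (hf : AlgebraicIndependent ℂ f) {F : (Fin n → ℂ) →ᵃ[ℂ] (Fin r → ℂ)}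
    (hF : ∀ x i, eval x (f i) = F x i) : Function.Surjective F := by
  rw [← AffineMap.linear_surjective_iff, ← LinearMap.range_eq_top]
  by_contra hrange
  obtain ⟨b, hb, hker⟩ := Submodule.exists_le_ker_of_lt_top _ (lt_top_iff_ne_top.2 hrange)
  let g : MvPolynomial (Fin r) ℂ := ∑ i, C (b fun j => if i = j then 1 else 0) * X i - C (b (F 0))
  have heval : ∀ z, eval z g = b z - b (F 0) := fun z => by
    rw [LinearMap.pi_apply_eq_sum_univ b z]
    simp [g, mul_comm]
  have hg : g = 0 := hf.eq_zero_of_aeval_eq_zero g <| MvPolynomial.funext fun x => by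
    have hx : b (F.linear (x -ᵥ 0)) = 0 := hker ⟨_, rfl⟩
    rw [AffineMap.linearMap_vsub, vsub_eq_sub, map_sub, ← heval] at hx
    rw [map_zero, ← hx, ← funext (hF x)]
    exact aeval_bind₁ x f g
  have hF0 : b (F 0) = 0 := by simpa [hg] using heval 0
  exact hb (LinearMap.ext fun z => by simpa [hg, hF0] using (heval z).symm)

lemma exists_affineSubspace_of_algebraicIndependent {r : ℕ}
    {f : Fin r → MvPolynomial (Fin n) ℂ} (hf : AlgebraicIndependent ℂ f)
    (hdeg : ∀ i, (f i).totalDegree ≤ 1) (c : Fin r → ℂ) :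
    ∃ L : AffineSubspace ℂ (Fin n → ℂ), Module.finrank ℂ L.direction = n - r ∧
      ∀ x, x ∈ L ↔ ∀ i, eval x (f i) = c i := by
  choose F hF using fun i => exists_affineMap_of_totalDegree_le_one (hdeg i)
  have hsurj := surjective_eval_of_algebraicIndependent hf (F := AffineMap.pi F)
    fun x i => hF i x
  obtain ⟨x₀, rfl⟩ := hsurj c
  refine ⟨AffineSubspace.mk' x₀ (LinearMap.ker (AffineMap.pi F).linear), ?_, fun x => ?_⟩
  · have hrank := LinearMap.finrank_range_add_finrank_ker (AffineMap.pi F).linear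
    rw [LinearMap.range_eq_top.2 ((AffineMap.linear_surjective_iff _).2 hsurj), finrank_top,
      Module.finrank_fin_fun, Module.finrank_fin_fun] at hrank
    rw [AffineSubspace.direction_mk']
    omega
  · rw [AffineSubspace.mem_mk', LinearMap.mem_ker, AffineMap.linearMap_vsub, vsub_eq_zero_iff_eq,
      funext_iff]
    simp [hF]

theorem exists_affineSubspace_hilbertDegree_le (P : Ideal (MvPolynomial (Fin n) ℂ)) [P.IsPrime] :
    ∃ L : AffineSubspace ℂ (Fin n → ℂ), Module.finrank ℂ L.direction = n - primeDim P ∧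
      (zeroSet P ∩ L).Finite ∧ hilbertDegree P ≤ sectionConst n * (zeroSet P ∩ L).ncard := by
  obtain ⟨y, hy, hind, hfin, Z, hZ, hle⟩ := exists_degreeLE_le_mul_affineForms_pow P
  choose f hdeg hf using fun i => exists_totalDegree_le_of_mem_degreeLE (hy i)
  let _ : Algebra (MvPolynomial (Fin (primeDim P)) ℂ) (MvPolynomial (Fin n) ℂ ⧸ P) :=
    (aeval y).toAlgebra
  have : IsScalarTower ℂ (MvPolynomial (Fin (primeDim P)) ℂ) (MvPolynomial (Fin n) ℂ ⧸ P) :=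
    .of_algebraMap_eq fun c => (AlgHom.commutes (aeval y) c).symm
  have : FaithfulSMul (MvPolynomial (Fin (primeDim P)) ℂ) (MvPolynomial (Fin n) ℂ ⧸ P) :=
    (faithfulSMul_iff_algebraMap_injective _ _).2 hind
  have : Algebra.IsIntegral (MvPolynomial (Fin (primeDim P)) ℂ) (MvPolynomial (Fin n) ℂ ⧸ P) :=
    ⟨fun a => RingHom.IsIntegral.of_finite hfin a⟩
  have hX : ∀ i, algebraMap (MvPolynomial (Fin (primeDim P)) ℂ) (MvPolynomial (Fin n) ℂ ⧸ P)
      (X i) = y i := aeval_X y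
  have : @Module.Finite (MvPolynomial (Fin (primeDim P)) ℂ) (MvPolynomial (Fin n) ℂ ⧸ P) _ _
    Algebra.toModule := hfin
  obtain ⟨u, hres, q, hq0, hq⟩ := exists_conductor_of_primitive_element
    (MvPolynomial (Fin (primeDim P)) ℂ) (MvPolynomial (Fin n) ℂ ⧸ P)
  obtain ⟨c, hc⟩ := exists_eval_ne_zero (mul_ne_zero hq0 hres)
  rw [map_mul] at hc
  obtain ⟨L, hL, hmem⟩ := exists_affineSubspace_of_algebraicIndependent
    (AlgebraicIndependent.of_comp (Ideal.Quotient.mkₐ ℂ P) (by rwa [← funext hf] at hind))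
    hdeg c
  have hfibre : zeroSet P ∩ L = {x ∈ zeroSet P | ∀ i, eval x (f i) = c i} := by
    ext x
    simp [hmem]
  have hfX := fun i => (hf i).trans (hX i).symm
  obtain ⟨k, hk⟩ := exists_forall_hilbertFn_le_natDegree_minpoly_mul_pow hZ
    (by simpa only [hX] using hle) (Algebra.IsIntegral.isIntegral u) hq0 hq
  refine ⟨L, hL, hfibre ▸ finite_fibre hfX c, (hilbertDegree_le_of_hilbertFn_le hk).trans ?_⟩
  have := sectionConst_pos n
  rw [hfibre]
  gcongr
  exact natDegree_minpoly_le_ncard_fibre hfX hq (left_ne_zero_of_mul hc) (right_ne_zero_of_mul hc)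

end LinearSection

section Degree

variable {n : ℕ} (P : Ideal (MvPolynomial (Fin n) ℂ)) [P.IsPrime]

lemma isGreatest_degree_zeroSet :
    IsGreatest {m | ∃ L : AffineSubspace ℂ (Fin n → ℂ),
      Module.finrank ℂ L.direction = n - primeDim P ∧ (zeroSet P ∩ L).Finite ∧
        (zeroSet P ∩ L).ncard = m} (degree n (zeroSet P)) := by
  rw [degree, dim_zeroSet]
  obtain ⟨L, hL, hfin, -⟩ := exists_affineSubspace_hilbertDegree_le P
  have hbdd : BddAbove {m | ∃ L : AffineSubspace ℂ (Fin n → ℂ),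
      Module.finrank ℂ L.direction = n - primeDim P ∧ (zeroSet P ∩ L).Finite ∧
        (zeroSet P ∩ L).ncard = m} := by
    refine ⟨⌊bezoutConst n ^ n * hilbertDegree P⌋₊, ?_⟩
    rintro _ ⟨L, -, hfin, rfl⟩
    exact Nat.le_floor (ncard_zeroSet_inter_affineSubspace_le P hfin)
  exact ⟨Nat.sSup_mem ⟨_, L, hL, hfin, rfl⟩ hbdd, fun _ => le_csSup hbdd⟩

theorem degree_zeroSet_le :
    (degree n (zeroSet P) : ℝ) ≤ bezoutConst n ^ n * hilbertDegree P := by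
  obtain ⟨L, -, hfin, hL⟩ := (isGreatest_degree_zeroSet P).1
  exact hL ▸ ncard_zeroSet_inter_affineSubspace_le P hfin

theorem hilbertDegree_le_sectionConst_mul_degree :
    hilbertDegree P ≤ sectionConst n * degree n (zeroSet P) := by
  obtain ⟨L, hL, hfin, hle⟩ := exists_affineSubspace_hilbertDegree_le P
  have := sectionConst_pos n
  refine hle.trans ?_
  gcongr
  exact (isGreatest_degree_zeroSet P).2 ⟨L, hL, hfin, rfl⟩

end Degree

section PartialDegree

variable {n i : ℕ} {I P : Ideal (MvPolynomial (Fin n) ℂ)} [P.IsPrime]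

lemma maxCompDimEq_dimAlong (hIP : I ≤ P) :
    MaxCompDimEq n (zeroSet I) (zeroSet P) (dimAlong I P) := by
  have hmem {W : Set (Fin n → ℂ)} (hWI : W ⊆ zeroSet I) (hPW : zeroSet P ⊆ W) :
      I ≤ vanishingIdeal n W ∧ vanishingIdeal n W ≤ P :=
    ⟨subset_zeroSet_iff.1 hWI, vanishingIdeal_zeroSet P ▸ vanishingIdeal_anti hPW⟩
  refine ⟨?_, fun W ⟨hW, hWI, _⟩ hPW => ?_⟩
  · obtain ⟨⟨Q, ⟨hQ, hIQ, hQP⟩, hdim⟩, -⟩ := isGreatest_dimAlong hIP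
    refine ⟨zeroSet Q, ⟨isIrredVariety_zeroSet Q, zeroSet_anti hIQ, fun W hW hQW hWI => ?_⟩,
      zeroSet_anti hQP, (dim_zeroSet Q).trans hdim⟩
    have := hW.isPrime_vanishingIdeal
    obtain ⟨hIW, hWP⟩ := hmem hWI ((zeroSet_anti hQP).trans hQW)
    have hWQ : vanishingIdeal n W ≤ Q := vanishingIdeal_zeroSet Q ▸ vanishingIdeal_anti hQW
    rw [← hW.zeroSet_vanishingIdeal,
      eq_of_le_of_primeDim_le hWQ ((primeDim_le_dimAlong hIW hWP).trans hdim.ge)]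
  · have := hW.isPrime_vanishingIdeal
    obtain ⟨hIW, hWP⟩ := hmem hWI hPW
    exact hW.dim_eq_primeDim.trans_le (primeDim_le_dimAlong hIW hWP)

lemma maxCompDimEq_zeroSet_iff (hIP : I ≤ P) {e : ℕ} :
    MaxCompDimEq n (zeroSet I) (zeroSet P) e ↔ dimAlong I P = e := by
  refine ⟨fun ⟨⟨W, hW, hPW, hWe⟩, hle⟩ => ?_, fun h => h ▸ maxCompDimEq_dimAlong hIP⟩
  obtain ⟨⟨W', hW', hPW', hWe'⟩, hle'⟩ := maxCompDimEq_dimAlong hIP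
  exact le_antisymm (hWe' ▸ hle W' hW' hPW') (hWe ▸ hle' W hW hPW)

lemma exists_finset_maxCompDimEq_iff {δ e : ℕ} (he : e ≤ n) :
    (∃ S : Finset (MvPolynomial (Fin n) ℂ), (∀ f ∈ S, f.totalDegree ≤ δ) ∧
      zeroSet P ⊆ zeroLocus n ↑S ∧ MaxCompDimEq n (zeroLocus n ↑S) (zeroSet P) e) ↔
      dimAlong (lowDegreeSpan P δ) P ≤ e := by
  refine ⟨fun ⟨S, hdeg, hSP, hS⟩ => ?_, fun h => ?_⟩
  · rw [← zeroSet_span] at hSP hS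
    rw [zeroSet_subset_zeroSet_iff] at hSP
    rw [← (maxCompDimEq_zeroSet_iff hSP).1 hS]
    exact dimAlong_anti (Ideal.span_mono fun f hf => ⟨hSP (Ideal.subset_span hf), hdeg f hf⟩)
  · obtain ⟨F, hF, hdim⟩ := exists_finset_dimAlong_span_eq h he
    have hFP := Ideal.span_le.2 fun f hf => (hF f hf).1
    refine ⟨F, fun f hf => (hF f hf).2, ?_⟩
    rw [← zeroSet_span]
    exact ⟨zeroSet_anti hFP, (maxCompDimEq_zeroSet_iff hFP).2 hdim⟩

lemma exists_lowDegreeSpan_eq (I : Ideal (MvPolynomial (Fin n) ℂ)) :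
    ∃ δ, lowDegreeSpan I δ = I := by
  obtain ⟨S, hS⟩ := IsNoetherian.noetherian I
  refine ⟨S.sup totalDegree, le_antisymm (lowDegreeSpan_le I _) ?_⟩
  conv_lhs => rw [← hS]
  exact Ideal.span_mono fun f hf => ⟨hS ▸ Ideal.subset_span hf, Finset.le_sup hf⟩

theorem partialDeg_zeroSet_le_iff (hi : i ≤ n - primeDim P) {δ : ℕ} :
    partialDeg n (zeroSet P) i ≤ δ ↔ dimAlong (lowDegreeSpan P δ) P ≤ n - i := by
  rcases eq_or_ne i 0 with rfl | hi0
  · simpa [partialDeg] using dimAlong_le _ P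
  simp only [partialDeg, if_neg hi0, exists_finset_maxCompDimEq_iff (Nat.sub_le n i)]
  obtain ⟨δ₀, hδ₀⟩ := exists_lowDegreeSpan_eq P
  have hne : {δ | dimAlong (lowDegreeSpan P δ) P ≤ n - i}.Nonempty := by
    refine ⟨δ₀, ?_⟩
    have := primeDim_le P
    rw [Set.mem_ofPred_eq, hδ₀, dimAlong_self]
    omega
  exact ⟨fun h => (dimAlong_anti (lowDegreeSpan_mono h)).trans (Nat.sInf_mem hne), fun h =>
    Nat.sInf_le h⟩

end PartialDegree

section Delta

variable {n s : ℕ}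

lemma prod_range_sub_eq_prod_Icc {M : Type*} [CommMonoid M] (f : ℕ → M) {N : ℕ} (hs : s ≤ N) :
    ∏ i ∈ Finset.range (N - s), f (N - i) = ∏ j ∈ Finset.Icc (s + 1) N, f j := by
  refine Finset.prod_nbij' (N - ·) (N - ·) ?_ ?_ ?_ ?_ fun _ _ => rfl <;>
    simp only [Finset.mem_range, Finset.mem_Icc] <;> omega

lemma one_le_Delta (V : Set (Fin n → ℂ)) (s : ℕ) : 1 ≤ Delta n V s := le_max_right _ _

lemma Delta_pos (V : Set (Fin n → ℂ)) (s : ℕ) : 0 < Delta n V s :=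
  one_pos.trans_le (one_le_Delta V s)

lemma partialDegE_of_le {V : Set (Fin n → ℂ)} (hs : s ≤ n - dim n V) :
    partialDegE n V s = partialDeg n V s := if_pos hs

lemma le_of_partialDegE_ne_top {V : Set (Fin n → ℂ)} (h : partialDegE n V s ≠ ⊤) :
    s ≤ n - dim n V := by
  by_contra hs
  exact h (if_neg hs)

lemma Admissible.partialDegE_lt {V : Set (Fin n → ℂ)} (h : Admissible n V s) :
    partialDegE n V s < partialDegE n V (s + 1) := by
  refine lt_of_le_of_lt ?_ h
  rcases Nat.eq_zero_or_pos s with rfl | hs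
  · simp [partialDegE, partialDeg]
  · exact le_mul_of_one_le_left' (mod_cast (by omega : 1 ≤ 2 * s))

variable {P W : Ideal (MvPolynomial (Fin n) ℂ)} [P.IsPrime] [W.IsPrime]

lemma hilbertDegree_le_prod_partialDeg (hs : s ≤ n - primeDim P) (hWP : W ≤ P)
    (hdim : primeDim W = n - s) :
    hilbertDegree P ≤ bezoutConst n ^ n *
      (∏ j ∈ Finset.Icc (s + 1) (n - primeDim P), (partialDeg n (zeroSet P) j : ℝ)) *
      hilbertDegree W := by
  have hPn := primeDim_le P
  have hW := hilbertDegree_pos W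
  refine (hilbertDegree_le_prod (k := n - primeDim P - s)
    (δ := fun i => partialDeg n (zeroSet P) (n - primeDim P - i)) ?_ hWP (by omega)).trans ?_
  · intro i _ W' hW' hWP' hdim' hle
    have h1 := primeDim_le_dimAlong hle hWP'
    have h2 := (partialDeg_zeroSet_le_iff (P := P) (Nat.sub_le _ i)).1 le_rfl
    omega
  · rw [prod_range_sub_eq_prod_Icc (fun j => (partialDeg n (zeroSet P) j : ℝ)) hs]
    gcongr
    · exact one_le_bezoutConst n
    · omega

lemma Delta_zeroSet_le (hs : s ≤ n - primeDim P) (hWP : W ≤ P) (hdim : primeDim W = n - s) :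
    Delta n (zeroSet P) s ≤ bezoutConst n ^ (2 * n) * hilbertDegree W := by
  have hB := one_le_bezoutConst n
  rw [Delta, dim_zeroSet]
  refine max_le (div_le_of_le_mul₀ (Finset.prod_nonneg fun _ _ => Nat.cast_nonneg _) ?_ ?_)
    (one_le_mul_of_one_le_of_one_le (one_le_pow₀ hB) (one_le_hilbertDegree W))
  · have := hilbertDegree_pos W
    positivity
  · calc (degree n (zeroSet P) : ℝ) ≤ bezoutConst n ^ n * hilbertDegree P := degree_zeroSet_le P
      _ ≤ bezoutConst n ^ n * (bezoutConst n ^ n *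
          (∏ j ∈ Finset.Icc (s + 1) (n - primeDim P), (partialDeg n (zeroSet P) j : ℝ)) *
          hilbertDegree W) := by
        gcongr
        exact hilbertDegree_le_prod_partialDeg hs hWP hdim
      _ = _ := by ring

lemma sub_le_dimAlong_of_lt_partialDegE {m : ℕ} (hs : s ≤ n - primeDim P)
    (hm : m < partialDegE n (zeroSet P) (s + 1)) :
    n - s ≤ dimAlong (lowDegreeSpan P m) P := by
  have hPn := primeDim_le P
  rcases hs.lt_or_eq with hs | rfl
  · rw [partialDegE_of_le (by rwa [dim_zeroSet]), Nat.cast_lt, ← not_le,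
      partialDeg_zeroSet_le_iff hs] at hm
    omega
  · have := primeDim_le_dimAlong (lowDegreeSpan_le P m) le_rfl
    omega

/-- For `δ_s ≤ m < δ_{s+1}` the polynomials of degree at most `m` in `P` cut out the same varieties
of dimension `n - s` containing the zero set of `P` as those of degree at most `δ_s`; the lower
bound on the Hilbert function of such a variety is inherited by `P`. -/
theorem Delta_mul_pow_le_hilbertFn {m : ℕ} (hs : s ≤ n - primeDim P)
    (hsm : partialDeg n (zeroSet P) s ≤ m) (hm : m < partialDegE n (zeroSet P) (s + 1)) :
    Delta n (zeroSet P) s * (m + 1) ^ (n - s) ≤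
      bezoutConst n ^ (2 * n + (n + 1) ^ 2) * hilbertFn P m := by
  have hB := one_le_bezoutConst n
  have hle := (partialDeg_zeroSet_le_iff hs).1 le_rfl
  have hge := sub_le_dimAlong_of_lt_partialDegE hs hm
  obtain ⟨Q, hQmin, hmQ, hQP, hQ⟩ := exists_mem_minimalPrimes_lowDegreeSpan hsm (hle.trans hge)
  replace hQ : primeDim Q = n - s :=
    hQ.trans (le_antisymm hle (hge.trans (dimAlong_anti (lowDegreeSpan_mono hsm))))
  have := hQmin.1.1
  calc Delta n (zeroSet P) s * (m + 1) ^ (n - s)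
      ≤ bezoutConst n ^ (2 * n) * hilbertDegree Q * (m + 1) ^ primeDim Q := by
        rw [hQ]
        gcongr
        exact Delta_zeroSet_le hs hQP hQ
    _ ≤ bezoutConst n ^ (2 * n) *
          (bezoutConst n ^ ((n + 1) * (n - primeDim Q + 1)) * hilbertFn Q m) := by
        rw [mul_assoc]
        exact mul_le_mul_of_nonneg_left (hilbertDegree_mul_pow_le hQmin hsm) (by positivity)
    _ ≤ bezoutConst n ^ (2 * n) * (bezoutConst n ^ ((n + 1) ^ 2) * hilbertFn P m) := by
        gcongr
        · rw [sq]
          gcongr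
          omega
        · exact hilbertFn_le_of_lowDegreeSpan_le hmQ
    _ = _ := by ring

end Delta

section Siegel

variable {n l s : ℕ}

/-- The constant in the parameter count of the Siegel lemma: the Hilbert function of the family and
that of the variety are bounded by their degrees up to the two factors of `siegelConst n`. -/
def siegelConst (n : ℕ) : ℝ := bezoutConst n ^ (2 * n + (n + 1) ^ 2) * sectionConst n

lemma siegelConst_pos (n : ℕ) : 0 < siegelConst n := by
  have h1 := bezoutConst_pos n
  have h2 := sectionConst_pos n
  unfold siegelConst
  positivity

lemma IsIrredVariety.exists_eq_zeroSet {V : Set (Fin n → ℂ)} (hV : IsIrredVariety n V) :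
    ∃ P : Ideal (MvPolynomial (Fin n) ℂ), P.IsPrime ∧ V = zeroSet P :=
  ⟨_, hV.isPrime_vanishingIdeal, hV.zeroSet_vanishingIdeal.symm⟩

lemma IsIrredVariety.dim_le {V : Set (Fin n → ℂ)} (hV : IsIrredVariety n V) : dim n V ≤ n := by
  obtain ⟨P, hP, rfl⟩ := hV.exists_eq_zeroSet
  exact (dim_zeroSet P).trans_le (primeDim_le P)

lemma hilbertFn_vanishingIdeal_le {V : Set (Fin n → ℂ)} (hV : IsIrredVariety n V) (m : ℕ) :
    (hilbertFn (vanishingIdeal n V) m : ℝ) ≤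
      sectionConst n * degree n V * (m + 1) ^ dim n V := by
  obtain ⟨P, hP, rfl⟩ := hV.exists_eq_zeroSet
  rw [vanishingIdeal_zeroSet, dim_zeroSet]
  refine (hilbertFn_le_hilbertDegree_mul_pow P m).trans ?_
  gcongr
  exact hilbertDegree_le_sectionConst_mul_degree P

theorem exists_forall_eval_eq_zero_notMem_vanishingIdeal {T : Finset (Set (Fin n → ℂ))}
    (hT : ∀ t ∈ T, IsIrredVariety n t ∧ dim n t = l) {V : Set (Fin n → ℂ)}
    (hV : IsIrredVariety n V) (hls : s + l ≤ n) (hs : s ≤ n - dim n V) {m : ℕ}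
    (hsm : partialDeg n V s ≤ m) (hm : m < partialDegE n V (s + 1))
    (hlt : siegelConst n * degFamilyIrred n T < Delta n V s * (m + 1) ^ (n - (s + l))) :
    ∃ f : MvPolynomial (Fin n) ℂ, f.totalDegree ≤ m ∧ (∀ t ∈ T, ∀ x ∈ t, eval x f = 0) ∧
      f ∉ vanishingIdeal n V := by
  have hB := pow_pos (bezoutConst_pos n) (2 * n + (n + 1) ^ 2)
  refine exists_mem_forall_notMem_of_sum_hilbertFn_lt (I := vanishingIdeal n) ?_
  rw [← Nat.cast_lt (α := ℝ), ← mul_lt_mul_iff_right₀ hB]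
  calc bezoutConst n ^ (2 * n + (n + 1) ^ 2) *
        ((∑ t ∈ T, hilbertFn (vanishingIdeal n t) m : ℕ) : ℝ)
      ≤ bezoutConst n ^ (2 * n + (n + 1) ^ 2) *
          ∑ t ∈ T, sectionConst n * degree n t * (m + 1) ^ l := by
        push_cast
        gcongr with t ht
        exact (hT t ht).2 ▸ hilbertFn_vanishingIdeal_le (hT t ht).1 m
    _ = siegelConst n * degFamilyIrred n T * (m + 1) ^ l := by
        rw [← Finset.sum_mul, ← Finset.mul_sum, siegelConst, degFamilyIrred, Nat.cast_sum]
        ring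
    _ < Delta n V s * (m + 1) ^ (n - (s + l)) * (m + 1) ^ l := by gcongr
    _ = Delta n V s * (m + 1) ^ (n - s) := by
        rw [mul_assoc, ← pow_add]
        congr 2
        omega
    _ ≤ bezoutConst n ^ (2 * n + (n + 1) ^ 2) * hilbertFn (vanishingIdeal n V) m := by
        obtain ⟨P, hP, rfl⟩ := hV.exists_eq_zeroSet
        rw [vanishingIdeal_zeroSet]
        exact Delta_mul_pow_le_hilbertFn (by rwa [← dim_zeroSet]) hsm hm

end Siegel

section Threshold

lemma rpow_inv_mul_le {c q : ℝ} (hc : 0 ≤ c) (hq : 0 ≤ q) {a : ℕ} (ha : a ≠ 0) :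
    (c * q) ^ (a⁻¹ : ℝ) ≤ (1 + c) * q ^ (a⁻¹ : ℝ) := by
  rw [Real.mul_rpow hc hq]
  gcongr
  calc c ^ (a⁻¹ : ℝ) ≤ (1 + c) ^ (a⁻¹ : ℝ) := by
        gcongr
        linarith
    _ ≤ 1 + c := Real.rpow_le_self_of_one_le (by linarith)
        (inv_le_one_of_one_le₀ (mod_cast Nat.one_le_iff_ne_zero.2 ha))

/-- The degree is chosen as the larger of `δ` and `⌊(κ q) ^ (1 / a)⌋`. -/
lemma exists_nat_mul_lt_pow {κ τ q : ℝ} {a δ : ℕ} {δ' : ℕ∞} (ha : a ≠ 0) (hκ : 0 < κ) (hτ : 0 < τ)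
    (hκτ : κ * τ < 1) (hlow : τ * δ ^ a ≤ q) (hδ : δ < δ')
    (hup : ∀ e : ℕ, δ' = e → q ≤ τ * e ^ a) :
    ∃ m : ℕ, δ ≤ m ∧ m < δ' ∧ κ * q < (m + 1) ^ a ∧
      m ≤ (1 + τ⁻¹ + κ) * q ^ (a⁻¹ : ℝ) := by
  have hq : 0 ≤ q := hlow.trans' (by positivity)
  set u := (κ * q) ^ (a⁻¹ : ℝ)
  have hu : 0 ≤ u := by positivity
  have hua : u ^ a = κ * q := Real.rpow_inv_natCast_pow (by positivity) ha
  refine ⟨max δ ⌊u⌋₊, le_max_left _ _, ?_, ?_, ?_⟩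
  · cases δ' with
    | top => exact ENat.natCast_lt_top _
    | coe e =>
      have he : (0 : ℝ) < e := mod_cast (Nat.zero_le δ).trans_lt (Nat.cast_lt.1 hδ)
      rw [Nat.cast_lt] at hδ ⊢
      refine max_lt hδ ((Nat.floor_lt hu).2 (lt_of_pow_lt_pow_left₀ a he.le ?_))
      calc u ^ a ≤ κ * (τ * e ^ a) := by
            rw [hua]
            gcongr
            exact hup e rfl
        _ < e ^ a := by
            rw [← mul_assoc]
            exact mul_lt_of_lt_one_left (by positivity) hκτ
  · rw [← hua]
    refine pow_lt_pow_left₀ ((Nat.lt_floor_add_one u).trans_le ?_) hu ha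
    gcongr
    exact le_max_right _ _
  · have hδq : (δ : ℝ) ≤ (τ⁻¹ * q) ^ (a⁻¹ : ℝ) := by
      refine le_of_pow_le_pow_left₀ ha (by positivity) ?_
      rw [Real.rpow_inv_natCast_pow (by positivity) ha]
      exact (le_inv_mul_iff₀ hτ).2 hlow
    have hτ' := inv_pos.2 hτ
    rw [Nat.cast_max]
    refine max_le ((hδq.trans (rpow_inv_mul_le hτ'.le hq ha)).trans ?_)
      (((Nat.floor_le hu).trans (rpow_inv_mul_le hκ.le hq ha)).trans ?_) <;>
    exact mul_le_mul_of_nonneg_right (by linarith) (by positivity)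

end Threshold

section RlSet

variable {n l s : ℕ} {τ N : ℝ} {V : Set (Fin n → ℂ)}

lemma le_div_Delta_of_mem_RlSet (h : N ∈ RlSet n τ l V s) :
    τ * partialDeg n V s ^ (n - (s + l)) ≤ N / Delta n V s := by
  rw [le_div_iff₀ (Delta_pos V s)]
  unfold RlSet at h
  split_ifs at h
  exacts [h, h.1]

lemma div_Delta_le_of_mem_RlSet (h : N ∈ RlSet n τ l V s) {e : ℕ}
    (he : partialDegE n V (s + 1) = e) :
    N / Delta n V s ≤ τ * e ^ (n - (s + l)) := by
  have hs := le_of_partialDegE_ne_top (he ▸ ENat.natCast_ne_top e)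
  rw [partialDegE_of_le hs, Nat.cast_inj] at he
  rw [RlSet, if_neg (by omega)] at h
  rw [div_le_iff₀ (Delta_pos V s), ← he]
  exact h.2

end RlSet

theorem statement14_general (n : ℕ) :
    ∃ τ0 : ℝ, 0 < τ0 ∧
      ∀ τ : ℝ, 0 < τ → τ ≤ τ0 →
        ∃ C : ℝ, 0 < C ∧
          ∀ (l : ℕ) (T : Finset (Set (Fin n → ℂ))),
            (∀ t ∈ T, IsIrredVariety n t ∧ dim n t = l) →
            ∀ V : Set (Fin n → ℂ), IsIrredVariety n V → l < dim n V →
              ∀ s : ℕ, partialDegE n V s < partialDegE n V (s + 1) →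
                (degFamilyIrred n T : ℝ) ∈ RlSet n τ l V s →
                ∃ P : MvPolynomial (Fin n) ℂ,
                  (P.totalDegree : ℝ) ≤
                    C * ((degFamilyIrred n T : ℝ) / Delta n V s) ^
                      ((1 : ℝ) / ((n : ℝ) - ((s : ℝ) + (l : ℝ)))) ∧
                  (∀ t ∈ T, ∀ x ∈ t, eval x P = 0) ∧ P ∉ vanishingIdeal n V := by
  have hκ := siegelConst_pos n
  refine ⟨(2 * siegelConst n)⁻¹, by positivity, fun τ hτ hτ0 =>
    ⟨1 + τ⁻¹ + siegelConst n, by positivity, fun l T hT V hV hl s hlt hN => ?_⟩⟩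
  have hs := le_of_partialDegE_ne_top hlt.ne_top
  have hκτ : siegelConst n * τ < 1 := by
    rw [← one_div, le_div_iff₀ (by positivity)] at hτ0
    linarith
  have hdim := hV.dim_le
  have hls : s + l < n := by omega
  obtain ⟨m, hsm, hm, hsiegel, hle⟩ := exists_nat_mul_lt_pow (Nat.sub_ne_zero_of_lt hls) hκ hτ hκτ
    (le_div_Delta_of_mem_RlSet hN) (partialDegE_of_le hs ▸ hlt)
    fun e => div_Delta_le_of_mem_RlSet hN
  rw [← mul_div_assoc, div_lt_iff₀' (Delta_pos V s)] at hsiegel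
  obtain ⟨f, hfm, hfT, hfV⟩ :=
    exists_forall_eval_eq_zero_notMem_vanishingIdeal hT hV hls.le hs hsm hm hsiegel
  refine ⟨f, (Nat.cast_le.2 hfm).trans (hle.trans_eq ?_), hfT, hfV⟩
  rw [one_div, Nat.cast_sub hls.le, Nat.cast_add]

/-- Theorem 4.6 of the paper, generalised Siegel lemma: given a finite set
`T` of `l`-dimensional irreducible varieties with `deg T ∈ ℛ^l_{s,τ_l}(V)` for an admissible
`s`, there is a polynomial of controlled degree vanishing on every member of `T` but not
identically on `V`. -/
theorem statement14 (n l d : ℕ) (hl : l < d) (hd : d ≤ n) :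
    ∃ τ0 : ℝ, 0 < τ0 ∧
      ∀ τl : ℝ, 0 < τl → τl ≤ τ0 →
        ∃ C : ℝ, 0 < C ∧
          ∀ T : Finset (Set (Fin n → ℂ)),
            (∀ t ∈ T, IsIrredVariety n t ∧ dim n t = l) →
            ∀ V : Set (Fin n → ℂ), IsIrredVariety n V → dim n V = d →
              ∀ s : ℕ, s ≤ n - d → Admissible n V s →
                (degFamilyIrred n T : ℝ) ∈ RlSet n τl l V s →
                ∃ P : MvPolynomial (Fin n) ℂ,
                  (P.totalDegree : ℝ) ≤
                    C * ((degFamilyIrred n T : ℝ) / Delta n V s) ^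
                      ((1 : ℝ) / ((n : ℝ) - ((s : ℝ) + (l : ℝ)))) ∧
                  (∀ t ∈ T, ∀ x ∈ t, eval x P = 0) ∧ P ∉ vanishingIdeal n V := by
  obtain ⟨τ0, hτ0, h⟩ := statement14_general n
  refine ⟨τ0, hτ0, fun τ hτ hle => ?_⟩
  obtain ⟨C, hC, hCT⟩ := h τ hτ hle
  exact ⟨C, hC, fun T hT V hV hdim s _ hadm =>
    hCT l T hT V hV (hdim ▸ hl) s hadm.partialDegE_lt⟩

end Paper
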